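/- arXiv:1311.3190 — 2 statements merged into one kernel-verified Lean document; each statement's English description precedes it below -/
import Mathlib

section
/- Under the null hypothesis, let i_* = argmin_{1 ≤ i ≤ n} p_{(i)} be the index at which the one-sided statistic M_n^+ attains its minimum. Then P( log n ≤ i_* ≤ n - log n ) → 1 as n → ∞; the analogous claim holds for the index minimizing 1 - p_{(i)} (the M_n^- statistic) and for the index at which M_n is attained. -/
open MeasureTheory Filter Set

noncomputable section

/-- Density of the Beta(a,b) distribution on [0,1]. -/
def betaPDF (a b x : ℝ) : ℝ :=
  x ^ (a - 1) * (1 - x) ^ (b - 1) / (Real.Gamma a * Real.Gamma b / Real.Gamma (a + b))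

/-- Regularized incomplete beta function `I_x(a,b) = P(Beta(a,b) < x)`. -/
def regIncBeta (a b x : ℝ) : ℝ := ∫ t in Set.Ioc (0:ℝ) x, betaPDF a b t

/-- The `i`-th order statistic (0-based) of the sample `u`. -/
def orderStat {n : ℕ} (u : Fin n → ℝ) (i : Fin n) : ℝ := u (Tuple.sort u i)

/-- `p_{(i)} = P(Beta(i, n-i+1) < u_{(i)})` (with 1-based index `i = (i : Fin n) + 1`). -/
def pOrd {n : ℕ} (u : Fin n → ℝ) (i : Fin n) : ℝ :=
  regIncBeta ((i : ℕ) + 1 : ℝ) ((n : ℝ) - (i : ℕ)) (orderStat u i)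

/-- One-sided exact Berk-Jones statistic `M_n^+`. -/
def MnPlus {n : ℕ} (u : Fin n → ℝ) : ℝ := ⨅ i, pOrd u i

/-- One-sided exact Berk-Jones statistic `M_n^-`. -/
def MnMinus {n : ℕ} (u : Fin n → ℝ) : ℝ := ⨅ i, (1 - pOrd u i)

/-- Two-sided exact Berk-Jones statistic `M_n`. -/
def Mn {n : ℕ} (u : Fin n → ℝ) : ℝ := min (MnPlus u) (MnMinus u)

/-- Joint law of `n` i.i.d. `U[0,1]` random variables (the null hypothesis). -/
def nullMeasure (n : ℕ) : Measure (Fin n → ℝ) :=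
  Measure.pi fun _ => MeasureTheory.volume.restrict (Set.Icc (0:ℝ) 1)

end

/-!
For `u` in the cube, `p_{(i)} ≤ P(Bin(n, x) ≥ i)` holds exactly when at least `i` of the points lie
in `[0, x]`; this event has probability `e` when `x` is the quantile with `P(Bin(n, x) ≥ i) = e`.

Fix `e` slightly larger than `1 / log n`, say `e = q² / log n` with `q ≈ log log n`.

*The minimum is at most `e`.* Take the events `p_{(i)} ≤ e` at about `log n / log log n` indices
`i = B, B², B³, …` for `B` a power of `log n`. The counts of points in `[0, s]` and `[0, t]` have
maximal correlation at most `√(s / t)`, so these events are nearly uncorrelated, and by Chebyshev's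
inequality one of them occurs with high probability.

*No index near the ends achieves `e`.* The first `q¹⁰` indices contribute at most `q¹⁰ e` by the
union bound. After that, consecutive quantiles are so close that a block of `q³` indices contributes
only a constant multiple of `e`, and `log n / q³` blocks cover all the indices up to `log n`.

The map `u ↦ 1 - u` preserves the law of the sample and exchanges `p_{(i)}` with
`1 - p_{(n + 1 - i)}`, which transfers everything to `M_n^-` and to `M_n`.
-/

noncomputable section

namespace BerkJones

section BinomialTail

open Polynomial

variable {n j k : ℕ} {x : ℝ}

lemma eval_bernsteinPolynomial (n k : ℕ) (x : ℝ) :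
    (bernsteinPolynomial ℝ n k).eval x = n.choose k * x ^ k * (1 - x) ^ (n - k) := by
  simp [bernsteinPolynomial]

lemma eval_bernsteinPolynomial_nonneg (hx : x ∈ Icc (0 : ℝ) 1) (n k : ℕ) :
    0 ≤ (bernsteinPolynomial ℝ n k).eval x := by
  have := sub_nonneg.2 hx.2
  have := hx.1
  rw [eval_bernsteinPolynomial]
  positivity

lemma eval_bernsteinPolynomial_pos (hx : x ∈ Ioo (0 : ℝ) 1) (hk : k ≤ n) :
    0 < (bernsteinPolynomial ℝ n k).eval x := by
  have := sub_pos.2 hx.2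
  have := hx.1
  have := Nat.choose_pos hk
  rw [eval_bernsteinPolynomial]
  positivity

lemma eval_bernsteinPolynomial_one_sub (hk : k ≤ n) (x : ℝ) :
    (bernsteinPolynomial ℝ n k).eval (1 - x) = (bernsteinPolynomial ℝ n (n - k)).eval x := by
  rw [bernsteinPolynomial.flip' ℝ n k hk]
  simp

lemma sum_eval_bernsteinPolynomial (n : ℕ) (x : ℝ) :
    ∑ k ∈ Finset.range (n + 1), (bernsteinPolynomial ℝ n k).eval x = 1 := by
  rw [← eval_finsetSum, bernsteinPolynomial.sum, eval_one]

lemma sum_eval_bernsteinPolynomial_mul_pow (n : ℕ) (x y : ℝ) :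
    ∑ k ∈ Finset.range (n + 1), (bernsteinPolynomial ℝ n k).eval x * y ^ k
      = (1 - x + x * y) ^ n := by
  rw [add_comm (1 - x), add_pow]
  refine Finset.sum_congr rfl fun k _ => ?_
  rw [eval_bernsteinPolynomial]
  ring

lemma sum_eval_bernsteinPolynomial_mul_cast (n : ℕ) (x : ℝ) :
    ∑ k ∈ Finset.range (n + 1), (bernsteinPolynomial ℝ n k).eval x * k = n * x := by
  simpa [eval_finsetSum, mul_comm] using congrArg (eval x) (bernsteinPolynomial.sum_smul ℝ n)

/-- The tail probability `P(Bin(n, x) ≥ j)`, as a function of the success probability `x`. -/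
def binomialTail (n j : ℕ) (x : ℝ) : ℝ :=
  ∑ k ∈ Finset.Ico j (n + 1), (bernsteinPolynomial ℝ n k).eval x

lemma binomialTail_zero_left (n : ℕ) (x : ℝ) : binomialTail n 0 x = 1 := by
  rw [binomialTail, Nat.Ico_zero_eq_range, sum_eval_bernsteinPolynomial]

lemma sum_Ico_add_binomialTail {i : ℕ} (hij : i ≤ j) (hj : j ≤ n + 1) (x : ℝ) :
    ∑ k ∈ Finset.Ico i j, (bernsteinPolynomial ℝ n k).eval x + binomialTail n j x
      = binomialTail n i x :=
  Finset.sum_Ico_consecutive _ hij hj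

lemma binomialTail_antitone (hx : x ∈ Icc (0 : ℝ) 1) (n : ℕ) :
    Antitone fun j => binomialTail n j x := fun _ _ h =>
  Finset.sum_le_sum_of_subset_of_nonneg (Finset.Ico_subset_Ico_left h) fun k _ _ =>
    eval_bernsteinPolynomial_nonneg hx n k

lemma binomialTail_one_sub (hj : j ≤ n) (x : ℝ) :
    binomialTail n (j + 1) (1 - x) = 1 - binomialTail n (n - j) x := by
  have hsum := sum_Ico_add_binomialTail (n := n) (n - j).zero_le (by omega) x
  rw [binomialTail_zero_left] at hsum
  have hflip : binomialTail n (j + 1) (1 - x)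
      = ∑ k ∈ Finset.Ico (j + 1) (n + 1), (bernsteinPolynomial ℝ n (n - k)).eval x :=
    Finset.sum_congr rfl fun k hk =>
      eval_bernsteinPolynomial_one_sub (Nat.lt_succ_iff.1 (Finset.mem_Ico.1 hk).2) x
  rw [hflip, Finset.sum_Ico_reflect (fun k => (bernsteinPolynomial ℝ n k).eval x) _ le_rfl,
    Nat.sub_self, Nat.add_sub_add_right]
  linarith

lemma binomialTail_apply_zero (hj : 1 ≤ j) : binomialTail n j 0 = 0 :=
  Finset.sum_eq_zero fun k hk => by
    have := (Finset.mem_Ico.1 hk).1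
    rw [bernsteinPolynomial.eval_at_0, if_neg (by omega)]

lemma binomialTail_apply_one (hj : j ≤ n) : binomialTail n j 1 = 1 := by
  simp [binomialTail, bernsteinPolynomial.eval_at_1, hj]

lemma hasDerivAt_binomialTail (n j : ℕ) (x : ℝ) :
    HasDerivAt (binomialTail (n + 1) (j + 1))
      ((n + 1) * (bernsteinPolynomial ℝ n j).eval x) x := by
  have hsum : ∑ k ∈ Finset.Ico j (n + 1),
      (derivative (bernsteinPolynomial ℝ (n + 1) (k + 1))).eval x
        = (n + 1) * (bernsteinPolynomial ℝ n j).eval x := by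
    rcases le_or_gt (n + 1) j with hj | hj
    · rw [Finset.Ico_eq_empty_of_le hj, bernsteinPolynomial.eq_zero_of_lt ℝ hj]
      simp
    · simp only [bernsteinPolynomial.derivative_succ, eval_mul, eval_sub, eval_natCast,
        Nat.add_sub_cancel, ← Finset.mul_sum]
      rw [← neg_inj, ← mul_neg, ← Finset.sum_neg_distrib]
      simp only [neg_sub]
      rw [Finset.sum_Ico_sub (fun k => (bernsteinPolynomial ℝ n k).eval x) hj.le,
        bernsteinPolynomial.eq_zero_of_lt ℝ n.lt_succ_self]
      simp
  have hshift : binomialTail (n + 1) (j + 1)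
      = fun y => ∑ k ∈ Finset.Ico j (n + 1), (bernsteinPolynomial ℝ (n + 1) (k + 1)).eval y := by
    funext y
    exact (Finset.sum_Ico_add' (fun k => (bernsteinPolynomial ℝ (n + 1) k).eval y) j (n + 1) 1).symm
  rw [← hsum, hshift]
  exact HasDerivAt.fun_sum fun k _ => (bernsteinPolynomial ℝ (n + 1) (k + 1)).hasDerivAt x

lemma continuous_binomialTail (n j : ℕ) : Continuous (binomialTail n j) :=
  continuous_finsetSum _ fun k _ => (bernsteinPolynomial ℝ n k).continuous

lemma binomialTail_strictMonoOn (hj : 1 ≤ j) (hjn : j ≤ n) :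
    StrictMonoOn (binomialTail n j) (Icc 0 1) := by
  obtain ⟨j, rfl⟩ := Nat.exists_eq_add_of_le' hj
  obtain ⟨n, rfl⟩ := Nat.exists_eq_add_of_le' (hj.trans hjn)
  refine strictMonoOn_of_deriv_pos (convex_Icc 0 1) (continuous_binomialTail _ _).continuousOn ?_
  rw [interior_Icc]
  intro x hx
  rw [(hasDerivAt_binomialTail n j x).deriv]
  have := eval_bernsteinPolynomial_pos hx (Nat.le_of_succ_le_succ hjn)
  positivity

lemma exists_binomialTail_eq (hj : 1 ≤ j) (hjn : j ≤ n) {e : ℝ} (he : e ∈ Icc (0 : ℝ) 1) :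
    ∃ x ∈ Icc (0 : ℝ) 1, binomialTail n j x = e := by
  have := intermediate_value_Icc zero_le_one (continuous_binomialTail n j).continuousOn
  rw [binomialTail_apply_zero hj, binomialTail_apply_one hjn] at this
  exact this he

lemma binomialTail_nonneg (hx : x ∈ Icc (0 : ℝ) 1) (n j : ℕ) : 0 ≤ binomialTail n j x :=
  Finset.sum_nonneg fun k _ => eval_bernsteinPolynomial_nonneg hx n k

lemma binomialTail_mul_le_sum (hx : x ∈ Icc (0 : ℝ) 1) {f : ℕ → ℝ} (hf : Monotone f)
    (hf0 : ∀ k, 0 ≤ f k) (n j : ℕ) :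
    binomialTail n j x * f j
      ≤ ∑ k ∈ Finset.range (n + 1), (bernsteinPolynomial ℝ n k).eval x * f k := by
  have hpos := eval_bernsteinPolynomial_nonneg hx n
  calc binomialTail n j x * f j
      = ∑ k ∈ Finset.Ico j (n + 1), (bernsteinPolynomial ℝ n k).eval x * f j := Finset.sum_mul ..
    _ ≤ ∑ k ∈ Finset.Ico j (n + 1), (bernsteinPolynomial ℝ n k).eval x * f k :=
        Finset.sum_le_sum fun k hk =>
          mul_le_mul_of_nonneg_left (hf (Finset.mem_Ico.1 hk).1) (hpos k)
    _ ≤ _ := by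
        rw [Finset.range_eq_Ico]
        exact Finset.sum_le_sum_of_subset_of_nonneg (Finset.Ico_subset_Ico_left j.zero_le)
          fun k _ _ => mul_nonneg (hpos k) (hf0 k)

lemma binomialTail_mul_le_mean (hx : x ∈ Icc (0 : ℝ) 1) (n j : ℕ) :
    binomialTail n j x * j ≤ n * x :=
  (binomialTail_mul_le_sum hx Nat.mono_cast (fun k => k.cast_nonneg) n j).trans_eq
    (sum_eval_bernsteinPolynomial_mul_cast n x)

lemma binomialTail_mul_pow_le (hx : x ∈ Icc (0 : ℝ) 1) {y : ℝ} (hy : 1 ≤ y) (n j : ℕ) :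
    binomialTail n j x * y ^ j ≤ (1 - x + x * y) ^ n :=
  (binomialTail_mul_le_sum hx (fun _ _ h => pow_le_pow_right₀ hy h)
    (fun k => by positivity) n j).trans_eq (sum_eval_bernsteinPolynomial_mul_pow n x y)

end BinomialTail

section Chernoff

variable {n j m : ℕ} {x h : ℝ}

lemma mul_one_sub_le_of_exp_lt_binomialTail (hx : x ∈ Icc (0 : ℝ) 1) (h0 : 0 ≤ h) (h1 : h ≤ 1)
    (hT : Real.exp (-(j * h ^ 3)) < binomialTail n j x) : j * (1 - h) ≤ n * x := by
  by_contra! hlt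
  have hexp : Real.exp h - 1 ≤ h + h ^ 2 := by
    have := (abs_le.1 (Real.abs_exp_sub_one_sub_id_le (abs_le.2 ⟨by linarith, h1⟩))).2
    linarith
  have hbase : 1 - x + x * Real.exp h ≤ Real.exp (x * (h + h ^ 2)) := by
    have := Real.add_one_le_exp (x * (h + h ^ 2))
    nlinarith [mul_le_mul_of_nonneg_left hexp hx.1]
  have hbase0 : 0 ≤ 1 - x + x * Real.exp h :=
    add_nonneg (sub_nonneg.2 hx.2) (mul_nonneg hx.1 (Real.exp_pos h).le)
  have hmul : binomialTail n j x * Real.exp (j * h) ≤ Real.exp (-(j * h ^ 3)) * Real.exp (j * h) :=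
    calc binomialTail n j x * Real.exp (j * h) ≤ (1 - x + x * Real.exp h) ^ n := by
          rw [Real.exp_nat_mul]
          exact binomialTail_mul_pow_le hx (Real.one_le_exp h0) n j
      _ ≤ Real.exp (x * (h + h ^ 2)) ^ n := pow_le_pow_left₀ hbase0 hbase n
      _ = Real.exp (n * x * (h + h ^ 2)) := by rw [← Real.exp_nat_mul, mul_assoc]
      _ ≤ Real.exp (j * (1 - h) * (h + h ^ 2)) := by gcongr
      _ = Real.exp (-(j * h ^ 3)) * Real.exp (j * h) := by
          rw [← Real.exp_add]
          ring_nf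
  exact hT.not_ge (le_of_mul_le_mul_right hmul (Real.exp_pos _))

lemma binomialTail_le_pow_mul_exp (hx : x ∈ Icc (0 : ℝ) 1) (h0 : 0 ≤ h) (hn : j + m = n) :
    binomialTail n j x ≤ (1 + h) ^ m * Real.exp (-(n * (1 - x) * (h / (1 + h)))) := by
  have hpos : 0 < 1 + h := by linarith
  have hbase : 1 - x + x * (1 + h) ≤ (1 + h) * Real.exp (-((1 - x) * (h / (1 + h)))) :=
    calc 1 - x + x * (1 + h) = (1 + h) * (-((1 - x) * (h / (1 + h))) + 1) := by
          field_simp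
          ring
      _ ≤ _ := mul_le_mul_of_nonneg_left (Real.add_one_le_exp _) hpos.le
  have hbase0 : 0 ≤ 1 - x + x * (1 + h) := by
    nlinarith [mul_nonneg hx.1 h0]
  refine le_of_mul_le_mul_right ?_ (pow_pos hpos j)
  calc binomialTail n j x * (1 + h) ^ j ≤ (1 - x + x * (1 + h)) ^ n :=
        binomialTail_mul_pow_le hx (by linarith) n j
    _ ≤ ((1 + h) * Real.exp (-((1 - x) * (h / (1 + h))))) ^ n := pow_le_pow_left₀ hbase0 hbase n
    _ = (1 + h) ^ (j + m) * Real.exp (n * -((1 - x) * (h / (1 + h)))) := by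
        rw [mul_pow, ← Real.exp_nat_mul, hn]
    _ = _ := by
        rw [pow_add, mul_neg, ← mul_assoc (n : ℝ)]
        ring

lemma one_add_le_exp_sub_cube (h0 : 0 ≤ h) (h1 : h ≤ 1 / 4) : 1 + h ≤ Real.exp (h - h ^ 3) := by
  have hsq : h ^ 2 ≤ 1 / 16 := by nlinarith
  have hmain : h ^ 3 ≤ (h - h ^ 3) ^ 2 / 2 := by
    have hfac : 2 * h ≤ (1 - h ^ 2) ^ 2 := by nlinarith
    nlinarith [mul_le_mul_of_nonneg_left hfac (sq_nonneg h)]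
  have := Real.quadratic_le_exp_of_nonneg (x := h - h ^ 3) (by nlinarith)
  linarith

lemma mul_one_sub_le_of_exp_lt_binomialTail_right (hx : x ∈ Icc (0 : ℝ) 1) (h0 : 0 ≤ h)
    (h1 : h ≤ 1 / 4) (hn : j + m = n) (hT : Real.exp (-(m * h ^ 3)) < binomialTail n j x) :
    n * (1 - x) ≤ m * (1 + h) := by
  by_contra! hlt
  have : 0 < 1 + h := by linarith
  refine hT.not_ge ?_
  calc binomialTail n j x ≤ (1 + h) ^ m * Real.exp (-(n * (1 - x) * (h / (1 + h)))) :=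
        binomialTail_le_pow_mul_exp hx h0 hn
    _ ≤ Real.exp (h - h ^ 3) ^ m * Real.exp (-(m * (1 + h) * (h / (1 + h)))) := by
        gcongr
        exact one_add_le_exp_sub_cube h0 h1
    _ = Real.exp (-(m * h ^ 3)) := by
        rw [← Real.exp_nat_mul, ← Real.exp_add]
        congr 1
        field_simp
        ring

lemma binomialTail_le_half (hx : x ∈ Icc (0 : ℝ) 1) (hn : j + m = n)
    (hm : 4 * (m + 1) < n * (1 - x)) : binomialTail n j x ≤ 1 / 2 := by
  have hexp : 2 * 2 ≤ Real.exp 2 := by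
    have hsq : Real.exp 2 = Real.exp 1 * Real.exp 1 := by
      rw [← Real.exp_add]
      norm_num
    have := Real.add_one_le_exp 1
    nlinarith
  calc binomialTail n j x ≤ (1 + 1) ^ m * Real.exp (-(n * (1 - x) * (1 / (1 + 1)))) :=
        binomialTail_le_pow_mul_exp hx zero_le_one hn
    _ ≤ 2 ^ m * Real.exp (-((m + 1 : ℕ) * 2)) := by
        norm_num
        linarith
    _ = 2 ^ m / Real.exp 2 ^ (m + 1) := by rw [Real.exp_neg, Real.exp_nat_mul, div_eq_mul_inv]
    _ ≤ 2 ^ m / (2 * 2) ^ (m + 1) := by gcongr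
    _ = 1 / (2 ^ (m + 2)) := by
        rw [mul_pow, pow_succ, pow_add]
        field_simp
    _ ≤ 1 / 2 := by
        gcongr
        exact le_self_pow₀ one_le_two (by omega)

end Chernoff

section Growth

open Polynomial

variable {n a b k m : ℕ} {x c : ℝ}

lemma eval_bernsteinPolynomial_succ (hk : k < n) (x : ℝ) :
    (bernsteinPolynomial ℝ n (k + 1)).eval x * ((k + 1) * (1 - x))
      = (bernsteinPolynomial ℝ n k).eval x * ((n - k) * x) := by
  obtain ⟨l, rfl⟩ := Nat.exists_eq_add_of_lt hk
  have hchoose : ((k + l + 1).choose (k + 1) * (k + 1) : ℝ) = (k + l + 1).choose k * (l + 1) := by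
    have := Nat.choose_succ_right_eq (k + l + 1) k
    rw [show k + l + 1 - k = l + 1 by omega] at this
    exact_mod_cast this
  rw [eval_bernsteinPolynomial, eval_bernsteinPolynomial, show k + l + 1 - k = l + 1 by omega,
    show k + l + 1 - (k + 1) = l by omega]
  push_cast
  linear_combination x ^ (k + 1) * (1 - x) ^ (l + 1) * hchoose

lemma sum_Ico_le_pow_mul_sum_Ico {f : ℕ → ℝ} (hc : 0 ≤ c)
    (hf : ∀ k ∈ Finset.Ico a (a + 2 * b), f k ≤ c * f (k + 1)) :
    ∑ k ∈ Finset.Ico a (a + b), f k ≤ c ^ b * ∑ k ∈ Finset.Ico (a + b) (a + b + b), f k := by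
  have hiter : ∀ k ∈ Finset.Ico a (a + b), ∀ i ≤ b, f k ≤ c ^ i * f (k + i) := by
    intro k hk i
    rw [Finset.mem_Ico] at hk
    induction i with
    | zero => simp
    | succ i ih =>
      intro hi
      calc f k ≤ c ^ i * f (k + i) := ih (by omega)
        _ ≤ c ^ i * (c * f (k + i + 1)) := by
            gcongr
            exact hf _ (Finset.mem_Ico.2 (by omega))
        _ = c ^ (i + 1) * f (k + (i + 1)) := by rw [pow_succ, mul_assoc, add_assoc]
  rw [← Finset.sum_Ico_add', Finset.mul_sum]
  exact Finset.sum_le_sum fun k hk => hiter k hk b le_rfl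

lemma binomialTail_le_one_add_pow_mul (hx0 : 0 < x) (hx1 : x ≤ 1) (hc : 0 ≤ c)
    (hab : a + 2 * b ≤ n) (h : (a + 2 * b) * (1 - x) ≤ c * ((n - (a + 2 * b)) * x)) :
    binomialTail n a x ≤ (1 + c ^ b) * binomialTail n (a + b) x := by
  have hx : x ∈ Icc (0 : ℝ) 1 := ⟨hx0.le, hx1⟩
  have hpos := eval_bernsteinPolynomial_nonneg hx n
  have hstep : ∀ k ∈ Finset.Ico a (a + 2 * b),
      (bernsteinPolynomial ℝ n k).eval x ≤ c * (bernsteinPolynomial ℝ n (k + 1)).eval x := by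
    intro k hk
    rw [Finset.mem_Ico] at hk
    have hk' : (k + 1 : ℝ) ≤ a + 2 * b := by exact_mod_cast hk.2
    have hab' : (a + 2 * b : ℝ) ≤ n := by exact_mod_cast hab
    have hodds : (k + 1) * (1 - x) ≤ c * ((n - k) * x) :=
      calc (k + 1) * (1 - x) ≤ (a + 2 * b) * (1 - x) := by
            gcongr
        _ ≤ c * ((n - (a + 2 * b)) * x) := h
        _ ≤ c * ((n - k) * x) := by
            gcongr
            linarith
    have hden : 0 < (n - k) * x := mul_pos (by linarith) hx0
    refine le_of_mul_le_mul_right ?_ hden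
    rw [← eval_bernsteinPolynomial_succ (by omega) x]
    linarith [mul_le_mul_of_nonneg_left hodds (hpos (k + 1))]
  rw [← sum_Ico_add_binomialTail (Nat.le_add_right a b) (by omega) x,
    ← sum_Ico_add_binomialTail (Nat.le_add_right (a + b) b) (by omega) x]
  have hhead := sum_Ico_le_pow_mul_sum_Ico hc hstep
  have hrest : 0 ≤ c ^ b * binomialTail n (a + b + b) x :=
    mul_nonneg (pow_nonneg hc b) (binomialTail_nonneg hx n _)
  linarith

lemma one_add_four_div_pow_le (b : ℕ) : (1 + 4 * (b : ℝ)⁻¹) ^ b ≤ Real.exp 4 := by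
  rcases b.eq_zero_or_pos with rfl | hb
  · simp
  · calc (1 + 4 * (b : ℝ)⁻¹) ^ b ≤ Real.exp (4 * (b : ℝ)⁻¹) ^ b := by
          gcongr
          linarith [Real.add_one_le_exp (4 * (b : ℝ)⁻¹)]
      _ = Real.exp 4 := by
          rw [← Real.exp_nat_mul]
          field_simp

lemma binomialTail_le_one_add_exp_mul (hx0 : 0 < x) (hx1 : x ≤ 1) (hab : a + 2 * b ≤ n)
    (h : (a + 2 * b) * (1 - x) ≤ (1 + 4 * (b : ℝ)⁻¹) * ((n - (a + 2 * b)) * x)) :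
    binomialTail n a x ≤ (1 + Real.exp 4) * binomialTail n (a + b) x := by
  refine (binomialTail_le_one_add_pow_mul hx0 hx1 (by positivity) hab h).trans ?_
  gcongr
  · exact binomialTail_nonneg ⟨hx0.le, hx1⟩ n _
  · exact one_add_four_div_pow_le b

lemma one_add_le_mul_one_sub_sq {h : ℝ} (h0 : 0 ≤ h) (h1 : h ≤ 1 / 8) :
    1 + h ≤ (1 + 4 * h) * (1 - h) ^ 2 := by
  nlinarith [mul_nonneg h0 (sq_nonneg h)]

lemma binomialTail_le_of_block_left (hx : x ∈ Icc (0 : ℝ) 1) (hb : 8 ≤ b) (hba : b ^ 2 ≤ a)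
    (hn : b * (a + 2 * b) ≤ n)
    (hT : Real.exp (-(a / b ^ 3)) < binomialTail n (a + b) x) :
    binomialTail n a x ≤ (1 + Real.exp 4) * binomialTail n (a + b) x := by
  have hb' : (8 : ℝ) ≤ b := by exact_mod_cast hb
  have hba' : (b : ℝ) ^ 2 ≤ a := by exact_mod_cast hba
  have hn' : b * (a + 2 * b) ≤ (n : ℝ) := by exact_mod_cast hn
  set h : ℝ := (b : ℝ)⁻¹ with hh
  have hbh : b * h = 1 := mul_inv_cancel₀ (by positivity)
  have h0 : 0 < h := by positivity
  have h1 : h ≤ 1 / 8 := by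
    rw [hh, one_div]
    gcongr
  have hmean : (a + b) * (1 - h) ≤ n * x := by
    have hle : Real.exp (-((a + b : ℕ) * h ^ 3)) ≤ Real.exp (-(a / b ^ 3)) := by
      rw [Real.exp_le_exp, neg_le_neg_iff, hh, inv_pow, div_eq_mul_inv]
      gcongr
      exact Nat.le_add_right a b
    exact_mod_cast
      mul_one_sub_le_of_exp_lt_binomialTail hx h0.le (by linarith) (hle.trans_lt hT)
  have hx0 : 0 < x := by
    have : 0 < (a + b) * (1 - h) := mul_pos (by positivity) (by linarith)
    exact pos_of_mul_pos_right (this.trans_le hmean) n.cast_nonneg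
  have hwidth : (a + 2 * b : ℝ) ≤ (a + b) * (1 + h) := by nlinarith
  have hrest : n * (1 - h) ≤ n - (a + 2 * b : ℝ) := by
    have := mul_le_mul_of_nonneg_right hn' h0.le
    nlinarith
  have hodds : (a + 2 * b) * (1 - x) ≤ (1 + 4 * h) * ((n - (a + 2 * b)) * x) :=
    calc (a + 2 * b) * (1 - x) ≤ (a + 2 * b) * 1 := by
          gcongr
          linarith
      _ ≤ (a + b) * (1 + h) := by linarith
      _ ≤ (a + b) * ((1 + 4 * h) * (1 - h) ^ 2) := by
          gcongr
          exact one_add_le_mul_one_sub_sq h0.le h1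
      _ = (1 + 4 * h) * ((a + b) * (1 - h) * (1 - h)) := by ring
      _ ≤ (1 + 4 * h) * (n * x * (1 - h)) := by
          have : 0 ≤ 1 - h := by linarith
          gcongr
      _ = (1 + 4 * h) * (n * (1 - h) * x) := by ring
      _ ≤ (1 + 4 * h) * ((n - (a + 2 * b)) * x) := by gcongr
  have hab : a + 2 * b ≤ n := (Nat.le_mul_of_pos_left _ (by omega)).trans hn
  exact binomialTail_le_one_add_exp_mul hx0 hx.2 hab hodds

lemma binomialTail_le_of_block_right (hx : x ∈ Icc (0 : ℝ) 1) (hb : 8 ≤ b) (hbm : b ^ 2 ≤ m)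
    (hn : a + b + m = n) (hmn : (b + 1) * m ≤ n)
    (hT : Real.exp (-(m / b ^ 3)) < binomialTail n (a + b) x) :
    binomialTail n a x ≤ (1 + Real.exp 4) * binomialTail n (a + b) x := by
  have hb' : (8 : ℝ) ≤ b := by exact_mod_cast hb
  have hbm' : (b : ℝ) ^ 2 ≤ m := by exact_mod_cast hbm
  have hn' : a + b + m = (n : ℝ) := by exact_mod_cast hn
  have hmn' : (b + 1) * m ≤ (n : ℝ) := by exact_mod_cast hmn
  set h : ℝ := (b : ℝ)⁻¹ with hh
  have hbh : b * h = 1 := mul_inv_cancel₀ (by positivity)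
  have h0 : 0 < h := by positivity
  have h1 : h ≤ 1 / 8 := by
    rw [hh, one_div]
    gcongr
  have hmean : n * (1 - x) ≤ m * (1 + h) := by
    rw [div_eq_mul_inv, ← inv_pow, ← hh] at hT
    exact mul_one_sub_le_of_exp_lt_binomialTail_right hx h0.le (by linarith) hn hT
  have hn0 : (0 : ℝ) < n := by nlinarith
  have hxh : 1 - h ≤ x := by
    have hmn_h : m * (1 + h) ≤ n * h := by
      have := mul_le_mul_of_nonneg_right hmn' h0.le
      nlinarith
    have := le_of_mul_le_mul_left (hmean.trans hmn_h) hn0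
    linarith
  have hwidth : m * (1 - h) ≤ n - (a + 2 * b : ℝ) := by nlinarith
  have hab : a + 2 * b ≤ n := by
    have : b ≤ b ^ 2 := Nat.le_self_pow two_ne_zero b
    omega
  have hodds : (a + 2 * b) * (1 - x) ≤ (1 + 4 * h) * ((n - (a + 2 * b)) * x) :=
    calc (a + 2 * b) * (1 - x) ≤ n * (1 - x) := by
          have := sub_nonneg.2 hx.2
          gcongr
          exact_mod_cast hab
      _ ≤ m * ((1 + 4 * h) * (1 - h) ^ 2) := hmean.trans <| by
          gcongr
          exact one_add_le_mul_one_sub_sq h0.le h1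
      _ = (1 + 4 * h) * (m * (1 - h) * (1 - h)) := by ring
      _ ≤ (1 + 4 * h) * ((n - (a + 2 * b)) * x) := by
          have h1h : 0 ≤ 1 - h := by linarith
          gcongr
          exact (mul_nonneg m.cast_nonneg h1h).trans hwidth
  exact binomialTail_le_one_add_exp_mul (by linarith) hx.2 hab hodds

end Growth

section Counts

open Polynomial ProbabilityTheory

variable {n : ℕ} {s t r : ℝ}

/-- The number of entries of the sample `u` that are at most `s`. -/
def countLE (s : ℝ) {n : ℕ} (u : Fin n → ℝ) : ℕ := Finset.card {k | u k ≤ s}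

lemma countLE_le (s : ℝ) (u : Fin n → ℝ) : countLE s u ≤ n :=
  (Finset.card_filter_le _ _).trans_eq (Finset.card_fin n)

lemma countLE_succ (s : ℝ) (u : Fin (n + 1) → ℝ) :
    countLE s u = (if u 0 ≤ s then 1 else 0) + countLE s fun k => u k.succ := by
  simp only [countLE, Finset.card_filter, Fin.sum_univ_succ]

lemma measurable_countLE (s : ℝ) (n : ℕ) : Measurable fun u : Fin n → ℝ => countLE s u := by
  simp only [countLE, Finset.card_filter]
  exact Finset.measurable_fun_sum _ fun k _ => Measurable.ite
    (measurableSet_le (measurable_pi_apply k) measurable_const) measurable_const measurable_const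

lemma measurableSet_le_countLE (j : ℕ) (s : ℝ) (n : ℕ) :
    MeasurableSet {u : Fin n → ℝ | j ≤ countLE s u} :=
  measurableSet_le measurable_const (measurable_countLE s n)

lemma nullMeasure_eq_restrict (n : ℕ) : nullMeasure n = volume.restrict (Icc 0 1) := by
  rw [nullMeasure, ← Measure.restrict_pi_pi, ← volume_pi, pi_univ_Icc]
  rfl

instance isProbabilityMeasure_uniform : IsProbabilityMeasure (volume.restrict (Icc (0 : ℝ) 1)) :=
  ⟨by simp⟩

instance isProbabilityMeasure_nullMeasure (n : ℕ) : IsProbabilityMeasure (nullMeasure n) :=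
  inferInstanceAs (IsProbabilityMeasure (Measure.pi _))

lemma uniform_real_Iic (hs : s ∈ Icc (0 : ℝ) 1) :
    (volume.restrict (Icc (0 : ℝ) 1)).real (Iic s) = s := by
  rw [measureReal_restrict_apply measurableSet_Iic, inter_comm, ← Ici_inter_Iic, inter_assoc,
    Iic_inter_Iic, inf_of_le_right hs.2, Ici_inter_Iic, Real.volume_real_Icc_of_le hs.1, sub_zero]

lemma nullMeasure_real_filter_eq (hs : s ∈ Icc (0 : ℝ) 1) (S : Finset (Fin n)) :
    (nullMeasure n).real {u | Finset.univ.filter (fun k => u k ≤ s) = S}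
      = s ^ S.card * (1 - s) ^ (n - S.card) := by
  have hpi : {u : Fin n → ℝ | Finset.univ.filter (fun k => u k ≤ s) = S}
      = univ.pi fun k => if k ∈ S then Iic s else (Iic s)ᶜ := by
    ext u
    simp only [Finset.ext_iff, Finset.mem_filter_univ, mem_ofPred_eq, mem_univ_pi]
    refine forall_congr' fun k => ?_
    split_ifs with hk <;> simp [hk]
  rw [hpi, nullMeasure, measureReal_def, Measure.pi_pi, ENNReal.toReal_prod]
  simp only [← measureReal_def, apply_ite (volume.restrict (Icc (0 : ℝ) 1)).real,
    probReal_compl_eq_one_sub measurableSet_Iic, uniform_real_Iic hs]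
  rw [Finset.prod_ite, Finset.prod_const, Finset.prod_const, Finset.filter_mem_eq_inter,
    Finset.univ_inter, Finset.filter_notMem_eq_sdiff, ← Finset.compl_eq_univ_sdiff,
    Finset.card_compl, Fintype.card_fin]

lemma nullMeasure_real_countLE_eq (hs : s ∈ Icc (0 : ℝ) 1) (n k : ℕ) :
    (nullMeasure n).real {u | countLE s u = k} = (bernsteinPolynomial ℝ n k).eval s := by
  have hunion : {u : Fin n → ℝ | countLE s u = k} = ⋃ S ∈ Finset.univ.powersetCard k,
      {u : Fin n → ℝ | Finset.univ.filter (fun k => u k ≤ s) = S} := by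
    ext u
    simp [countLE, Finset.mem_powersetCard]
  have hmeas : ∀ S : Finset (Fin n),
      MeasurableSet {u : Fin n → ℝ | Finset.univ.filter (fun k => u k ≤ s) = S} := by
    intro S
    simp only [Finset.ext_iff, Finset.mem_filter_univ]
    measurability
  rw [hunion, measureReal_biUnion_finset (fun S _ S' _ hne => ?_) fun S _ => hmeas S,
    Finset.sum_congr rfl fun S hS => by
      rw [nullMeasure_real_filter_eq hs, (Finset.mem_powersetCard.1 hS).2],
    Finset.sum_const, Finset.card_powersetCard, Finset.card_fin, eval_bernsteinPolynomial,
    nsmul_eq_mul, mul_assoc]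
  exact Set.disjoint_left.2 fun u hu hu' => hne (hu.symm.trans hu')

lemma nullMeasure_real_le_countLE (hs : s ∈ Icc (0 : ℝ) 1) (n j : ℕ) :
    (nullMeasure n).real {u | j ≤ countLE s u} = binomialTail n j s := by
  have hunion : {u : Fin n → ℝ | j ≤ countLE s u}
      = ⋃ k ∈ Finset.Ico j (n + 1), {u : Fin n → ℝ | countLE s u = k} := by
    ext u
    simp [countLE_le]
  have hmeas : ∀ k, MeasurableSet {u : Fin n → ℝ | countLE s u = k} := fun k =>
    measurable_countLE s n (measurableSet_singleton k)
  rw [hunion, measureReal_biUnion_finset (fun k _ l _ hne => ?_) fun k _ => hmeas k]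
  · exact Finset.sum_congr rfl fun k _ => nullMeasure_real_countLE_eq hs n k
  · exact Set.disjoint_left.2 fun u hu hu' => hne (hu.symm.trans hu')

lemma memLp_comp_countLE (F : ℕ → ℕ → ℝ) (s t : ℝ) (n : ℕ) (p : ENNReal) :
    MemLp (fun u : Fin n → ℝ => F (countLE s u) (countLE t u)) p (nullMeasure n) := by
  have hmeas : Measurable fun u : Fin n → ℝ => F (countLE s u) (countLE t u) :=
    (Measurable.of_discrete (f := fun q : ℕ × ℕ => F q.1 q.2)).comp
      ((measurable_countLE s n).prodMk (measurable_countLE t n))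
  obtain ⟨C, hC⟩ := ((Set.finite_Iic n).prod (Set.finite_Iic n)).image
    (fun q : ℕ × ℕ => ‖F q.1 q.2‖) |>.bddAbove
  exact .of_bound hmeas.aestronglyMeasurable C (ae_of_all _ fun u =>
    hC ⟨(countLE s u, countLE t u), ⟨countLE_le s u, countLE_le t u⟩, rfl⟩)

lemma integral_uniform_ite_ite (hs : 0 ≤ s) (hst : s ≤ t) (ht : t ≤ 1) (a b c : ℝ) :
    ∫ x in Icc 0 1, (if x ≤ s then a else if x ≤ t then b else c)
      = s * a + (t - s) * b + (1 - t) * c := by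
  have hsum : (fun x : ℝ => if x ≤ s then a else if x ≤ t then b else c)
      = fun x => (Iic s).indicator (fun _ => a - b) x + (Iic t).indicator (fun _ => b - c) x
        + c := by
    funext x
    have := fun h : x ≤ s => h.trans hst
    simp only [indicator, mem_Iic]
    split_ifs <;> grind
  have hint : ∀ y d : ℝ, Integrable ((Iic y).indicator fun _ => d)
      (volume.restrict (Icc (0 : ℝ) 1)) := fun y d =>
    (integrable_const d).indicator measurableSet_Iic
  rw [hsum, integral_add (f := fun x => _ + _) ((hint _ _).add (hint _ _)) (integrable_const c),
    integral_add (hint _ _) (hint _ _), integral_indicator_const _ measurableSet_Iic,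
    integral_indicator_const _ measurableSet_Iic, uniform_real_Iic ⟨hs, hst.trans ht⟩,
    uniform_real_Iic ⟨hs.trans hst, ht⟩, integral_const, probReal_univ]
  simp only [smul_eq_mul]
  ring

lemma integral_comp_countLE_succ (hs : 0 ≤ s) (hst : s ≤ t) (ht : t ≤ 1) (F : ℕ → ℕ → ℝ) :
    ∫ u, F (countLE s u) (countLE t u) ∂nullMeasure (n + 1)
      = s * ∫ u, F (countLE s u + 1) (countLE t u + 1) ∂nullMeasure n
        + (t - s) * ∫ u, F (countLE s u) (countLE t u + 1) ∂nullMeasure n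
        + (1 - t) * ∫ u, F (countLE s u) (countLE t u) ∂nullMeasure n := by
  have hmp := (measurePreserving_piFinSuccAbove
    (fun _ : Fin (n + 1) => volume.restrict (Icc (0 : ℝ) 1)) 0).symm
  have hint := (hmp.integrable_comp_emb (MeasurableEquiv.measurableEmbedding _)).2
    ((memLp_comp_countLE F s t (n + 1) 1).integrable le_rfl)
  rw [nullMeasure, ← hmp.integral_comp', integral_prod (fun _ => F _ _) hint,
    ← integral_uniform_ite_ite hs hst ht]
  congr 1
  funext x
  have := fun h : x ≤ s => h.trans hst
  simp only [countLE_succ, MeasurableEquiv.piFinSuccAbove_symm_apply, Fin.insertNthEquiv_apply,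
    Fin.insertNth_zero', Fin.cons_zero, Fin.cons_succ]
  split_ifs <;> simp_all [nullMeasure, add_comm]

lemma two_mul_mul_le_of_le_sq_mul (hs : 0 ≤ s) (ht : 0 < t) (hr : 0 < r) (hst : s ≤ r ^ 2 * t)
    (a c : ℝ) : 2 * (s * a * c) ≤ r * (s * a ^ 2 + t * c ^ 2) := by
  have hsq : 0 ≤ r * t * (r * (s * a ^ 2 + t * c ^ 2) - 2 * (s * a * c)) := by
    have hsplit : r * t * (r * (s * a ^ 2 + t * c ^ 2) - 2 * (s * a * c))
        = (r * t * c - s * a) ^ 2 + s * a ^ 2 * (r ^ 2 * t - s) := by ring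
    have := sub_nonneg.2 hst
    rw [hsplit]
    positivity
  linarith [nonneg_of_mul_nonneg_right hsq (by positivity)]

/-- The maximal correlation of `countLE s` and `countLE t` is at most `r` as soon as
`s ≤ r ^ 2 * t`. -/
theorem two_mul_covariance_countLE_le (hs : 0 < s) (hst : s ≤ t) (ht : t ≤ 1) (hr : 0 < r)
    (hrt : s ≤ r ^ 2 * t) (n : ℕ) (f g : ℕ → ℝ) :
    2 * cov[fun u => f (countLE s u), fun u => g (countLE t u); nullMeasure n]
      ≤ r * (Var[fun u => f (countLE s u); nullMeasure n]
        + Var[fun u => g (countLE t u); nullMeasure n]) := by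
  have hLp := fun (n : ℕ) (f : ℕ → ℝ) (y : ℝ) => memLp_comp_countLE (fun a _ => f a) y y n 2
  induction n generalizing f g with
  | zero => simp [countLE, covariance, variance_eq_integral aemeasurable_const]
  | succ n ih =>
    have hs_ih := mul_le_mul_of_nonneg_left (ih (fun k => f (k + 1)) fun k => g (k + 1)) hs.le
    have hst_ih := mul_le_mul_of_nonneg_left (ih f fun k => g (k + 1)) (sub_nonneg.2 hst)
    have ht_ih := mul_le_mul_of_nonneg_left (ih f g) (sub_nonneg.2 ht)
    have hLp_succ := fun (f : ℕ → ℝ) (y : ℝ) => hLp n (fun k => f (k + 1)) y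
    simp only [covariance_eq_sub, variance_eq_sub, hLp, hLp_succ, Pi.mul_apply, Pi.pow_apply]
      at hs_ih hst_ih ht_ih ⊢
    rw [integral_comp_countLE_succ hs.le hst ht fun a b => f a * g b,
      integral_comp_countLE_succ hs.le hst ht fun a _ => f a,
      integral_comp_countLE_succ hs.le hst ht fun _ b => g b,
      integral_comp_countLE_succ hs.le hst ht fun a _ => f a ^ 2,
      integral_comp_countLE_succ hs.le hst ht fun _ b => g b ^ 2]
    set F₀ := ∫ u, f (countLE s u) ∂nullMeasure n
    set F₁ := ∫ u, f (countLE s u + 1) ∂nullMeasure n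
    set G₀ := ∫ u, g (countLE t u) ∂nullMeasure n
    set G₁ := ∫ u, g (countLE t u + 1) ∂nullMeasure n
    have hmeans := mul_le_mul_of_nonneg_left
      (two_mul_mul_le_of_le_sq_mul hs.le (hs.trans_le hst) hr hrt (F₁ - F₀) (G₁ - G₀))
      (sub_nonneg.2 ht)
    have hshrink : r * (s * (F₁ - F₀) ^ 2 * (1 - t)) ≤ r * (s * (F₁ - F₀) ^ 2 * (1 - s)) := by
      gcongr
    linarith

end Counts

section SecondMoment

open ProbabilityTheory

variable {Ω ι : Type*} [MeasurableSpace Ω] {μ : Measure Ω} [IsProbabilityMeasure μ]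

lemma memLp_indicator_one {A : Set Ω} (hA : MeasurableSet A) :
    MemLp (A.indicator (1 : Ω → ℝ)) 2 μ :=
  (memLp_const 1).indicator hA

lemma variance_indicator_one_le {A : Set Ω} (hA : MeasurableSet A) :
    Var[A.indicator 1; μ] ≤ μ.real A := by
  refine (variance_le_expectation_sq (memLp_indicator_one hA).aestronglyMeasurable).trans_eq ?_
  rw [← integral_indicator_one hA]
  congr 1
  funext ω
  by_cases hω : ω ∈ A <;> simp [hω]

lemma measureReal_forall_notMem_mul_sq_le (s : Finset ι) {A : ι → Set Ω}
    (hA : ∀ k, MeasurableSet (A k)) :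
    μ.real {ω | ∀ k ∈ s, ω ∉ A k} * (∑ k ∈ s, μ.real (A k)) ^ 2
      ≤ ∑ k ∈ s, ∑ l ∈ s, cov[(A k).indicator 1, (A l).indicator 1; μ] := by
  set X : Ω → ℝ := fun ω => ∑ k ∈ s, (A k).indicator 1 ω
  have hLp : MemLp X 2 μ := memLp_finsetSum s fun k _ => memLp_indicator_one (hA k)
  have hmean : ∑ k ∈ s, μ.real (A k) = μ[X] := by
    rw [integral_finsetSum s fun k _ => (memLp_indicator_one (hA k)).integrable one_le_two]
    simp_rw [integral_indicator_one (hA _)]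
  rw [← variance_fun_sum' fun k _ => memLp_indicator_one (hA k), hmean]
  have hmean_nonneg : 0 ≤ μ[X] := hmean ▸ Finset.sum_nonneg fun k _ => measureReal_nonneg
  rcases hmean_nonneg.eq_or_lt with h0 | hpos
  · rw [← h0]
    simp
  · rw [← le_div_iff₀ (by positivity)]
    have hsub : {ω | ∀ k ∈ s, ω ∉ A k} ⊆ {ω | μ[X] ≤ |X ω - μ[X]|} := fun ω hω => by
      have hzero : X ω = 0 := Finset.sum_eq_zero fun k hk => indicator_of_notMem (hω k hk) _
      rw [mem_ofPred_eq, hzero, zero_sub, abs_neg]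
      exact le_abs_self _
    refine (measureReal_mono hsub).trans ?_
    exact ENNReal.toReal_le_of_le_ofReal (div_nonneg (variance_nonneg X μ) (sq_nonneg _))
      (meas_ge_le_variance_div_sq hLp hpos)

lemma measureReal_forall_notMem_mul_card_sq_le (s : Finset ι) {A : ι → Set Ω}
    {e d : ℝ} (hA : ∀ k, MeasurableSet (A k)) (hAe : ∀ k ∈ s, μ.real (A k) = e) (hd : 0 ≤ d)
    (hcov : ∀ k ∈ s, ∀ l ∈ s, k ≠ l → cov[(A k).indicator 1, (A l).indicator 1; μ] ≤ d) :
    μ.real {ω | ∀ k ∈ s, ω ∉ A k} * (s.card * e) ^ 2 ≤ s.card * e + s.card ^ 2 * d := by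
  classical
  have hpair : ∀ k ∈ s, ∀ l ∈ s,
      cov[(A k).indicator 1, (A l).indicator 1; μ] ≤ (if k = l then e else 0) + d := by
    intro k hk l hl
    split_ifs with hkl
    · subst hkl
      rw [covariance_self (memLp_indicator_one (hA k)).aemeasurable]
      have := (variance_indicator_one_le (hA k)).trans_eq (hAe k hk)
      linarith
    · rw [zero_add]
      exact hcov k hk l hl hkl
  have hsum : ∑ k ∈ s, μ.real (A k) = s.card * e := by
    rw [Finset.sum_congr rfl hAe, Finset.sum_const, nsmul_eq_mul]
  calc _ ≤ ∑ k ∈ s, ∑ l ∈ s, cov[(A k).indicator 1, (A l).indicator 1; μ] :=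
        hsum ▸ measureReal_forall_notMem_mul_sq_le s hA
    _ ≤ ∑ k ∈ s, ∑ l ∈ s, ((if k = l then e else 0) + d) :=
        Finset.sum_le_sum fun k hk => Finset.sum_le_sum (hpair k hk)
    _ = ∑ _ ∈ s, (e + s.card * d) := Finset.sum_congr rfl fun _ hk => by
        simp [Finset.sum_add_distrib, hk]
    _ = s.card * e + s.card ^ 2 * d := by
        rw [Finset.sum_const, nsmul_eq_mul]
        ring

end SecondMoment

section PValues

open Polynomial

variable {n i : ℕ} {x : ℝ}

lemma betaPDF_natCast (hi : i ≤ n) (t : ℝ) :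
    betaPDF (i + 1) ((n + 1 : ℕ) - i) t = (n + 1) * (bernsteinPolynomial ℝ n i).eval t := by
  have hb : ((n + 1 : ℕ) : ℝ) - i = (n - i : ℕ) + 1 := by
    push_cast [Nat.cast_sub hi]
    ring
  have hab : (i + 1 + ((n - i : ℕ) + 1) : ℝ) = (n + 1 : ℕ) + 1 := by
    push_cast [Nat.cast_sub hi]
    ring
  rw [betaPDF, eval_bernsteinPolynomial, hb, hab, add_sub_cancel_right, add_sub_cancel_right,
    Real.rpow_natCast, Real.rpow_natCast, Real.Gamma_nat_eq_factorial, Real.Gamma_nat_eq_factorial,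
    Real.Gamma_nat_eq_factorial, Nat.cast_choose ℝ hi, Nat.factorial_succ]
  push_cast
  field_simp

lemma regIncBeta_natCast (hi : i < n) (hx : 0 ≤ x) :
    regIncBeta (i + 1) (n - i) x = binomialTail n (i + 1) x := by
  obtain ⟨n, rfl⟩ := Nat.exists_eq_add_of_le' (Nat.succ_le_of_lt (i.zero_le.trans_lt hi))
  simp only [regIncBeta, betaPDF_natCast (Nat.lt_succ_iff.1 hi)]
  rw [← intervalIntegral.integral_of_le hx,
    intervalIntegral.integral_eq_sub_of_hasDerivAt (fun y _ => hasDerivAt_binomialTail n i y),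
    binomialTail_apply_zero i.succ_pos, sub_zero]
  exact (continuous_const.mul (bernsteinPolynomial ℝ n i).continuous).intervalIntegrable _ _

lemma orderStat_mem_Icc {u : Fin n → ℝ} (hu : u ∈ Icc 0 1) (i : Fin n) :
    orderStat u i ∈ Icc (0 : ℝ) 1 :=
  ⟨hu.1 _, hu.2 _⟩

lemma orderStat_le_iff (u : Fin n → ℝ) (i : Fin n) (x : ℝ) :
    orderStat u i ≤ x ↔ (i : ℕ) + 1 ≤ countLE x u := by
  have hcard : Finset.card {k | (u ∘ Tuple.sort u) k ≤ x} = countLE x u := by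
    simp only [countLE, Finset.card_filter]
    exact Equiv.sum_comp (Tuple.sort u) fun k => if u k ≤ x then 1 else 0
  rw [← hcard, Nat.succ_le_iff]
  exact (Tuple.lt_card_le_iff_apply_le_of_monotone (Tuple.monotone_sort u)).symm

lemma orderStat_one_sub (u : Fin n → ℝ) (i : Fin n) :
    orderStat (1 - u) i = 1 - orderStat u i.rev := by
  have hmono : Monotone ((1 - u) ∘ Fin.revPerm.trans (Tuple.sort u)) := fun a b hab =>
    sub_le_sub_left (Tuple.monotone_sort u (Fin.rev_le_rev.2 hab)) 1
  exact (congrFun (Tuple.comp_sort_eq_comp_iff_monotone.2 hmono) i).symm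

lemma pOrd_eq_binomialTail {u : Fin n → ℝ} (hu : u ∈ Icc 0 1) (i : Fin n) :
    pOrd u i = binomialTail n (i + 1) (orderStat u i) :=
  regIncBeta_natCast i.isLt (orderStat_mem_Icc hu i).1

lemma pOrd_le_binomialTail_iff {u : Fin n → ℝ} (hu : u ∈ Icc 0 1) (hx : x ∈ Icc (0 : ℝ) 1)
    (i : Fin n) : pOrd u i ≤ binomialTail n (i + 1) x ↔ (i : ℕ) + 1 ≤ countLE x u := by
  rw [pOrd_eq_binomialTail hu, ← orderStat_le_iff]
  exact (binomialTail_strictMonoOn (Nat.succ_pos _) i.isLt).le_iff_le (orderStat_mem_Icc hu i) hx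

lemma pOrd_one_sub {u : Fin n → ℝ} (hu : u ∈ Icc 0 1) (i : Fin n) :
    pOrd (1 - u) i = 1 - pOrd u i.rev := by
  rw [pOrd_eq_binomialTail (Icc.one_sub_mem hu), pOrd_eq_binomialTail hu, orderStat_one_sub,
    binomialTail_one_sub i.isLt.le]
  congr 2
  rw [Fin.val_rev]
  omega

lemma mnPlus_one_sub {u : Fin n → ℝ} (hu : u ∈ Icc 0 1) : MnPlus (1 - u) = MnMinus u := by
  simp only [MnPlus, MnMinus, pOrd_one_sub hu]
  exact Fin.rev_surjective.iInf_comp fun i => 1 - pOrd u i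

lemma mnPlus_le_pOrd (u : Fin n → ℝ) (i : Fin n) : MnPlus u ≤ pOrd u i :=
  ciInf_le (Set.finite_range _).bddBelow i

lemma measurePreserving_subLeft_one (n : ℕ) :
    MeasurePreserving (MeasurableEquiv.subLeft (1 : Fin n → ℝ)) (nullMeasure n)
      (nullMeasure n) := by
  have h := (Measure.measurePreserving_sub_left volume (1 : Fin n → ℝ)).restrict_preimage
    (measurableSet_Icc (a := 0) (b := 1))
  rw [preimage_const_sub_Icc, sub_zero, sub_self] at h
  rwa [nullMeasure_eq_restrict]

end PValues

section Minimum

open ProbabilityTheory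

variable {n : ℕ}

lemma covariance_indicator_le_countLE_le {i j : ℕ} {s t r e : ℝ} (hs : 0 < s) (hst : s ≤ t)
    (ht : t ≤ 1) (hr : 0 < r) (hrt : s ≤ r ^ 2 * t) (hi : binomialTail n i s = e)
    (hj : binomialTail n j t = e) :
    cov[{u | i ≤ countLE s u}.indicator 1, {u | j ≤ countLE t u}.indicator 1; nullMeasure n]
      ≤ r * e := by
  have hcov := two_mul_covariance_countLE_le hs hst ht hr hrt n ((Ici i).indicator 1)
    ((Ici j).indicator 1)
  have hVi : Var[{u | i ≤ countLE s u}.indicator 1; nullMeasure n] ≤ e :=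
    (variance_indicator_one_le (measurableSet_le_countLE i s n)).trans_eq
      ((nullMeasure_real_le_countLE ⟨hs.le, hst.trans ht⟩ n i).trans hi)
  have hVj : Var[{u | j ≤ countLE t u}.indicator 1; nullMeasure n] ≤ e :=
    (variance_indicator_one_le (measurableSet_le_countLE j t n)).trans_eq
      ((nullMeasure_real_le_countLE ⟨(hs.trans_le hst).le, ht⟩ n j).trans hj)
  have h2 : 2 * cov[{u | i ≤ countLE s u}.indicator 1, {u | j ≤ countLE t u}.indicator 1;
      nullMeasure n] ≤ r * (e + e) :=
    hcov.trans (mul_le_mul_of_nonneg_left (add_le_add hVi hVj) hr.le)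
  linarith

lemma mul_le_four_mul_of_binomialTail_lt_half {j : ℕ} {x : ℝ} (hx : x ∈ Icc (0 : ℝ) 1)
    (hj : 1 ≤ j) (hjn : j ≤ n) (hT : binomialTail n j x < 1 / 2) : n * x ≤ 4 * j := by
  by_contra! hlt
  obtain ⟨m, rfl⟩ := Nat.exists_eq_add_of_le' hj
  have hhalf := binomialTail_le_half (m := m) (Icc.one_sub_mem hx)
    (show n - (m + 1) + 1 + m = n by omega) (by rw [sub_sub_cancel]; exact_mod_cast hlt)
  rw [binomialTail_one_sub (Nat.sub_le n _), Nat.sub_sub_self hjn] at hhalf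
  linarith

lemma le_mul_of_binomialTail_eq {j l : ℕ} {x y e c : ℝ} (hx : x ∈ Icc (0 : ℝ) 1)
    (hy : y ∈ Icc (0 : ℝ) 1) (hj : 1 ≤ j) (hjn : j ≤ n) (he : e < 1 / 2) (hc : 0 ≤ c)
    (hxe : binomialTail n j x = e) (hye : binomialTail n l y = e) (hjl : 4 * j ≤ c * (e * l)) :
    x ≤ c * y := by
  have hn : (0 : ℝ) < n := by exact_mod_cast hj.trans hjn
  refine le_of_mul_le_mul_left ?_ hn
  calc n * x ≤ 4 * j := mul_le_four_mul_of_binomialTail_lt_half hx hj hjn (hxe.trans_lt he)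
    _ ≤ c * (e * l) := hjl
    _ ≤ c * (n * y) := by
        rw [← hye]
        exact mul_le_mul_of_nonneg_left (binomialTail_mul_le_mean hy n l) hc
    _ = n * (c * y) := by ring

lemma pos_of_binomialTail_pos {j : ℕ} {x : ℝ} (hx : x ∈ Icc (0 : ℝ) 1) (hj : 1 ≤ j)
    (hT : 0 < binomialTail n j x) : 0 < x := by
  refine hx.1.lt_of_ne' fun h => ?_
  rw [h, binomialTail_apply_zero hj] at hT
  exact hT.false

theorem nullMeasure_real_lt_mnPlus_mul_sq_le {K : ℕ} {j : ℕ → ℕ} {x : ℕ → ℝ} {e r : ℝ} (he : 0 < e)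
    (hr : 0 < r) (hr' : r ≤ 1) (hj : ∀ k < K, 1 ≤ j k) (hjn : ∀ k < K, j k ≤ n)
    (hx : ∀ k < K, x k ∈ Icc (0 : ℝ) 1) (hxe : ∀ k < K, binomialTail n (j k) (x k) = e)
    (hxr : ∀ l < K, ∀ k < l, x k ≤ r ^ 2 * x l) :
    (nullMeasure n).real {u | u ∈ Icc 0 1 ∧ e < MnPlus u} * (K * e) ^ 2
      ≤ K * e + K ^ 2 * (r * e) := by
  set A : ℕ → Set (Fin n → ℝ) := fun k => {u | j k ≤ countLE (x k) u}
  have hcov : ∀ l < K, ∀ k < l,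
      cov[(A k).indicator 1, (A l).indicator 1; nullMeasure n] ≤ r * e := fun l hl k hkl => by
    have hk := hkl.trans hl
    exact covariance_indicator_le_countLE_le
      (pos_of_binomialTail_pos (hx k hk) (hj k hk) ((hxe k hk).symm ▸ he))
      ((hxr l hl k hkl).trans (mul_le_of_le_one_left (hx l hl).1 (pow_le_one₀ hr.le hr')))
      (hx l hl).2 hr (hxr l hl k hkl) (hxe k hk) (hxe l hl)
  have hmoment := measureReal_forall_notMem_mul_card_sq_le (μ := nullMeasure n) (Finset.range K)
    (A := A) (e := e) (fun k => measurableSet_le_countLE _ _ n)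
    (fun k hk => by
      rw [← hxe k (Finset.mem_range.1 hk)]
      exact nullMeasure_real_le_countLE (hx k (Finset.mem_range.1 hk)) n _)
    (mul_nonneg hr.le he.le) fun k hk l hl hkl => by
      rcases hkl.lt_or_gt with h | h
      · exact hcov l (Finset.mem_range.1 hl) k h
      · exact covariance_comm (μ := nullMeasure n) _ _ ▸ hcov k (Finset.mem_range.1 hk) l h
  rw [Finset.card_range] at hmoment
  refine le_trans (mul_le_mul_of_nonneg_right (measureReal_mono ?_) (sq_nonneg _)) hmoment
  rintro u ⟨hu, hM⟩ k hk hkA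
  rw [Finset.mem_range] at hk
  have hjk : j k - 1 + 1 = j k := Nat.sub_add_cancel (hj k hk)
  have hp := (pOrd_le_binomialTail_iff hu (hx k hk)
    ⟨j k - 1, by have := hjn k hk; omega⟩).2 (hjk.trans_le hkA)
  rw [hjk, hxe k hk] at hp
  exact ((mnPlus_le_pOrd u _).trans hp).not_gt hM

theorem nullMeasure_real_lt_mnPlus_mul_sq_le_of_pow_le {B K : ℕ} {e r : ℝ} (hB : 2 ≤ B)
    (hn : B ^ K ≤ n) (he : 0 < e) (he' : e < 1 / 2) (hr : 0 < r) (hr' : r ≤ 1)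
    (hrB : 4 ≤ r ^ 2 * (e * B)) :
    (nullMeasure n).real {u | u ∈ Icc 0 1 ∧ e < MnPlus u} * (K * e) ^ 2
      ≤ K * e + K ^ 2 * (r * e) := by
  have hB_pos : ∀ k < K, 1 ≤ B ^ (k + 1) := fun k _ => Nat.one_le_pow _ _ (by omega)
  have hB_le : ∀ k < K, B ^ (k + 1) ≤ n := fun k hk =>
    (Nat.pow_le_pow_right (by omega) hk).trans hn
  choose! x hx hxe using fun k (hk : k < K) =>
    exists_binomialTail_eq (hB_pos k hk) (hB_le k hk) (e := e) ⟨he.le, by linarith⟩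
  refine nullMeasure_real_lt_mnPlus_mul_sq_le he hr hr' hB_pos hB_le hx hxe fun l hl k hkl => ?_
  have hk := hkl.trans hl
  refine le_mul_of_binomialTail_eq (hx k hk) (hx l hl) (hB_pos k hk) (hB_le k hk) he'
    (sq_nonneg r) (hxe k hk) (hxe l hl) ?_
  have hpow : B ^ (k + 2) ≤ B ^ (l + 1) := Nat.pow_le_pow_right (by omega) (by omega)
  calc 4 * ((B ^ (k + 1) : ℕ) : ℝ) ≤ r ^ 2 * (e * B) * (B ^ (k + 1) : ℕ) := by gcongr
    _ = r ^ 2 * (e * (B ^ (k + 2) : ℕ)) := by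
        push_cast
        ring
    _ ≤ r ^ 2 * (e * (B ^ (l + 1) : ℕ)) := by gcongr

end Minimum

section Edges

variable {n a b c m R : ℕ} {e x : ℝ}

/-- The event that `p_{(j)} ≤ e` for some `j ∈ s`, where `j` is 1-based as in the paper. -/
def lowPValue (n : ℕ) (e : ℝ) (s : Set ℕ) : Set (Fin n → ℝ) :=
  {u | u ∈ Icc 0 1 ∧ ∃ i : Fin n, (i : ℕ) + 1 ∈ s ∧ pOrd u i ≤ e}

lemma nullMeasure_real_lowPValue_le_add {r s t : Set ℕ} (h : r ⊆ s ∪ t) :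
    (nullMeasure n).real (lowPValue n e r)
      ≤ (nullMeasure n).real (lowPValue n e s) + (nullMeasure n).real (lowPValue n e t) := by
  refine (measureReal_mono ?_).trans (measureReal_union_le _ _)
  rintro u ⟨hu, i, hi, hp⟩
  exact (h hi).imp (fun his => ⟨hu, i, his, hp⟩) fun hit => ⟨hu, i, hit, hp⟩

lemma nullMeasure_real_lowPValue_Icc_le (hx : x ∈ Icc (0 : ℝ) 1) (he : e ≤ binomialTail n c x) :
    (nullMeasure n).real (lowPValue n e (Icc a c)) ≤ binomialTail n a x := by
  rw [← nullMeasure_real_le_countLE hx n a]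
  refine measureReal_mono ?_
  rintro u ⟨hu, i, hi, hp⟩
  exact hi.1.trans ((pOrd_le_binomialTail_iff hu hx i).1
    (hp.trans (he.trans (binomialTail_antitone hx n hi.2))))

lemma nullMeasure_real_lowPValue_singleton_le {j : ℕ} (hj : 1 ≤ j) (hjn : j ≤ n)
    (he : e ∈ Icc (0 : ℝ) 1) : (nullMeasure n).real (lowPValue n e {j}) ≤ e := by
  obtain ⟨x, hx, hxe⟩ := exists_binomialTail_eq hj hjn he
  rw [← Icc_self]
  exact (nullMeasure_real_lowPValue_Icc_le hx hxe.ge).trans_eq hxe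

lemma nullMeasure_real_lowPValue_left_block_le (hb : 8 ≤ b) (hba : b ^ 2 ≤ a)
    (hn : b * (a + 2 * b) ≤ n) (he : Real.exp (-(a / b ^ 3)) < e) (he1 : e ≤ 1) :
    (nullMeasure n).real (lowPValue n e (Icc a (a + b))) ≤ (1 + Real.exp 4) * e := by
  obtain ⟨x, hx, rfl⟩ := exists_binomialTail_eq (n := n) (j := a + b) (by omega) (by nlinarith)
    ⟨((Real.exp_pos _).trans he).le, he1⟩
  exact (nullMeasure_real_lowPValue_Icc_le hx le_rfl).trans
    (binomialTail_le_of_block_left hx hb hba hn he)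

lemma nullMeasure_real_lowPValue_right_block_le (hb : 8 ≤ b) (hbm : b ^ 2 ≤ m)
    (hn : a + b + m = n) (hmn : (b + 1) * m ≤ n) (he : Real.exp (-(m / b ^ 3)) < e)
    (he1 : e ≤ 1) :
    (nullMeasure n).real (lowPValue n e (Icc a (a + b))) ≤ (1 + Real.exp 4) * e := by
  obtain ⟨x, hx, rfl⟩ := exists_binomialTail_eq (n := n) (j := a + b) (by omega) (by omega)
    ⟨((Real.exp_pos _).trans he).le, he1⟩
  exact (nullMeasure_real_lowPValue_Icc_le hx le_rfl).trans
    (binomialTail_le_of_block_right hx hb hbm hn hmn he)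

lemma le_add_mul_of_succ_le_add {g : ℕ → ℝ} {d : ℝ} (h : ∀ k < m, g (k + 1) ≤ g k + d) :
    g m ≤ g 0 + m * d := by
  induction m with
  | zero => simp
  | succ m ih =>
    have hlast := h m m.lt_succ_self
    have hrest := ih fun k hk => h k (hk.trans m.lt_succ_self)
    push_cast
    linarith

lemma nullMeasure_real_lowPValue_empty : (nullMeasure n).real (lowPValue n e ∅) = 0 := by
  simp [lowPValue]

lemma exp_neg_div_lt_of_le {k : ℕ} (hmk : m ≤ k) (he : Real.exp (-(m / b ^ 3)) < e) :
    Real.exp (-(k / b ^ 3)) < e :=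
  lt_of_le_of_lt (by gcongr) he

theorem nullMeasure_real_lowPValue_left_le (hb : 8 ≤ b) (hbm : b ^ 2 ≤ m)
    (hn : b * (m + R * b + 2 * b) ≤ n) (he : Real.exp (-(m / b ^ 3)) < e) (he1 : e ≤ 1) :
    (nullMeasure n).real (lowPValue n e (Icc 1 (m + R * b)))
      ≤ m * e + R * ((1 + Real.exp 4) * e) := by
  have he0 : 0 ≤ e := ((Real.exp_pos _).trans he).le
  have hsingles := le_add_mul_of_succ_le_add (m := m) (d := e)
    (g := fun k => (nullMeasure n).real (lowPValue n e (Icc 1 k))) fun k hk =>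
      (nullMeasure_real_lowPValue_le_add (s := Icc 1 k) (t := {k + 1}) fun j hj => by
        simp only [mem_union, mem_Icc, mem_singleton_iff] at hj ⊢
        omega).trans <| add_le_add_right
          (nullMeasure_real_lowPValue_singleton_le k.succ_pos (by nlinarith) ⟨he0, he1⟩) _
  have hblocks := le_add_mul_of_succ_le_add (m := R) (d := (1 + Real.exp 4) * e)
    (g := fun r => (nullMeasure n).real (lowPValue n e (Icc 1 (m + r * b)))) fun r hr =>
      (nullMeasure_real_lowPValue_le_add (s := Icc 1 (m + r * b))
        (t := Icc (m + r * b) (m + r * b + b)) fun j hj => by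
          simp only [mem_union, mem_Icc, add_one_mul] at hj ⊢
          omega).trans <| add_le_add_right
            (nullMeasure_real_lowPValue_left_block_le hb (by omega)
              (le_trans (by gcongr) hn) (exp_neg_div_lt_of_le (by omega) he) he1) _
  simp only [zero_mul, add_zero] at hblocks
  simp only [Icc_eq_empty_of_lt one_pos, nullMeasure_real_lowPValue_empty, zero_add] at hsingles
  linarith

theorem nullMeasure_real_lowPValue_right_le (hb : 8 ≤ b) (hbm : b ^ 2 ≤ m)
    (hn : (b + 1) * (m + R * b) ≤ n) (he : Real.exp (-(m / b ^ 3)) < e) (he1 : e ≤ 1) :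
    (nullMeasure n).real (lowPValue n e (Ioc (n - (m + R * b)) n))
      ≤ m * e + R * ((1 + Real.exp 4) * e) := by
  have he0 : 0 ≤ e := ((Real.exp_pos _).trans he).le
  have hmn : m + R * b ≤ n := by nlinarith
  have hsingles := le_add_mul_of_succ_le_add (m := m) (d := e)
    (g := fun k => (nullMeasure n).real (lowPValue n e (Ioc (n - k) n))) fun k hk =>
      (nullMeasure_real_lowPValue_le_add (s := Ioc (n - k) n) (t := {n - k}) fun j hj => by
        simp only [mem_union, mem_Ioc, mem_singleton_iff] at hj ⊢
        omega).trans <| add_le_add_right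
          (nullMeasure_real_lowPValue_singleton_le (by omega) (by omega) ⟨he0, he1⟩) _
  have hblocks := le_add_mul_of_succ_le_add (m := R) (d := (1 + Real.exp 4) * e)
    (g := fun r => (nullMeasure n).real (lowPValue n e (Ioc (n - (m + r * b)) n))) fun r hr => by
      have hrR : m + (r + 1) * b ≤ m + R * b := by gcongr; exact hr
      rw [add_one_mul, ← add_assoc] at hrR
      obtain ⟨a, ha⟩ := Nat.exists_eq_add_of_le' (hrR.trans hmn)
      refine (nullMeasure_real_lowPValue_le_add (s := Ioc (n - (m + r * b)) n)
        (t := Icc a (a + b)) fun j hj => ?_).trans <| add_le_add_right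
          (nullMeasure_real_lowPValue_right_block_le hb (m := m + r * b) (by omega) (by omega)
            (le_trans (by gcongr) hn) (exp_neg_div_lt_of_le (by omega) he) he1) _
      simp only [mem_union, mem_Icc, mem_Ioc, add_one_mul] at hj ⊢
      omega
  simp only [zero_mul, add_zero] at hblocks
  simp only [tsub_zero, Ioc_self, nullMeasure_real_lowPValue_empty, zero_add] at hsingles
  linarith

end Edges

/-- `q` is of the order of `log log n`: large, yet `log n` exceeds a high power of `q` while being
at most exponential in `q`. -/
structure IsScale (n q : ℕ) : Prop where
  eight_le : 8 ≤ q
  pow_twenty_le : (q : ℝ) ^ 20 ≤ Real.log n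
  log_le_exp : Real.log n ≤ Real.exp q

namespace IsScale

variable {n q : ℕ}

lemma eight_le_cast (h : IsScale n q) : (8 : ℝ) ≤ q := by exact_mod_cast h.eight_le

lemma pow_le_log (h : IsScale n q) {k : ℕ} (hk : k ≤ 20) : (q : ℝ) ^ k ≤ Real.log n :=
  (pow_le_pow_right₀ (by linarith [h.eight_le_cast]) hk).trans h.pow_twenty_le

lemma mul_le_log (h : IsScale n q) : 64 * (q : ℝ) ≤ Real.log n := by
  have hq := h.eight_le_cast
  refine le_trans ?_ (h.pow_le_log (k := 3) (by norm_num))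
  nlinarith [mul_le_mul hq hq (by norm_num) (by linarith)]

lemma log_pos (h : IsScale n q) : 0 < Real.log n := by
  linarith [h.mul_le_log, h.eight_le_cast]

lemma cast_pos (h : IsScale n q) : (0 : ℝ) < n := by
  refine n.cast_nonneg.lt_of_ne' fun hn => ?_
  have := h.log_pos
  rw [hn, Real.log_zero] at this
  exact this.false

lemma log_ceil_le (h : IsScale n q) : Real.log ⌈Real.log n⌉₊ ≤ q + 1 := by
  have hceil_pos : (0 : ℝ) < ⌈Real.log n⌉₊ := Nat.cast_pos.2 (Nat.ceil_pos.2 h.log_pos)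
  have hceil := Nat.ceil_lt_add_one h.log_pos.le
  have hexp := Real.add_one_le_exp (1 : ℝ)
  have hL := h.log_le_exp
  rw [Real.log_le_iff_le_exp hceil_pos, Real.exp_add]
  nlinarith [h.mul_le_log, h.eight_le_cast, Real.exp_pos q]

lemma log_le_mul_natLog (h : IsScale n q) :
    Real.log n ≤ 16 * q * Nat.log (⌈Real.log n⌉₊ ^ 4) n := by
  set B := ⌈Real.log n⌉₊ ^ 4
  set K := Nat.log B n
  have hq := h.eight_le_cast
  have hqL := h.mul_le_log
  have hceil : 1 < ⌈Real.log n⌉₊ := Nat.lt_ceil.2 (by push_cast; linarith)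
  have hn : (n : ℝ) ≤ (B : ℝ) ^ (K + 1) := by
    exact_mod_cast (Nat.lt_pow_succ_log_self (Nat.one_lt_pow four_ne_zero hceil) n).le
  have hlogB : Real.log B = 4 * Real.log ⌈Real.log n⌉₊ := by
    simp only [B, Nat.cast_pow, Real.log_pow, Nat.cast_ofNat]
  have hlog : Real.log n ≤ (K + 1) * (4 * (q + 1)) := by
    calc Real.log n ≤ Real.log ((B : ℝ) ^ (K + 1)) := Real.log_le_log h.cast_pos hn
      _ = (K + 1) * (4 * Real.log ⌈Real.log n⌉₊) := by
          rw [Real.log_pow, hlogB, Nat.cast_succ]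
      _ ≤ (K + 1) * (4 * (q + 1)) := by gcongr; exact h.log_ceil_le
  nlinarith [Nat.cast_nonneg (α := ℝ) K]

lemma threshold_pos (h : IsScale n q) : 0 < (q : ℝ) ^ 2 / Real.log n :=
  div_pos (pow_pos (by linarith [h.eight_le_cast]) 2) h.log_pos

lemma threshold_lt_half (h : IsScale n q) : (q : ℝ) ^ 2 / Real.log n < 1 / 2 := by
  rw [div_lt_iff₀ h.log_pos]
  nlinarith [h.pow_le_log (k := 3) (by norm_num), h.eight_le_cast, sq_nonneg (q : ℝ)]

lemma exp_neg_lt_threshold (h : IsScale n q) : Real.exp (-q) < (q : ℝ) ^ 2 / Real.log n := by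
  have hq := h.eight_le_cast
  have hL := h.log_pos
  calc Real.exp (-q) = (Real.exp q)⁻¹ := Real.exp_neg _
    _ ≤ 1 / Real.log n := by
        rw [one_div]
        exact inv_anti₀ hL h.log_le_exp
    _ < (q : ℝ) ^ 2 / Real.log n := by gcongr; nlinarith

lemma six_mul_log_sq_le (h : IsScale n q) : 6 * Real.log n ^ 2 ≤ n := by
  have hcube := Real.pow_div_factorial_le_exp _ h.log_pos.le 3
  rw [Real.exp_log h.cast_pos] at hcube
  norm_num [Nat.factorial] at hcube
  nlinarith [h.mul_le_log, h.eight_le_cast, sq_nonneg (Real.log n)]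

theorem nullMeasure_real_lt_mnPlus_le (h : IsScale n q) :
    (nullMeasure n).real {u | u ∈ Icc 0 1 ∧ (q : ℝ) ^ 2 / Real.log n < MnPlus u} ≤ 17 / q := by
  have hq := h.eight_le_cast
  have hL := h.log_pos
  have hqL := h.mul_le_log
  have he := h.threshold_pos
  set L := Real.log n
  set B := ⌈L⌉₊ ^ 4
  set y : ℝ := Nat.log B n * (q ^ 2 / L) with hy
  have hB : 2 ≤ B := by
    have hceil : 2 ≤ ⌈L⌉₊ := Nat.lt_ceil.2 (by push_cast; linarith)
    exact hceil.trans (Nat.le_self_pow four_ne_zero _)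
  have hBL : 4 ≤ (1 / L) ^ 2 * (q ^ 2 / L * B) := by
    have hceil : L ^ 4 ≤ (B : ℝ) := by
      simp only [B, Nat.cast_pow]
      gcongr
      exact Nat.le_ceil L
    calc (4 : ℝ) ≤ q ^ 2 * L := by nlinarith
      _ = (1 / L) ^ 2 * (q ^ 2 / L * L ^ 4) := by field_simp
      _ ≤ _ := by gcongr
  have hmoment := nullMeasure_real_lt_mnPlus_mul_sq_le_of_pow_le hB
    (Nat.pow_log_le_self B (Nat.cast_pos.1 h.cast_pos).ne') he h.threshold_lt_half
    (one_div_pos.2 hL) ((div_le_one hL).2 (by linarith)) hBL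
  have hyq : q / 16 ≤ y := by
    rw [hy, mul_div_assoc', div_le_div_iff₀ (by norm_num) hL]
    nlinarith [h.log_le_mul_natLog]
  have hy0 : 0 < y := lt_of_lt_of_le (by linarith) hyq
  calc _ ≤ (y + Nat.log B n ^ 2 * (1 / L * (q ^ 2 / L))) / y ^ 2 :=
        (le_div_iff₀ (by positivity)).2 hmoment
    _ = 1 / y + 1 / q ^ 2 := by
        have hK : (Nat.log B n : ℝ) ≠ 0 := left_ne_zero_of_mul hy0.ne'
        rw [hy]
        field_simp
    _ ≤ 1 / (q / 16) + 1 / q := by gcongr; nlinarith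
    _ = 17 / q := by
        field_simp
        norm_num

lemma exists_log_le_mul_cube_le (h : IsScale n q) :
    ∃ R : ℕ, Real.log n ≤ R * (q : ℝ) ^ 3 ∧ R * (q : ℝ) ^ 3 ≤ 2 * Real.log n := by
  have hq := h.eight_le_cast
  have hfloor : (⌊Real.log n / (q : ℝ) ^ 3⌋₊ : ℝ) ≤ Real.log n / (q : ℝ) ^ 3 :=
    Nat.floor_le (div_nonneg h.log_pos.le (by positivity))
  refine ⟨⌊Real.log n / (q : ℝ) ^ 3⌋₊ + 1, ?_, ?_⟩
  · rw [← div_le_iff₀ (by positivity), Nat.cast_succ]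
    exact (Nat.lt_floor_add_one _).le
  · rw [le_div_iff₀ (by positivity)] at hfloor
    push_cast
    linarith [h.pow_le_log (k := 3) (by norm_num)]

lemma mul_edge_le {R : ℕ} (h : IsScale n q) (hR : R * (q : ℝ) ^ 3 ≤ 2 * Real.log n) :
    (q ^ 3 + 1) * (q ^ 10 + R * q ^ 3 + 2 * q ^ 3) ≤ n := by
  have hq := h.eight_le_cast
  have hL := h.log_pos
  have hsucc : (q : ℝ) ^ 3 + 1 ≤ Real.log n := by
    refine le_trans ?_ (h.pow_le_log (k := 4) (by norm_num))
    nlinarith [one_le_pow₀ (n := 3) (show (1 : ℝ) ≤ q by linarith)]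
  have hcast : ((q : ℝ) ^ 3 + 1) * (q ^ 10 + R * q ^ 3 + 2 * q ^ 3) ≤ n :=
    calc _ ≤ Real.log n * (Real.log n + 2 * Real.log n + 2 * Real.log n) := by
          gcongr
          exacts [h.pow_le_log (by norm_num), h.pow_le_log (by norm_num)]
      _ ≤ 6 * Real.log n ^ 2 := by nlinarith
      _ ≤ n := h.six_mul_log_sq_le
  exact_mod_cast hcast

lemma edge_bound_le {R : ℕ} (h : IsScale n q) (hR : R * (q : ℝ) ^ 3 ≤ 2 * Real.log n) :
    (q ^ 10 : ℕ) * ((q : ℝ) ^ 2 / Real.log n)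
        + R * ((1 + Real.exp 4) * (q ^ 2 / Real.log n)) ≤ (3 + 2 * Real.exp 4) / q := by
  have hq := h.eight_le_cast
  have hsingles : (q ^ 10 : ℕ) * ((q : ℝ) ^ 2 / Real.log n) ≤ 1 / q := by
    push_cast
    rw [mul_div_assoc', div_le_div_iff₀ h.log_pos (by positivity)]
    linarith [h.pow_le_log (k := 13) (by norm_num)]
  have hblocks : R * ((q : ℝ) ^ 2 / Real.log n) ≤ 2 / q := by
    rw [mul_div_assoc', div_le_div_iff₀ h.log_pos (by positivity)]
    linarith
  calc _ = (q ^ 10 : ℕ) * ((q : ℝ) ^ 2 / Real.log n)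
        + (1 + Real.exp 4) * (R * (q ^ 2 / Real.log n)) := by ring
    _ ≤ 1 / q + (1 + Real.exp 4) * (2 / q) := by gcongr
    _ = (3 + 2 * Real.exp 4) / q := by ring

theorem exists_nullMeasure_real_lowPValue_le (h : IsScale n q) :
    ∃ m : ℕ, Real.log n ≤ m ∧
      (nullMeasure n).real (lowPValue n (q ^ 2 / Real.log n) (Icc 1 m))
        ≤ (3 + 2 * Real.exp 4) / q ∧
      (nullMeasure n).real (lowPValue n (q ^ 2 / Real.log n) (Ioc (n - m) n))
        ≤ (3 + 2 * Real.exp 4) / q := by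
  obtain ⟨R, hLR, hRL⟩ := h.exists_log_le_mul_cube_le
  have hq := h.eight_le_cast
  have hb : 8 ≤ q ^ 3 := h.eight_le.trans (Nat.le_self_pow three_ne_zero q)
  have hm : (q ^ 3) ^ 2 ≤ q ^ 10 := by
    rw [← pow_mul]
    exact Nat.pow_le_pow_right (by linarith [h.eight_le]) (by norm_num)
  have hn := h.mul_edge_le hRL
  have he : Real.exp (-((q ^ 10 : ℕ) / (q ^ 3 : ℕ) ^ 3)) < (q : ℝ) ^ 2 / Real.log n := by
    convert h.exp_neg_lt_threshold using 3
    push_cast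
    field_simp
  have he1 : (q : ℝ) ^ 2 / Real.log n ≤ 1 := by linarith [h.threshold_lt_half]
  refine ⟨q ^ 10 + R * q ^ 3, ?_, ?_, ?_⟩
  · push_cast
    exact hLR.trans (le_add_of_nonneg_left (by positivity))
  · have hleft := (Nat.mul_le_mul_right _ (Nat.le_succ _)).trans hn
    exact (nullMeasure_real_lowPValue_left_le hb hm hleft he he1).trans (h.edge_bound_le hRL)
  · have hright := (Nat.mul_le_mul_left _ (Nat.le_add_right _ _)).trans hn
    exact (nullMeasure_real_lowPValue_right_le hb hm hright he he1).trans (h.edge_bound_le hRL)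

end IsScale

section Localization

variable {n : ℕ}

/-- The event that `M_n^+ ≤ e` while every index with p-value at most `e` has at least `L` indices
on either side. -/
def centralMinimum (n : ℕ) (L e : ℝ) : Set (Fin n → ℝ) :=
  {u | u ∈ Icc 0 1 ∧ MnPlus u ≤ e ∧
    ∀ i : Fin n, pOrd u i ≤ e → L ≤ (i : ℕ) ∧ L ≤ (i.rev : ℕ)}

lemma le_rank_and_rank_le {u : Fin n → ℝ} {L e : ℝ} (hu : u ∈ centralMinimum n L e)
    (hu' : 1 - u ∈ centralMinimum n L e) {i : Fin n} (hi : min (pOrd u i) (1 - pOrd u i) ≤ e) :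
    L ≤ (i : ℕ) + 1 ∧ ((i : ℕ) + 1 : ℝ) ≤ n - L := by
  have hcentral : L ≤ (i : ℕ) ∧ L ≤ (i.rev : ℕ) := by
    rcases min_le_iff.1 hi with h | h
    · exact hu.2.2 i h
    · have hrev := hu'.2.2 i.rev (by rwa [pOrd_one_sub hu.1, Fin.rev_rev])
      rwa [Fin.rev_rev, and_comm] at hrev
  have hsum : ((i.rev : ℕ) : ℝ) + ((i : ℕ) + 1) = n := by
    exact_mod_cast (Fin.val_rev i ▸ Nat.sub_add_cancel i.isLt)
  constructor <;> linarith [hcentral.1, hcentral.2]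

lemma compl_centralMinimum_subset {m : ℕ} {L : ℝ} (hL : L ≤ m) (e : ℝ) :
    (centralMinimum n L e)ᶜ ⊆ (Icc 0 1)ᶜ ∪ {u | u ∈ Icc 0 1 ∧ e < MnPlus u} ∪
      lowPValue n e (Icc 1 m) ∪ lowPValue n e (Ioc (n - m) n) := by
  intro u
  contrapose!
  simp only [mem_union, not_or, notMem_compl_iff]
  rintro ⟨⟨⟨hu, hM⟩, hleft⟩, hright⟩
  refine ⟨hu, not_lt.1 fun h => hM ⟨hu, h⟩, fun i hp => ⟨hL.trans ?_, hL.trans ?_⟩⟩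
  · by_contra! hi
    exact hleft ⟨hu, i, ⟨by omega, Nat.cast_lt.1 hi⟩, hp⟩
  · by_contra! hi
    have hi' : (i.rev : ℕ) < m := Nat.cast_lt.1 hi
    rw [Fin.val_rev] at hi'
    exact hright ⟨hu, i, ⟨by omega, i.isLt⟩, hp⟩

lemma nullMeasure_real_compl_Icc : (nullMeasure n).real (Icc 0 1)ᶜ = 0 := by
  rw [nullMeasure_eq_restrict, measureReal_restrict_apply measurableSet_Icc.compl,
    compl_inter_self, measureReal_empty]

lemma IsScale.nullMeasure_real_compl_centralMinimum_le {q : ℕ} (h : IsScale n q) :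
    (nullMeasure n).real (centralMinimum n (Real.log n) (q ^ 2 / Real.log n))ᶜ
      ≤ (23 + 4 * Real.exp 4) / q := by
  obtain ⟨m, hm, hleft, hright⟩ := h.exists_nullMeasure_real_lowPValue_le
  calc _ ≤ 0 + 17 / q + (3 + 2 * Real.exp 4) / q + (3 + 2 * Real.exp 4) / q :=
        (measureReal_mono (compl_centralMinimum_subset hm _)).trans <|
          (measureReal_union_le _ _).trans <| add_le_add ((measureReal_union_le _ _).trans <|
            add_le_add ((measureReal_union_le _ _).trans <|
              add_le_add nullMeasure_real_compl_Icc.le h.nullMeasure_real_lt_mnPlus_le) hleft)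
            hright
    _ = (23 + 4 * Real.exp 4) / q := by ring

/-- The scale `⌈log log n⌉` at which all estimates are made. -/
def scale (n : ℕ) : ℕ := ⌈Real.log (Real.log n)⌉₊

lemma tendsto_scale : Tendsto scale atTop atTop :=
  tendsto_nat_ceil_atTop.comp <| Real.tendsto_log_atTop.comp <|
    Real.tendsto_log_atTop.comp tendsto_natCast_atTop_atTop

lemma eventually_isScale : ∀ᶠ n in atTop, IsScale n (scale n) := by
  have hpow : ∀ᶠ n in atTop, (scale n : ℝ) ^ 20 * Real.exp (-scale n) < Real.exp (-1) :=
    ((Real.tendsto_pow_mul_exp_neg_atTop_nhds_zero 20).comp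
      (tendsto_natCast_atTop_atTop.comp tendsto_scale)).eventually_lt_const (Real.exp_pos _)
  have hlog : ∀ᶠ n : ℕ in atTop, 1 ≤ Real.log n :=
    (Real.tendsto_log_atTop.comp tendsto_natCast_atTop_atTop).eventually_ge_atTop 1
  filter_upwards [tendsto_scale.eventually_ge_atTop 8, hpow, hlog] with n hq hpow hlog
  have hL : 0 < Real.log n := by linarith
  refine ⟨hq, ?_, (Real.log_le_iff_le_exp hL).1 (Nat.le_ceil _)⟩
  have hceil : (scale n : ℝ) - 1 ≤ Real.log (Real.log n) := by
    linarith [show (scale n : ℝ) < _ from Nat.ceil_lt_add_one (Real.log_nonneg hlog)]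
  rw [Real.exp_neg, ← div_eq_mul_inv, div_lt_iff₀ (Real.exp_pos _), ← Real.exp_add] at hpow
  calc (scale n : ℝ) ^ 20 ≤ Real.exp (-1 + scale n) := hpow.le
    _ = Real.exp (scale n - 1) := by rw [neg_add_eq_sub]
    _ ≤ Real.log n := (Real.le_log_iff_exp_le hL).1 hceil

theorem tendsto_nullMeasure_real_compl_centralMinimum :
    Tendsto (fun n : ℕ => (nullMeasure n).real
      (centralMinimum n (Real.log n) (scale n ^ 2 / Real.log n))ᶜ) atTop (nhds 0) :=
  squeeze_zero' (Eventually.of_forall fun _ => measureReal_nonneg)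
    (eventually_isScale.mono fun _ h => h.nullMeasure_real_compl_centralMinimum_le)
    ((tendsto_natCast_atTop_atTop.comp tendsto_scale).const_div_atTop _)

lemma one_sub_two_mul_nullMeasure_real_compl_le {A S : Set (Fin n → ℝ)}
    (hS : ∀ u ∈ A, 1 - u ∈ A → u ∈ S) :
    1 - 2 * (nullMeasure n).real Aᶜ ≤ (nullMeasure n).real S := by
  have hreflect : (nullMeasure n).real {u | 1 - u ∈ Aᶜ} = (nullMeasure n).real Aᶜ :=
    congrArg ENNReal.toReal ((measurePreserving_subLeft_one n).measure_preimage_equiv Aᶜ)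
  have hcover : univ ⊆ S ∪ (Aᶜ ∪ {u | 1 - u ∈ Aᶜ}) := fun u _ => by
    by_cases hu : u ∈ A
    · by_cases hu' : 1 - u ∈ A
      · exact .inl (hS u hu hu')
      · exact .inr (.inr hu')
    · exact .inr (.inl hu)
  have hbound := (measureReal_mono (μ := nullMeasure n) hcover).trans
    ((measureReal_union_le _ _).trans (add_le_add_right (measureReal_union_le _ _) _))
  rw [probReal_univ, hreflect] at hbound
  linarith

theorem tendsto_nullMeasure_real_of_centralMinimum {S : ∀ n, Set (Fin n → ℝ)}
    (hS : ∀ n, ∀ e : ℝ, ∀ u ∈ centralMinimum n (Real.log n) e,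
      1 - u ∈ centralMinimum n (Real.log n) e → u ∈ S n) :
    Tendsto (fun n => (nullMeasure n).real (S n)) atTop (nhds 1) := by
  refine tendsto_of_tendsto_of_tendsto_of_le_of_le ?_ tendsto_const_nhds
    (fun n => one_sub_two_mul_nullMeasure_real_compl_le (hS n (scale n ^ 2 / Real.log n)))
    fun n => measureReal_le_one
  simpa using (tendsto_nullMeasure_real_compl_centralMinimum.const_mul 2).const_sub 1

end Localization

end BerkJones

end

theorem berk_jones_argmin_location :
    Filter.Tendsto (fun n : ℕ =>
        ((nullMeasure n) {u | ∀ i : Fin n, pOrd u i = MnPlus u →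
          Real.log n ≤ ((i : ℕ) + 1 : ℝ) ∧ ((i : ℕ) + 1 : ℝ) ≤ n - Real.log n}).toReal)
      Filter.atTop (nhds 1) ∧
    Filter.Tendsto (fun n : ℕ =>
        ((nullMeasure n) {u | ∀ i : Fin n, 1 - pOrd u i = MnMinus u →
          Real.log n ≤ ((i : ℕ) + 1 : ℝ) ∧ ((i : ℕ) + 1 : ℝ) ≤ n - Real.log n}).toReal)
      Filter.atTop (nhds 1) ∧
    Filter.Tendsto (fun n : ℕ =>
        ((nullMeasure n) {u | ∀ i : Fin n, min (pOrd u i) (1 - pOrd u i) = Mn u →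
          Real.log n ≤ ((i : ℕ) + 1 : ℝ) ∧ ((i : ℕ) + 1 : ℝ) ≤ n - Real.log n}).toReal)
      Filter.atTop (nhds 1) := by
  open BerkJones in
  refine ⟨tendsto_nullMeasure_real_of_centralMinimum fun n e u hu hu' i hi => ?_,
    tendsto_nullMeasure_real_of_centralMinimum fun n e u hu hu' i hi => ?_,
    tendsto_nullMeasure_real_of_centralMinimum fun n e u hu hu' i hi => ?_⟩
  · exact le_rank_and_rank_le hu hu' ((min_le_left _ _).trans (hi.trans_le hu.2.1))
  · have hminus : MnMinus u ≤ e := mnPlus_one_sub hu.1 ▸ hu'.2.1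
    exact le_rank_and_rank_le hu hu' ((min_le_right _ _).trans (hi.trans_le hminus))
  · exact le_rank_and_rank_le hu hu' (hi.trans_le ((min_le_left _ _).trans hu.2.1))
end

section
/- Let U_1, ..., U_n be i.i.d. U[0,1], let i_* = argmin_{1 ≤ i ≤ n} p_{(i)}, let μ and σ² be the mean and variance of a Beta(i_*, n - i_* + 1) random variable, and set τ = (μ - U_{(i_*)})/σ. Then for every fixed ε > 0, P( M_n^+ > (1-ε)/(√(2π) τ) · e^{-τ²/2} ) → 1 as n → ∞. -/
open MeasureTheory Filter Set

/-- Mean of the Beta(a,b) distribution. -/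
noncomputable def betaMean (a b : ℝ) : ℝ := a / (a + b)

/-- Standard deviation of the Beta(a,b) distribution. -/
noncomputable def betaSD (a b : ℝ) : ℝ := Real.sqrt (a * b / ((a + b)^2 * (a + b + 1)))

/-!
The statistic `M_n^+` tends to `0` in probability. Indeed, by Chernoff's bound, `M_n^+ > d` forces
the empirical counts at all levels `w ^ 2 / n` to exceed their means by at most `c * w`, with `c`
depending only on `d`. Along ranks `θ, θ ^ 2, θ ^ 4, …` this makes small the likelihood ratios of
the exponential tiltings of the sample on the corresponding disjoint intervals. Disjointness makes
these ratios pairwise non-positively correlated, so that a second moment argument shows that they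
are unlikely to be all small.

Each `p_(i)` is stochastically no smaller than a uniform variable, so a rank attaining `M_n^+` is
unlikely to be within bounded distance of an end of the sample. At such a deep rank `i_*`, whose
distance to the nearer end is `m`, a Chernoff bound for the Beta distribution and a union bound give
`τ ≤ √(16 log m)`. In this range of `τ` Stirling's formula shows that the standardized Beta density
is at least `1 - o(1)` times the normal density, uniformly as `m → ∞`, and integrating it up to
`-τ` gives `M_n^+ > (1 - ε) φ(τ) / τ` as soon as `τ` is large. Finally `τ` is large because a
bounded `τ` would keep `M_n^+` away from `0`.
-/

open Polynomial

/-- The probability `P(Bin(n, x) ≥ m)`, as a polynomial in the success probability `x`. -/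
noncomputable def binomialTail (n m : ℕ) : ℝ[X] :=
  ∑ j ∈ Finset.Ico m (n + 1), bernsteinPolynomial ℝ n j

lemma eval_bernsteinPolynomial (n j : ℕ) (x : ℝ) :
    (bernsteinPolynomial ℝ n j).eval x = n.choose j * x ^ j * (1 - x) ^ (n - j) := by
  simp [bernsteinPolynomial]

lemma eval_bernsteinPolynomial_nonneg (n j : ℕ) {x : ℝ} (hx : x ∈ Icc (0 : ℝ) 1) :
    0 ≤ (bernsteinPolynomial ℝ n j).eval x := by
  have h0 := hx.1
  have h1 := sub_nonneg.2 hx.2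
  rw [eval_bernsteinPolynomial]
  positivity

lemma derivative_binomialTail_succ {n m : ℕ} (h : m ≤ n) :
    derivative (binomialTail (n + 1) (m + 1)) = (n + 1) * bernsteinPolynomial ℝ n m := by
  have telescope := Finset.sum_Ico_sub (bernsteinPolynomial ℝ n) (Nat.le_succ_of_le h)
  rw [Nat.succ_eq_add_one, bernsteinPolynomial.eq_zero_of_lt ℝ n.lt_succ_self] at telescope
  rw [binomialTail, derivative_sum, ← Finset.sum_Ico_add']
  simp only [bernsteinPolynomial.derivative_succ, Nat.cast_add_one, Nat.add_sub_cancel]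
  rw [← Finset.mul_sum, ← neg_inj, ← mul_neg, ← Finset.sum_neg_distrib]
  simp only [neg_sub, telescope, zero_sub, mul_neg]

lemma eval_binomialTail_zero {n m : ℕ} (hm : 0 < m) : (binomialTail n m).eval 0 = 0 := by
  rw [binomialTail, eval_finsetSum]
  refine Finset.sum_eq_zero fun j hj => ?_
  rw [bernsteinPolynomial.eval_at_0, if_neg (hm.trans_le (Finset.mem_Ico.1 hj).1).ne']

lemma eval_binomialTail_one {n m : ℕ} (hm : m ≤ n) : (binomialTail n m).eval 1 = 1 := by
  simp [binomialTail, eval_finsetSum, bernsteinPolynomial.eval_at_1, hm]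

lemma eval_binomialTail_nonneg (n m : ℕ) {x : ℝ} (hx : x ∈ Icc (0 : ℝ) 1) :
    0 ≤ (binomialTail n m).eval x := by
  rw [binomialTail, eval_finsetSum]
  exact Finset.sum_nonneg fun j _ => eval_bernsteinPolynomial_nonneg n j hx

lemma strictMonoOn_eval_binomialTail_succ {n m : ℕ} (h : m ≤ n) :
    StrictMonoOn (fun x => (binomialTail (n + 1) (m + 1)).eval x) (Icc 0 1) := by
  refine strictMonoOn_of_deriv_pos (convex_Icc 0 1) (Polynomial.continuousOn _) fun x hx => ?_
  rw [interior_Icc, mem_Ioo] at hx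
  have hx0 := hx.1
  have hx1 := sub_pos.2 hx.2
  have hchoose := Nat.choose_pos h
  simp only [Polynomial.deriv, derivative_binomialTail_succ h, eval_mul, eval_add, eval_natCast,
    eval_one, eval_bernsteinPolynomial]
  positivity

lemma betaPDF_natCast_succ (i k : ℕ) (x : ℝ) :
    betaPDF (i + 1) (k + 1) x = (i + k + 1) * (bernsteinPolynomial ℝ (i + k) i).eval x := by
  have hchoose : ((i + k).choose i : ℝ) = (i + k).factorial / (i.factorial * k.factorial) :=
    Nat.cast_add_choose ℝ
  have hgamma : Real.Gamma (i + 1 + (k + 1)) = (i + k + 1) * (i + k).factorial := by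
    have h := Real.Gamma_nat_eq_factorial (i + k + 1)
    rw [Nat.factorial_succ] at h
    push_cast at h
    rwa [← add_assoc, add_right_comm (i : ℝ) 1]
  rw [betaPDF, eval_bernsteinPolynomial, hchoose, hgamma, Real.Gamma_nat_eq_factorial,
    Real.Gamma_nat_eq_factorial, add_sub_cancel_right, add_sub_cancel_right, Real.rpow_natCast,
    Real.rpow_natCast, Nat.add_sub_cancel_left]
  field_simp

lemma hasDerivAt_eval_binomialTail (i k : ℕ) (x : ℝ) :
    HasDerivAt (fun t => (binomialTail (i + k + 1) (i + 1)).eval t) (betaPDF (i + 1) (k + 1) x)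
      x := by
  have h := (binomialTail (i + k + 1) (i + 1)).hasDerivAt x
  rw [derivative_binomialTail_succ (Nat.le_add_right i k)] at h
  simpa [betaPDF_natCast_succ] using h

lemma regIncBeta_natCast_succ (i k : ℕ) {x : ℝ} (hx : 0 ≤ x) :
    regIncBeta (i + 1) (k + 1) x = (binomialTail (i + k + 1) (i + 1)).eval x := by
  have hcont : Continuous fun t => betaPDF (i + 1) (k + 1) t := by
    simp only [betaPDF_natCast_succ]
    fun_prop
  rw [regIncBeta, ← intervalIntegral.integral_of_le hx,
    intervalIntegral.integral_eq_sub_of_hasDerivAt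
      (fun t _ => hasDerivAt_eval_binomialTail i k t) (hcont.intervalIntegrable 0 x),
    eval_binomialTail_zero i.succ_pos, sub_zero]

lemma sum_pow_mul_eval_bernsteinPolynomial (n : ℕ) (x z : ℝ) :
    ∑ j ∈ Finset.range (n + 1), z ^ j * (bernsteinPolynomial ℝ n j).eval x =
      (1 - x + x * z) ^ n := by
  rw [add_comm (1 - x), add_pow]
  refine Finset.sum_congr rfl fun j _ => ?_
  rw [eval_bernsteinPolynomial, mul_pow]
  ring

lemma pow_mul_eval_binomialTail_le (n m : ℕ) {x z : ℝ} (hx : x ∈ Icc (0 : ℝ) 1) (hz : 1 ≤ z) :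
    z ^ m * (binomialTail n m).eval x ≤ (1 - x + x * z) ^ n := by
  rw [binomialTail, eval_finsetSum, Finset.mul_sum, ← sum_pow_mul_eval_bernsteinPolynomial]
  have hnonneg (j : ℕ) := eval_bernsteinPolynomial_nonneg n j hx
  calc ∑ j ∈ Finset.Ico m (n + 1), z ^ m * (bernsteinPolynomial ℝ n j).eval x
      ≤ ∑ j ∈ Finset.Ico m (n + 1), z ^ j * (bernsteinPolynomial ℝ n j).eval x :=
        Finset.sum_le_sum fun j hj => mul_le_mul_of_nonneg_right
          (pow_le_pow_right₀ hz (Finset.mem_Ico.1 hj).1) (hnonneg j)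
    _ ≤ ∑ j ∈ Finset.range (n + 1), z ^ j * (bernsteinPolynomial ℝ n j).eval x := by
        refine Finset.sum_le_sum_of_subset_of_nonneg ?_
          fun j _ _ => mul_nonneg (pow_nonneg (zero_le_one.trans hz) j) (hnonneg j)
        rw [Finset.range_eq_Ico]
        exact Finset.Ico_subset_Ico_left m.zero_le

lemma eval_binomialTail_le_exp (n m : ℕ) {x t : ℝ} (hx : x ∈ Icc (0 : ℝ) 1) (ht : 0 ≤ t) :
    (binomialTail n m).eval x ≤ Real.exp (n * x * (Real.exp t - 1) - m * t) := by
  have hmgf : (1 - x + x * Real.exp t) ^ n ≤ Real.exp (n * x * (Real.exp t - 1)) := by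
    have hbase : 0 ≤ 1 - x + x * Real.exp t :=
      add_nonneg (sub_nonneg.2 hx.2) (mul_nonneg hx.1 (Real.exp_nonneg t))
    have hle := Real.add_one_le_exp (x * (Real.exp t - 1))
    calc (1 - x + x * Real.exp t) ^ n ≤ Real.exp (x * (Real.exp t - 1)) ^ n :=
          pow_le_pow_left₀ hbase (by linarith) n
      _ = Real.exp (n * x * (Real.exp t - 1)) := by rw [← Real.exp_nat_mul, mul_assoc]
  rw [Real.exp_sub, le_div_iff₀ (Real.exp_pos _), mul_comm, Real.exp_nat_mul]
  exact (pow_mul_eval_binomialTail_le n m hx (Real.one_le_exp ht)).trans hmgf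

/-- Here `w ^ 2 / n` is the level at which a binomial count has mean `w ^ 2` and standard deviation
about `w`. -/
lemma eval_binomialTail_le_exp_neg_sq {n m : ℕ} {w c : ℝ} (hw : 0 < w) (hc : 0 ≤ c)
    (hcw : c ≤ 2 * w) (hwn : w ^ 2 ≤ n) (hm : w ^ 2 + c * w ≤ m) :
    (binomialTail n m).eval (w ^ 2 / n) ≤ Real.exp (-c ^ 2 / 4) := by
  have hn : (0 : ℝ) < n := (by positivity : (0 : ℝ) < w ^ 2).trans_le hwn
  have hx : w ^ 2 / n ∈ Icc (0 : ℝ) 1 := ⟨by positivity, (div_le_one hn).2 hwn⟩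
  set t := c / (2 * w) with ht_def
  have ht : 0 ≤ t := by positivity
  have hct : c = 2 * w * t := by
    rw [ht_def]
    field_simp
  have ht1 : |t| ≤ 1 := by
    rw [abs_of_nonneg ht]
    exact (div_le_one (by positivity)).2 hcw
  have hexp : Real.exp t - 1 ≤ t + t ^ 2 := by
    linarith [le_of_abs_le (Real.abs_exp_sub_one_sub_id_le ht1)]
  refine (eval_binomialTail_le_exp n m hx ht).trans (Real.exp_le_exp.2 ?_)
  rw [mul_div_cancel₀ _ hn.ne', hct]
  rw [hct] at hm
  nlinarith [mul_le_mul_of_nonneg_left hexp (sq_nonneg w), mul_le_mul_of_nonneg_right hm ht]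

section SampleCount

variable {ι Ω : Type*}

/-- The number of observations of the sample `u` that fall in `s`. -/
noncomputable def sampleCount (s : Set Ω) (u : ι → Ω) : ℕ := {j | u j ∈ s}.ncard

variable {s : Set Ω}

lemma sampleCount_mono [Finite ι] {t : Set Ω} (h : s ⊆ t) (u : ι → Ω) :
    sampleCount s u ≤ sampleCount t u :=
  Set.ncard_le_ncard fun _ hj => h hj

lemma sampleCount_le_card [Fintype ι] (s : Set Ω) (u : ι → Ω) :
    sampleCount s u ≤ Fintype.card ι := by
  rw [← Nat.card_eq_fintype_card, ← Set.ncard_univ]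
  exact Set.ncard_le_ncard (subset_univ _)

variable [MeasurableSpace Ω] {μ : Measure Ω} [IsProbabilityMeasure μ]

lemma map_mem_eq_bernoulliMeasure (hs : MeasurableSet s) :
    μ.map (fun x => x ∈ s) = ProbabilityTheory.bernoulliMeasure True False
      ⟨μ.real s, measureReal_nonneg, measureReal_le_one⟩ := by
  have hmem : Measurable fun x => x ∈ s := measurable_mem.2 hs
  refine Measure.ext_of_measureReal_singleton fun P => ?_
  rw [map_measureReal_apply hmem (measurableSet_singleton P),
    ProbabilityTheory.bernoulliMeasure_real_apply _ (measurableSet_singleton P)]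
  by_cases hP : P
  · simp [hP]
  · simpa [hP, compl_def] using probReal_compl_eq_one_sub hs

variable [Fintype ι]

lemma map_pi_setOf_mem_eq_setBernoulli (hs : MeasurableSet s) :
    (Measure.pi fun _ : ι => μ).map (fun u => {j | u j ∈ s}) =
      ProbabilityTheory.setBernoulli univ ⟨μ.real s, measureReal_nonneg, measureReal_le_one⟩ := by
  have hmem : Measurable fun x => x ∈ s := measurable_mem.2 hs
  have hset : Measurable fun p : ι → Prop => {j | p j} := by fun_prop
  have hprod : (Measure.pi fun _ : ι => μ).map (fun u j => u j ∈ s) =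
      Measure.infinitePi fun _ : ι => ProbabilityTheory.bernoulliMeasure True False
        ⟨μ.real s, measureReal_nonneg, measureReal_le_one⟩ := by
    rw [Measure.infinitePi_eq_pi, ← map_mem_eq_bernoulliMeasure hs, Measure.pi_map_pi]
    exact fun _ => hmem.aemeasurable
  calc (Measure.pi fun _ : ι => μ).map (fun u => {j | u j ∈ s})
      = ((Measure.pi fun _ : ι => μ).map fun u j => u j ∈ s).map fun p => {j | p j} :=
        (Measure.map_map hset (by fun_prop)).symm
    _ = ProbabilityTheory.setBernoulli univ
          ⟨μ.real s, measureReal_nonneg, measureReal_le_one⟩ := by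
        rw [hprod, ProbabilityTheory.setBernoulli_eq_map]
        simp only [mem_univ, ProbabilityTheory.bernoulliMeasure_def]

lemma measureReal_pi_le_sampleCount (hs : MeasurableSet s) (m : ℕ) :
    (Measure.pi fun _ : ι => μ).real {u | m ≤ sampleCount s u} =
      (binomialTail (Fintype.card ι) m).eval (μ.real s) := by
  have hmem : Measurable fun x => x ∈ s := measurable_mem.2 hs
  have hset : Measurable fun (u : ι → Ω) => {j | u j ∈ s} :=
    measurable_set_iff.2 fun j => hmem.comp (measurable_pi_apply j)
  have hcount : Measurable fun (u : ι → Ω) => sampleCount s u :=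
    (Measurable.of_discrete (f := Set.ncard)).comp hset
  have hpre : {u : ι → Ω | m ≤ sampleCount s u} =
      sampleCount s ⁻¹' (Finset.Ico m (Fintype.card ι + 1) : Finset ℕ) := by
    ext u
    simp [sampleCount_le_card]
  rw [hpre, ← sum_measureReal_preimage_singleton _ fun l _ => hcount (measurableSet_singleton l),
    binomialTail, eval_finsetSum]
  refine Finset.sum_congr rfl fun l _ => ?_
  have hlaw := ProbabilityTheory.map_ncard_setBernoulli_real_singleton
    (finite_univ (α := ι)) ⟨μ.real s, measureReal_nonneg, measureReal_le_one⟩ l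
  rw [← map_pi_setOf_mem_eq_setBernoulli hs, Measure.map_map Measurable.of_discrete hset,
    map_measureReal_apply (Measurable.of_discrete.comp hset) (measurableSet_singleton l),
    ncard_univ, Nat.card_eq_fintype_card] at hlaw
  rw [eval_bernsteinPolynomial]
  exact hlaw

end SampleCount

section OrderStatistics

variable {n : ℕ}

lemma orderStat_le_iff (u : Fin n → ℝ) (i : Fin n) (x : ℝ) :
    orderStat u i ≤ x ↔ i + 1 ≤ sampleCount (Iic x) u := by
  have hcard : sampleCount (Iic x) u = Fintype.card {j // (u ∘ Tuple.sort u) j ≤ x} := by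
    rw [sampleCount, ← Nat.card_coe_set_eq, ← Nat.card_eq_fintype_card]
    exact (Nat.card_congr ((Tuple.sort u).subtypeEquiv fun j => by simp)).symm
  rw [hcard, Nat.add_one_le_iff, Fintype.card_subtype]
  exact (Tuple.lt_card_le_iff_apply_le_of_monotone (Tuple.monotone_sort u)).symm

instance isProbabilityMeasure_uniform :
    IsProbabilityMeasure (volume.restrict (Icc (0 : ℝ) 1)) :=
  ⟨by simp⟩

instance isProbabilityMeasure_nullMeasure (n : ℕ) : IsProbabilityMeasure (nullMeasure n) := by
  unfold nullMeasure
  infer_instance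

lemma ae_nullMeasure_mem_Icc (n : ℕ) : ∀ᵐ u ∂nullMeasure n, ∀ j, u j ∈ Icc (0 : ℝ) 1 :=
  ae_all_iff.2 fun _ =>
    (Measure.quasiMeasurePreserving_eval _ _).ae (ae_restrict_mem measurableSet_Icc)

lemma uniform_real_Iic {x : ℝ} (hx : x ∈ Icc (0 : ℝ) 1) :
    (volume.restrict (Icc (0 : ℝ) 1)).real (Iic x) = x := by
  have hinter : Iic x ∩ Icc 0 1 = Icc 0 x := by
    ext t
    simp only [mem_inter_iff, mem_Iic, mem_Icc]
    exact ⟨fun h => ⟨h.2.1, h.1⟩, fun h => ⟨h.2, h.1, h.2.trans hx.2⟩⟩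
  rw [measureReal_restrict_apply measurableSet_Iic, hinter, Real.volume_real_Icc_of_le hx.1,
    sub_zero]

lemma nullMeasure_real_orderStat_le (i : Fin n) {x : ℝ} (hx : x ∈ Icc (0 : ℝ) 1) :
    (nullMeasure n).real {u | orderStat u i ≤ x} = (binomialTail n (i + 1)).eval x := by
  simp only [orderStat_le_iff]
  rw [nullMeasure, measureReal_pi_le_sampleCount measurableSet_Iic, uniform_real_Iic hx,
    Fintype.card_fin]

lemma val_add_val_rev_add_one (i : Fin n) : (i : ℕ) + i.rev + 1 = n := by
  rw [Fin.val_rev]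
  omega

lemma cast_sub_val_eq (i : Fin n) : (n : ℝ) - (i : ℕ) = (i.rev : ℕ) + 1 := by
  rw [sub_eq_iff_eq_add', ← add_assoc]
  exact_mod_cast (val_add_val_rev_add_one i).symm

lemma pOrd_eq_eval_binomialTail {u : Fin n → ℝ} (hu : ∀ j, 0 ≤ u j) (i : Fin n) :
    pOrd u i = (binomialTail n (i + 1)).eval (orderStat u i) := by
  rw [pOrd, cast_sub_val_eq, regIncBeta_natCast_succ (x := orderStat u i) _ _ (hu _),
    val_add_val_rev_add_one]

lemma MnPlus_le_pOrd (u : Fin n → ℝ) (i : Fin n) : MnPlus u ≤ pOrd u i :=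
  ciInf_le (finite_range _).bddBelow i

lemma measureReal_mono_of_ae_imp {Ω : Type*} [MeasurableSpace Ω] {μ : Measure Ω}
    [IsFiniteMeasure μ] {s t : Set Ω} (h : ∀ᵐ x ∂μ, x ∈ s → x ∈ t) : μ.real s ≤ μ.real t :=
  ENNReal.toReal_mono (measure_ne_top μ t) (measure_mono_ae h)

lemma nullMeasure_real_pOrd_le (i : Fin n) {d : ℝ} (hd : d ∈ Icc (0 : ℝ) 1) :
    (nullMeasure n).real {u | pOrd u i ≤ d} ≤ d := by
  obtain ⟨m, rfl⟩ : ∃ m, n = m + 1 := Nat.exists_eq_add_one.2 i.pos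
  set F := binomialTail (m + 1) (i + 1)
  have hi : (i : ℕ) ≤ m := Nat.lt_succ_iff.1 i.2
  obtain ⟨x, hx, hxd⟩ : ∃ x ∈ Icc (0 : ℝ) 1, F.eval x = d := by
    refine intermediate_value_Icc zero_le_one F.continuousOn ?_
    rwa [eval_binomialTail_zero i.val.succ_pos, eval_binomialTail_one (Nat.succ_le_succ hi)]
  rw [← hxd]
  refine le_of_le_of_eq ?_ (nullMeasure_real_orderStat_le i hx)
  refine measureReal_mono_of_ae_imp ?_
  filter_upwards [ae_nullMeasure_mem_Icc (m + 1)] with u hu hp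
  rw [pOrd_eq_eval_binomialTail (fun j => (hu j).1)] at hp
  exact ((strictMonoOn_eval_binomialTail_succ hi).le_iff_le (hu _) hx).1 hp

end OrderStatistics

section SecondMoment

variable {Ω κ : Type*} [MeasurableSpace Ω] {P : Measure Ω} [IsProbabilityMeasure P]

lemma variance_sum_le_card_mul {s : Finset κ} {X : κ → Ω → ℝ} {A : ℝ}
    (hX : ∀ j ∈ s, MemLp (X j) 2 P) (hmean : ∀ j ∈ s, ∫ ω, X j ω ∂P = 1)
    (hsq : ∀ j ∈ s, ∫ ω, X j ω ^ 2 ∂P ≤ A)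
    (hmul : ∀ j ∈ s, ∀ l ∈ s, j ≠ l → ∫ ω, X j ω * X l ω ∂P ≤ 1) :
    ProbabilityTheory.variance (∑ j ∈ s, X j) P ≤ s.card * A := by
  classical
  have hcov (j) (hj : j ∈ s) (l) (hl : l ∈ s) :
      ProbabilityTheory.covariance (X j) (X l) P ≤ if j = l then A else 0 := by
    rw [ProbabilityTheory.covariance_eq_sub (hX j hj) (hX l hl), hmean j hj, hmean l hl]
    simp only [Pi.mul_apply, mul_one]
    split_ifs with hjl
    · subst hjl
      simp only [← sq]
      linarith [hsq j hj]
    · linarith [hmul j hj l hl hjl]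
  rw [ProbabilityTheory.variance_sum' hX]
  calc ∑ j ∈ s, ∑ l ∈ s, ProbabilityTheory.covariance (X j) (X l) P
      ≤ ∑ j ∈ s, ∑ l ∈ s, if j = l then A else 0 :=
        Finset.sum_le_sum fun j hj => Finset.sum_le_sum fun l hl => hcov j hj l hl
    _ = s.card * A := by simp

lemma measureReal_forall_le_half_le {s : Finset κ} (hs : s.Nonempty) {X : κ → Ω → ℝ} {A : ℝ}
    (hX : ∀ j ∈ s, MemLp (X j) 2 P) (hmean : ∀ j ∈ s, ∫ ω, X j ω ∂P = 1)
    (hsq : ∀ j ∈ s, ∫ ω, X j ω ^ 2 ∂P ≤ A)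
    (hmul : ∀ j ∈ s, ∀ l ∈ s, j ≠ l → ∫ ω, X j ω * X l ω ∂P ≤ 1) :
    P.real {ω | ∀ j ∈ s, X j ω ≤ 1 / 2} ≤ 4 * A / s.card := by
  have hcard : (0 : ℝ) < s.card := by exact_mod_cast hs.card_pos
  have hsum : ∫ ω, (∑ j ∈ s, X j) ω ∂P = s.card := by
    simp only [Finset.sum_apply]
    rw [integral_finsetSum s fun j hj => (hX j hj).integrable one_le_two,
      Finset.sum_congr rfl hmean, Finset.sum_const, nsmul_one]
  have hsub : {ω | ∀ j ∈ s, X j ω ≤ 1 / 2} ⊆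
      {ω | (s.card : ℝ) / 2 ≤ |(∑ j ∈ s, X j) ω - ∫ ω, (∑ j ∈ s, X j) ω ∂P|} := by
    intro ω hω
    have hle : (∑ j ∈ s, X j) ω ≤ s.card * (1 / 2) := by
      rw [Finset.sum_apply, ← nsmul_eq_mul]
      exact Finset.sum_le_card_nsmul _ _ _ hω
    rw [mem_ofPred_eq, hsum, abs_sub_comm]
    exact le_abs.2 (Or.inl (by linarith))
  have hcheb := ProbabilityTheory.meas_ge_le_variance_div_sq (memLp_finsetSum' s hX)
    (half_pos hcard)
  calc P.real {ω | ∀ j ∈ s, X j ω ≤ 1 / 2}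
      ≤ ProbabilityTheory.variance (∑ j ∈ s, X j) P / ((s.card : ℝ) / 2) ^ 2 :=
        ENNReal.toReal_le_of_le_ofReal
          (div_nonneg (ProbabilityTheory.variance_nonneg _ _) (sq_nonneg _))
          ((measure_mono hsub).trans hcheb)
    _ ≤ s.card * A / ((s.card : ℝ) / 2) ^ 2 :=
        div_le_div_of_nonneg_right (variance_sum_le_card_mul hX hmean hsq hmul) (sq_nonneg _)
    _ = 4 * A / s.card := by
        field_simp
        norm_num

end SecondMoment

section Tilting

variable {ι Ω : Type*} [MeasurableSpace Ω] {μ : Measure Ω} {s t : Set Ω} {y z : ℝ}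

/-- The density, with respect to `μ`, of the law obtained from `μ` by multiplying the odds of `s`
by `1 + z`. -/
noncomputable def tilt (μ : Measure Ω) (z : ℝ) (s : Set Ω) (x : Ω) : ℝ :=
  (1 + z * s.indicator 1 x) / (1 + z * μ.real s)

/-- The likelihood ratio of the sample `u` between the law of density `tilt μ z s` and `μ`. -/
noncomputable def sampleTilt [Fintype ι] (μ : Measure Ω) (z : ℝ) (s : Set Ω) (u : ι → Ω) : ℝ :=
  ∏ j, tilt μ z s (u j)

lemma sampleTilt_eq [Fintype ι] (μ : Measure Ω) (z : ℝ) (s : Set Ω) (u : ι → Ω) :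
    sampleTilt μ z s u = (1 + z) ^ sampleCount s u / (1 + z * μ.real s) ^ Fintype.card ι := by
  classical
  have hfactor (j : ι) : 1 + z * s.indicator 1 (u j) = if u j ∈ s then 1 + z else 1 := by
    by_cases h : u j ∈ s <;> simp [h]
  have hcard : sampleCount s u = (Finset.univ.filter fun j => u j ∈ s).card := by
    rw [sampleCount, ← ncard_coe_finset, Finset.coe_filter_univ]
  simp only [sampleTilt, tilt, Finset.prod_div_distrib, Finset.prod_const, Finset.card_univ,
    hfactor, Finset.prod_ite, one_pow, mul_one, hcard]

lemma tilt_nonneg (hz : 0 ≤ z) (x : Ω) : 0 ≤ tilt μ z s x := by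
  have hind : 0 ≤ s.indicator (1 : Ω → ℝ) x := indicator_nonneg (fun _ _ => zero_le_one) x
  rw [tilt]
  positivity

lemma measurable_tilt (hs : MeasurableSet s) : Measurable (tilt μ z s) :=
  (((measurable_const.indicator hs).const_mul z).const_add 1).div_const _

variable [IsProbabilityMeasure μ]

lemma integral_one_add_indicator (hs : MeasurableSet s) (ht : MeasurableSet t) (y z : ℝ) :
    ∫ x, (1 + y * s.indicator 1 x + z * t.indicator 1 x) ∂μ =
      1 + y * μ.real s + z * μ.real t := by
  have hint {r : Set Ω} (hr : MeasurableSet r) (a : ℝ) :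
      Integrable (fun x => a * r.indicator 1 x) μ :=
    ((integrable_const 1).indicator hr).const_mul a
  have hadd : Integrable (fun x => 1 + y * s.indicator 1 x) μ :=
    (integrable_const 1).add (hint hs y)
  rw [integral_add hadd (hint ht z), integral_add (integrable_const 1) (hint hs y),
    integral_const_mul, integral_const_mul, integral_indicator_one hs, integral_indicator_one ht]
  simp

lemma integral_tilt (hs : MeasurableSet s) (hz : 0 ≤ z) : ∫ x, tilt μ z s x ∂μ = 1 := by
  have h := integral_one_add_indicator (μ := μ) hs hs z 0
  have hpos : 0 < 1 + z * μ.real s := by positivity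
  simp only [zero_mul, add_zero] at h
  simp only [tilt, integral_div, h, div_self hpos.ne']

lemma integral_tilt_mul_tilt_le (hs : MeasurableSet s) (ht : MeasurableSet t)
    (hst : Disjoint s t) (hy : 0 ≤ y) (hz : 0 ≤ z) :
    ∫ x, tilt μ y s x * tilt μ z t x ∂μ ≤ 1 := by
  have hmul (x : Ω) : tilt μ y s x * tilt μ z t x =
      (1 + y * s.indicator 1 x + z * t.indicator 1 x) /
        ((1 + y * μ.real s) * (1 + z * μ.real t)) := by
    rw [tilt, tilt, div_mul_div_comm]
    congr 1
    by_cases hx : x ∈ s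
    · simp [hx, hst.notMem_of_mem_left hx]
    · simp [hx]
  simp only [hmul, integral_div, integral_one_add_indicator hs ht]
  refine div_le_one_of_le₀ ?_ (by positivity)
  have hcross : 0 ≤ y * μ.real s * (z * μ.real t) := by positivity
  linarith

lemma integral_tilt_sq_le (hs : MeasurableSet s) (hz : 0 ≤ z) :
    ∫ x, tilt μ z s x ^ 2 ∂μ ≤ Real.exp (z ^ 2 * μ.real s) := by
  have hsq (x : Ω) : tilt μ z s x ^ 2 =
      (1 + 2 * z * s.indicator 1 x + z ^ 2 * s.indicator 1 x) / (1 + z * μ.real s) ^ 2 := by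
    rw [tilt, div_pow]
    congr 1
    by_cases hx : x ∈ s
    · simp only [hx, indicator_of_mem, Pi.one_apply]
      ring
    · simp [hx]
  simp only [hsq, integral_div, integral_one_add_indicator hs hs]
  refine le_trans ?_ (Real.add_one_le_exp _)
  have : 0 < 1 + z * μ.real s := by positivity
  rw [div_le_iff₀ (by positivity)]
  have hz3 : 0 ≤ z ^ 3 * μ.real s ^ 2 := by positivity
  have hz4 : 0 ≤ z ^ 4 * μ.real s ^ 3 := by positivity
  have hz2 : 0 ≤ z ^ 2 * μ.real s ^ 2 := by positivity
  nlinarith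

variable [Fintype ι]

lemma memLp_sampleTilt (hs : MeasurableSet s) (hz : 0 ≤ z) :
    MemLp (sampleTilt μ z s) 2 (Measure.pi fun _ : ι => μ) := by
  have hmeas : Measurable (sampleTilt (ι := ι) μ z s) :=
    Finset.measurable_prod _ fun j _ => (measurable_tilt hs).comp (measurable_pi_apply j)
  refine MemLp.of_bound hmeas.aestronglyMeasurable ((1 + z) ^ Fintype.card ι)
    (Eventually.of_forall fun u => ?_)
  have hnonneg : 0 ≤ sampleTilt μ z s u := Finset.prod_nonneg fun j _ => tilt_nonneg hz (u j)
  rw [Real.norm_of_nonneg hnonneg, sampleTilt_eq]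
  have hz1 : 1 ≤ 1 + z := le_add_of_nonneg_right hz
  calc (1 + z) ^ sampleCount s u / (1 + z * μ.real s) ^ Fintype.card ι
      ≤ (1 + z) ^ sampleCount s u :=
        div_le_self (by positivity) (one_le_pow₀ (le_add_of_nonneg_right (by positivity)))
    _ ≤ (1 + z) ^ Fintype.card ι := pow_le_pow_right₀ hz1 (sampleCount_le_card s u)

lemma integral_sampleTilt (hs : MeasurableSet s) (hz : 0 ≤ z) :
    ∫ u, sampleTilt μ z s u ∂Measure.pi (fun _ : ι => μ) = 1 := by
  simp only [sampleTilt]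
  rw [integral_fintype_prod_eq_pow, integral_tilt hs hz, one_pow]

lemma integral_sampleTilt_mul_sampleTilt_le (hs : MeasurableSet s) (ht : MeasurableSet t)
    (hst : Disjoint s t) (hy : 0 ≤ y) (hz : 0 ≤ z) :
    ∫ u, sampleTilt μ y s u * sampleTilt μ z t u ∂Measure.pi (fun _ : ι => μ) ≤ 1 := by
  simp only [sampleTilt, ← Finset.prod_mul_distrib]
  rw [integral_fintype_prod_eq_pow fun x => tilt μ y s x * tilt μ z t x]
  exact pow_le_one₀ (integral_nonneg fun x => mul_nonneg (tilt_nonneg hy x) (tilt_nonneg hz x))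
    (integral_tilt_mul_tilt_le hs ht hst hy hz)

lemma integral_sampleTilt_sq_le (hs : MeasurableSet s) (hz : 0 ≤ z) :
    ∫ u, sampleTilt μ z s u ^ 2 ∂Measure.pi (fun _ : ι => μ) ≤
      Real.exp (Fintype.card ι * (z ^ 2 * μ.real s)) := by
  simp only [sampleTilt, ← Finset.prod_pow]
  rw [integral_fintype_prod_eq_pow fun x => tilt μ z s x ^ 2, Real.exp_nat_mul]
  exact pow_le_pow_left₀ (integral_nonneg fun x => sq_nonneg _) (integral_tilt_sq_le hs hz) _

end Tilting

section MnPlusTendstoZero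

lemma exp_le_one_add_pow (n : ℕ) {y : ℝ} (hy : 0 ≤ y) :
    Real.exp (n * (y - y ^ 2 / 2)) ≤ (1 + y) ^ n := by
  have hlog : y - y ^ 2 / 2 ≤ Real.log (1 + y) := by
    refine le_trans ?_ (Real.le_log_one_add_of_nonneg hy)
    rw [le_div_iff₀ (by linarith)]
    nlinarith [pow_nonneg hy 3]
  rw [Real.exp_nat_mul]
  exact pow_le_pow_left₀ (Real.exp_nonneg _) ((Real.le_log_iff_exp_le (by linarith)).1 hlog) n

lemma exp_sub_one_le_two_mul {e : ℝ} (he : 0 ≤ e) (he1 : e ≤ 1) : Real.exp e - 1 ≤ 2 * e := by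
  have h := le_of_abs_le (Real.abs_exp_sub_one_sub_id_le (abs_le.2 ⟨by linarith, he1⟩))
  nlinarith

lemma tilt_exponent_le {n m : ℕ} {c θ w z : ℝ} (hθ : 2 * c + 6 ≤ θ) (hc : 0 ≤ c)
    (hθw : θ ≤ w) (hn : 2 * (θ * w) ^ 2 ≤ n) (hm : m ≤ w ^ 2 + c * w)
    (hz : θ / w + (θ / w) ^ 2 / 2 ≤ z) (hz2 : z ≤ 2 * (θ / w)) :
    m * (θ / w) - n * (z * ((w ^ 2 - w) / n) - (z * ((w ^ 2 - w) / n)) ^ 2 / 2) ≤ -1 := by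
  have hw : 0 < w := by linarith
  have hθ0 : 0 < θ := by linarith
  have hn0 : (0 : ℝ) < n := lt_of_lt_of_le (by positivity) hn
  obtain ⟨e, rfl⟩ : ∃ e, θ = e * w := ⟨θ / w, by field_simp⟩
  rw [mul_div_cancel_right₀ e hw.ne'] at *
  have he : 0 < e := pos_of_mul_pos_left (by linarith) hw.le
  have he1 : e ≤ 1 := by nlinarith
  have hmean : m * e ≤ (w ^ 2 + c * w) * e := mul_le_mul_of_nonneg_right hm he.le
  have hgain : (e + e ^ 2 / 2) * (w ^ 2 - w) ≤ z * (w ^ 2 - w) :=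
    mul_le_mul_of_nonneg_right hz (by nlinarith)
  have hquad : (z * (w ^ 2 - w)) ^ 2 / (2 * n) ≤ 1 := by
    rw [div_le_one (by positivity)]
    have hle : z * (w ^ 2 - w) ≤ 2 * (e * w) * w := by nlinarith
    have h0 : 0 ≤ z * (w ^ 2 - w) := le_trans (by nlinarith) hgain
    nlinarith
  have hexpand : n * (z * ((w ^ 2 - w) / n) - (z * ((w ^ 2 - w) / n)) ^ 2 / 2) =
      z * (w ^ 2 - w) - (z * (w ^ 2 - w)) ^ 2 / (2 * n) := by
    field_simp
  have hmain : (w ^ 2 + c * w) * e - (e + e ^ 2 / 2) * (w ^ 2 - w) ≤ -(e * w) := by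
    nlinarith
  linarith

lemma exp_pow_div_one_add_pow_le_half {n m : ℕ} {c θ w : ℝ} (hθ : 2 * c + 6 ≤ θ) (hc : 0 ≤ c)
    (hθw : θ ≤ w) (hn : 2 * (θ * w) ^ 2 ≤ n) (hm : m ≤ w ^ 2 + c * w) :
    Real.exp (θ / w) ^ m / (1 + (Real.exp (θ / w) - 1) * ((w ^ 2 - w) / n)) ^ n ≤ 1 / 2 := by
  have : 1 ≤ w := by linarith
  have he : 0 ≤ θ / w := div_nonneg (by linarith) (by linarith)
  have he1 : θ / w ≤ 1 := (div_le_one (by linarith)).2 hθw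
  set z := Real.exp (θ / w) - 1
  have hz : θ / w + (θ / w) ^ 2 / 2 ≤ z := by linarith [Real.quadratic_le_exp_of_nonneg he]
  have hz0 : 0 ≤ z := le_trans (by positivity) hz
  have hy : 0 ≤ z * ((w ^ 2 - w) / n) := by
    have hww : 0 ≤ w ^ 2 - w := by nlinarith
    positivity
  have hexponent :=
    tilt_exponent_le hθ hc hθw hn hm hz (exp_sub_one_le_two_mul he he1)
  calc Real.exp (θ / w) ^ m / (1 + z * ((w ^ 2 - w) / n)) ^ n
      ≤ Real.exp (θ / w) ^ m /
          Real.exp (n * (z * ((w ^ 2 - w) / n) - (z * ((w ^ 2 - w) / n)) ^ 2 / 2)) := by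
        gcongr
        exact exp_le_one_add_pow n hy
    _ ≤ Real.exp (-1) := by
        rw [← Real.exp_nat_mul, ← Real.exp_sub]
        exact Real.exp_le_exp.2 hexponent
    _ ≤ 1 / 2 := by
        rw [Real.exp_neg, ← one_div]
        exact one_div_le_one_div_of_le two_pos (by linarith [Real.add_one_le_exp 1])

lemma uniform_real_Ioc {a b : ℝ} (ha : 0 ≤ a) (hab : a ≤ b) (hb : b ≤ 1) :
    (volume.restrict (Icc (0 : ℝ) 1)).real (Ioc a b) = b - a := by
  have hsub : Ioc a b ⊆ Icc 0 1 := fun t ht => ⟨ha.trans ht.1.le, ht.2.trans hb⟩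
  rw [measureReal_restrict_apply measurableSet_Ioc, inter_eq_left.2 hsub,
    Real.volume_real_Ioc_of_le hab]

/-- The `j`-th interval of the second moment argument: its endpoints have consecutive ranks
`θ ^ 2 ^ j` and `(θ ^ 2 ^ j) ^ 2` on average, so that distinct intervals are disjoint. -/
noncomputable def rankInterval (n : ℕ) (θ : ℝ) (j : ℕ) : Set ℝ :=
  Ioc (θ ^ 2 ^ j / n) (θ ^ 2 ^ (j + 1) / n)

lemma measurableSet_rankInterval (n : ℕ) (θ : ℝ) (j : ℕ) :
    MeasurableSet (rankInterval n θ j) :=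
  measurableSet_Ioc

variable {n : ℕ} {θ : ℝ}

lemma pairwise_disjoint_rankInterval (n : ℕ) (hθ : 1 ≤ θ) :
    Pairwise (Function.onFun Disjoint (rankInterval n θ)) := by
  have hmono : Monotone fun j : ℕ => θ ^ 2 ^ j / n := fun j l hjl =>
    div_le_div_of_nonneg_right (pow_le_pow_right₀ hθ (Nat.pow_le_pow_right two_pos hjl))
      n.cast_nonneg
  exact hmono.pairwise_disjoint_on_Ioc_succ

lemma uniform_real_rankInterval (hθ : 1 ≤ θ) {j : ℕ} (hj : θ ^ 2 ^ (j + 1) ≤ n) :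
    (volume.restrict (Icc (0 : ℝ) 1)).real (rankInterval n θ j) =
      ((θ ^ 2 ^ j) ^ 2 - θ ^ 2 ^ j) / n := by
  have : 0 ≤ θ := zero_le_one.trans hθ
  have hle : θ ^ 2 ^ j ≤ θ ^ 2 ^ (j + 1) :=
    pow_le_pow_right₀ hθ (Nat.pow_le_pow_right two_pos j.le_succ)
  rw [rankInterval, uniform_real_Ioc (by positivity) (by gcongr)
    (div_le_one_of_le₀ hj n.cast_nonneg), sub_div, ← pow_mul, pow_succ]

lemma sampleTilt_rankInterval_le_half {c : ℝ} (hθ : 2 * c + 6 ≤ θ) (hc : 0 ≤ c) {j : ℕ}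
    (hn : 2 * (θ * θ ^ 2 ^ j) ^ 2 ≤ n) {u : Fin n → ℝ}
    (hu : sampleCount (Iic (θ ^ 2 ^ (j + 1) / n)) u ≤ (θ ^ 2 ^ j) ^ 2 + c * θ ^ 2 ^ j) :
    sampleTilt (volume.restrict (Icc (0 : ℝ) 1)) (Real.exp (θ / θ ^ 2 ^ j) - 1)
      (rankInterval n θ j) u ≤ 1 / 2 := by
  have hθ1 : 1 ≤ θ := by linarith
  have hw : θ ≤ θ ^ 2 ^ j := le_self_pow₀ hθ1 (by positivity)
  have hcount : (sampleCount (rankInterval n θ j) u : ℝ) ≤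
      (θ ^ 2 ^ j) ^ 2 + c * θ ^ 2 ^ j :=
    le_trans (by exact_mod_cast sampleCount_mono Ioc_subset_Iic_self u) hu
  have hle : θ ^ 2 ^ (j + 1) ≤ n := by
    rw [pow_succ 2 j, pow_mul]
    nlinarith [mul_le_mul_of_nonneg_right (one_le_pow₀ (n := 2) hθ1) (sq_nonneg (θ ^ 2 ^ j))]
  rw [sampleTilt_eq, uniform_real_rankInterval hθ1 hle, Fintype.card_fin, add_sub_cancel]
  exact exp_pow_div_one_add_pow_le_half hθ hc hw hn hcount

lemma integral_sampleTilt_rankInterval_sq_le (hθ : 1 ≤ θ) {j : ℕ} (hj : θ ^ 2 ^ (j + 1) ≤ n) :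
    ∫ u, sampleTilt (volume.restrict (Icc (0 : ℝ) 1)) (Real.exp (θ / θ ^ 2 ^ j) - 1)
      (rankInterval n θ j) u ^ 2 ∂nullMeasure n ≤ Real.exp (4 * θ ^ 2) := by
  set w := θ ^ 2 ^ j with hw_def
  have hw : θ ≤ w := le_self_pow₀ hθ (by positivity)
  have hw0 : 0 < w := by linarith
  have hn : (0 : ℝ) < n := lt_of_lt_of_le (by positivity) hj
  have he : 0 ≤ θ / w := by positivity
  have hz0 : 0 ≤ Real.exp (θ / w) - 1 := sub_nonneg.2 (Real.one_le_exp he)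
  have hz := exp_sub_one_le_two_mul he ((div_le_one hw0).2 hw)
  refine (integral_sampleTilt_sq_le (measurableSet_rankInterval n θ j) hz0).trans
    (Real.exp_le_exp.2 ?_)
  rw [uniform_real_rankInterval hθ hj, ← hw_def, Fintype.card_fin]
  calc n * ((Real.exp (θ / w) - 1) ^ 2 * ((w ^ 2 - w) / n))
      = (Real.exp (θ / w) - 1) ^ 2 * (w ^ 2 - w) := by field_simp
    _ ≤ (Real.exp (θ / w) - 1) ^ 2 * w ^ 2 := by
        gcongr
        exact sub_le_self _ hw0.le
    _ ≤ (2 * (θ / w)) ^ 2 * w ^ 2 := by gcongr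
    _ = 4 * θ ^ 2 := by
        field_simp
        norm_num

lemma nullMeasure_real_sampleCount_le {c : ℝ} (hθ : 2 * c + 6 ≤ θ) (hc : 0 ≤ c) {J : ℕ}
    (hJ : 0 < J) (hn : 2 * (θ * θ ^ 2 ^ J) ^ 2 ≤ n) :
    (nullMeasure n).real {u | ∀ j ∈ Finset.range J,
      sampleCount (Iic (θ ^ 2 ^ (j + 1) / n)) u ≤ (θ ^ 2 ^ j) ^ 2 + c * θ ^ 2 ^ j} ≤
      4 * Real.exp (4 * θ ^ 2) / J := by
  have hθ1 : 1 ≤ θ := by linarith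
  have hpow {j : ℕ} (hj : j ≤ J) : θ ^ 2 ^ j ≤ θ ^ 2 ^ J :=
    pow_le_pow_right₀ hθ1 (Nat.pow_le_pow_right two_pos hj)
  have hJn : θ ^ 2 ^ J ≤ n := by
    have hW : 1 ≤ θ ^ 2 ^ J := one_le_pow₀ hθ1
    have hθW : θ ^ 2 ^ J ≤ θ * θ ^ 2 ^ J := le_mul_of_one_le_left (by positivity) hθ1
    nlinarith
  have hz (j : ℕ) : 0 ≤ Real.exp (θ / θ ^ 2 ^ j) - 1 :=
    sub_nonneg.2 (Real.one_le_exp (by positivity))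
  set X : ℕ → (Fin n → ℝ) → ℝ := fun j =>
    sampleTilt (volume.restrict (Icc (0 : ℝ) 1)) (Real.exp (θ / θ ^ 2 ^ j) - 1) (rankInterval n θ j)
  have hI (j : ℕ) := measurableSet_rankInterval n θ j
  have hmoment : (nullMeasure n).real {u | ∀ j ∈ Finset.range J, X j u ≤ 1 / 2} ≤
      4 * Real.exp (4 * θ ^ 2) / (Finset.range J).card := by
    refine measureReal_forall_le_half_le (Finset.nonempty_range_iff.2 hJ.ne')
      (fun j _ => memLp_sampleTilt (hI j) (hz j)) (fun j _ => integral_sampleTilt (hI j) (hz j))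
      (fun j hj => ?_) (fun j _ l _ hjl => ?_)
    · exact integral_sampleTilt_rankInterval_sq_le hθ1
        ((hpow (Finset.mem_range.1 hj)).trans hJn)
    · exact integral_sampleTilt_mul_sampleTilt_le (hI j) (hI l)
        (pairwise_disjoint_rankInterval n hθ1 hjl) (hz j) (hz l)
  rw [Finset.card_range] at hmoment
  refine (measureReal_mono fun u hu j hj => ?_).trans hmoment
  refine sampleTilt_rankInterval_le_half hθ hc (le_trans ?_ hn) (hu j hj)
  gcongr
  · exact one_le_two
  · exact (Finset.mem_range.1 hj).le

lemma sampleCount_le_of_exp_lt_MnPlus {u : Fin n → ℝ} (hu : ∀ j, u j ∈ Icc (0 : ℝ) 1) {w c : ℝ}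
    (hw : 0 < w) (hc : 0 ≤ c) (hcw : c ≤ 2 * w) (hwn : w ^ 2 ≤ n)
    (hM : Real.exp (-c ^ 2 / 4) < MnPlus u) :
    sampleCount (Iic (w ^ 2 / n)) u ≤ w ^ 2 + c * w := by
  by_contra! hlt
  have hpos : 0 < sampleCount (Iic (w ^ 2 / n)) u := by
    have : 0 < w ^ 2 + c * w := by positivity
    exact_mod_cast this.trans hlt
  obtain ⟨m, hm⟩ := Nat.exists_eq_add_one.2 hpos
  have hmn : m < n := by
    have := sampleCount_le_card (Iic (w ^ 2 / n)) u
    rwa [hm, Fintype.card_fin] at this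
  have hx : w ^ 2 / n ∈ Icc (0 : ℝ) 1 := ⟨by positivity, div_le_one_of_le₀ hwn n.cast_nonneg⟩
  have hle : orderStat u ⟨m, hmn⟩ ≤ w ^ 2 / n := (orderStat_le_iff u ⟨m, hmn⟩ _).2 hm.ge
  have hmono : MonotoneOn (fun x => (binomialTail n (m + 1)).eval x) (Icc 0 1) := by
    obtain ⟨k, rfl⟩ := Nat.exists_eq_add_one.2 (Nat.zero_lt_of_lt hmn)
    exact (strictMonoOn_eval_binomialTail_succ (Nat.lt_succ_iff.1 hmn)).monotoneOn
  refine hM.not_ge ?_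
  calc MnPlus u ≤ pOrd u ⟨m, hmn⟩ := MnPlus_le_pOrd u _
    _ = (binomialTail n (m + 1)).eval (orderStat u ⟨m, hmn⟩) :=
        pOrd_eq_eval_binomialTail (fun j => (hu j).1) _
    _ ≤ (binomialTail n (m + 1)).eval (w ^ 2 / n) := hmono (hu _) hx hle
    _ ≤ Real.exp (-c ^ 2 / 4) := by
        refine eval_binomialTail_le_exp_neg_sq hw hc hcw hwn ?_
        rw [hm] at hlt
        exact_mod_cast hlt.le

lemma tendsto_nullMeasure_real_lt_MnPlus {d : ℝ} (hd : 0 < d) :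
    Tendsto (fun n => (nullMeasure n).real {u | d < MnPlus u}) atTop (nhds 0) := by
  set c := 2 * √|Real.log d| with hc_def
  have hc : 0 ≤ c := by positivity
  have hcd : Real.exp (-c ^ 2 / 4) ≤ d := by
    rw [hc_def, mul_pow, Real.sq_sqrt (abs_nonneg _), ← Real.le_log_iff_exp_le hd]
    linarith [neg_abs_le (Real.log d)]
  set θ := 2 * c + 6
  have hθ1 : 1 ≤ θ := by linarith
  refine Metric.tendsto_atTop.2 fun q hq => ?_
  obtain ⟨J, hJ⟩ := exists_nat_gt (4 * Real.exp (4 * θ ^ 2) / q)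
  have hJ0 : (0 : ℝ) < J := lt_of_le_of_lt (by positivity) hJ
  obtain ⟨N, hN⟩ := exists_nat_ge (2 * (θ * θ ^ 2 ^ J) ^ 2)
  refine ⟨N, fun n hn => ?_⟩
  have hNn : 2 * (θ * θ ^ 2 ^ J) ^ 2 ≤ n := hN.trans (Nat.cast_le.2 hn)
  rw [Real.dist_0_eq_abs, abs_of_nonneg measureReal_nonneg]
  refine lt_of_le_of_lt ?_ ((div_lt_comm₀ hq hJ0).1 hJ)
  refine le_trans (measureReal_mono_of_ae_imp ?_)
    (nullMeasure_real_sampleCount_le le_rfl hc (Nat.cast_pos.1 hJ0) hNn)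
  filter_upwards [ae_nullMeasure_mem_Icc n] with u hu hM j hj
  have hw : θ ≤ θ ^ 2 ^ j := le_self_pow₀ hθ1 (by positivity)
  rw [pow_succ 2 j, pow_mul]
  refine sampleCount_le_of_exp_lt_MnPlus hu (by positivity) hc (by linarith) ?_ (hcd.trans_lt hM)
  calc (θ ^ 2 ^ j) ^ 2 ≤ (θ ^ 2 ^ J) ^ 2 := by
        gcongr
        · exact one_le_two
        · exact (Finset.mem_range.1 hj).le
    _ ≤ (θ * θ ^ 2 ^ J) ^ 2 := by
        gcongr
        exact le_mul_of_one_le_left (by positivity) hθ1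
    _ ≤ n := by linarith [sq_nonneg (θ * θ ^ 2 ^ J)]

end MnPlusTendstoZero

section BetaPoint

/-- Coefficient of variation of the Beta(a,b) distribution: the change in the ratio of `x`
to the mean when `x` moves by one standard deviation. -/
noncomputable def betaCV (a b : ℝ) : ℝ := betaSD a b / betaMean a b

/-- The point `s` standard deviations below the mean of the Beta(a,b) distribution. -/
noncomputable def betaPoint (a b s : ℝ) : ℝ := betaMean a b - s * betaSD a b

/-- Logarithm of the ratio of `x ^ a * (1 - x) ^ b` to its maximal value, attained at the mean of
the Beta(a,b) distribution. -/
noncomputable def betaExponent (a b x : ℝ) : ℝ :=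
  a * Real.log (x / betaMean a b) + b * Real.log ((1 - x) / (1 - betaMean a b))

variable {a b : ℝ}

lemma one_sub_betaMean (ha : 0 < a) (hb : 0 < b) : 1 - betaMean a b = betaMean b a := by
  unfold betaMean
  field_simp
  ring

lemma betaMean_pos (ha : 0 < a) (hb : 0 < b) : 0 < betaMean a b := by
  unfold betaMean
  positivity

lemma betaSD_comm (a b : ℝ) : betaSD a b = betaSD b a := by
  rw [betaSD, betaSD, mul_comm a b, add_comm a b]

lemma betaSD_pos (ha : 0 < a) (hb : 0 < b) : 0 < betaSD a b := by
  unfold betaSD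
  positivity

lemma betaCV_pos (ha : 0 < a) (hb : 0 < b) : 0 < betaCV a b :=
  div_pos (betaSD_pos ha hb) (betaMean_pos ha hb)

lemma mul_betaCV_comm (ha : 0 < a) (hb : 0 < b) : a * betaCV a b = b * betaCV b a := by
  rw [betaCV, betaCV, betaSD_comm b a, betaMean, betaMean]
  field_simp
  ring

lemma mul_betaCV_sq (ha : 0 < a) (hb : 0 < b) : a * betaCV a b ^ 2 = b / (a + b + 1) := by
  rw [betaCV, div_pow, betaSD, Real.sq_sqrt (by positivity), betaMean]
  field_simp

lemma betaCV_le_one_div_sqrt (ha : 0 < a) (hb : 0 < b) : betaCV a b ≤ 1 / √a := by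
  rw [← abs_of_pos (betaCV_pos ha hb), one_div, ← Real.sqrt_inv]
  refine Real.abs_le_sqrt ?_
  rw [← one_div, le_div_iff₀' ha, mul_betaCV_sq ha hb, div_le_one (by positivity)]
  linarith

lemma betaPoint_div_betaMean (ha : 0 < a) (hb : 0 < b) (s : ℝ) :
    betaPoint a b s / betaMean a b = 1 - s * betaCV a b := by
  rw [betaPoint, sub_div, div_self (betaMean_pos ha hb).ne', mul_div_assoc, betaCV]

lemma one_sub_betaPoint_div_one_sub_betaMean (ha : 0 < a) (hb : 0 < b) (s : ℝ) :
    (1 - betaPoint a b s) / (1 - betaMean a b) = 1 + s * betaCV b a := by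
  rw [betaPoint, sub_sub_eq_add_sub, add_sub_right_comm, one_sub_betaMean ha hb, add_div,
    div_self (betaMean_pos hb ha).ne', mul_div_assoc, betaCV, betaSD_comm]

lemma betaPoint_pos (ha : 0 < a) (hb : 0 < b) {s : ℝ} (hs : s * betaCV a b < 1) :
    0 < betaPoint a b s := by
  have h := betaPoint_div_betaMean ha hb s
  rw [div_eq_iff (betaMean_pos ha hb).ne'] at h
  rw [h]
  exact mul_pos (by linarith) (betaMean_pos ha hb)

lemma betaPoint_le_betaMean {s : ℝ} (hs : 0 ≤ s) (a b : ℝ) : betaPoint a b s ≤ betaMean a b :=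
  sub_le_self _ (mul_nonneg hs (Real.sqrt_nonneg _))

lemma betaMean_lt_one (ha : 0 < a) (hb : 0 < b) : betaMean a b < 1 := by
  linarith [one_sub_betaMean ha hb, betaMean_pos hb ha]

lemma abs_log_one_sub_add_le {x : ℝ} (hx : |x| ≤ 1 / 2) :
    |Real.log (1 - x) + x + x ^ 2 / 2| ≤ 2 * |x| ^ 3 := by
  have h := Real.abs_log_sub_add_sum_range_le (hx.trans_lt (by norm_num)) 2
  norm_num [Finset.sum_range_succ] at h
  calc |Real.log (1 - x) + x + x ^ 2 / 2|
      = |x + x ^ 2 / 2 + Real.log (1 - x)| := by ring_nf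
    _ ≤ |x| ^ 3 / (1 - |x|) := h
    _ ≤ 2 * |x| ^ 3 := by
        rw [div_le_iff₀ (by linarith)]
        nlinarith [pow_nonneg (abs_nonneg x) 3]

lemma abs_betaExponent_betaPoint_add_le (ha : 0 < a) (hb : 0 < b) {s δ : ℝ} (hs : 0 ≤ s)
    (hδ : δ ≤ 1 / 2) (hsa : s * betaCV a b ≤ δ) (hsb : s * betaCV b a ≤ δ) :
    |betaExponent a b (betaPoint a b s) + s ^ 2 / 2 * ((a + b) / (a + b + 1))| ≤
      2 * δ * (s ^ 2 * ((a + b) / (a + b + 1))) := by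
  rw [betaExponent, betaPoint_div_betaMean ha hb, one_sub_betaPoint_div_one_sub_betaMean ha hb]
  set y := s * betaCV a b with hy_def
  set y' := s * betaCV b a with hy'_def
  have hy : 0 ≤ y := mul_nonneg hs (betaCV_pos ha hb).le
  have hy' : 0 ≤ y' := mul_nonneg hs (betaCV_pos hb ha).le
  have hlin : a * y = b * y' := by
    rw [hy_def, hy'_def, mul_left_comm, mul_betaCV_comm ha hb, mul_left_comm]
  have hquad : a * y ^ 2 + b * y' ^ 2 = s ^ 2 * ((a + b) / (a + b + 1)) := by
    rw [hy_def, hy'_def, mul_pow, mul_pow, mul_left_comm, mul_left_comm b, mul_betaCV_sq ha hb,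
      mul_betaCV_sq hb ha, add_comm b a]
    ring
  have hlog : |Real.log (1 - y) + y + y ^ 2 / 2| ≤ 2 * y ^ 3 := by
    simpa only [abs_of_nonneg hy] using
      abs_log_one_sub_add_le (x := y) (by rw [abs_of_nonneg hy]; exact hsa.trans hδ)
  have hlog' : |Real.log (1 + y') - y' + y' ^ 2 / 2| ≤ 2 * y' ^ 3 := by
    simpa only [abs_neg, abs_of_nonneg hy', sub_neg_eq_add, neg_sq, ← sub_eq_add_neg] using
      abs_log_one_sub_add_le (x := -y') (by rw [abs_neg, abs_of_nonneg hy']; exact hsb.trans hδ)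
  calc |a * Real.log (1 - y) + b * Real.log (1 + y') + s ^ 2 / 2 * ((a + b) / (a + b + 1))|
      = |a * (Real.log (1 - y) + y + y ^ 2 / 2) + b * (Real.log (1 + y') - y' + y' ^ 2 / 2)| := by
        congr 1
        linear_combination -hlin - hquad / 2
    _ ≤ a * (2 * y ^ 3) + b * (2 * y' ^ 3) := by
        refine (abs_add_le _ _).trans (add_le_add ?_ ?_)
        · rw [abs_mul, abs_of_pos ha]
          exact mul_le_mul_of_nonneg_left hlog ha.le
        · rw [abs_mul, abs_of_pos hb]
          exact mul_le_mul_of_nonneg_left hlog' hb.le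
    _ = 2 * (y * (a * y ^ 2) + y' * (b * y' ^ 2)) := by ring
    _ ≤ 2 * (δ * (a * y ^ 2) + δ * (b * y' ^ 2)) := by gcongr
    _ = 2 * δ * (s ^ 2 * ((a + b) / (a + b + 1))) := by rw [← hquad]; ring

end BetaPoint

section BetaPointNat

variable {i k m : ℕ} {s : ℝ}

lemma mul_betaCV_le_div_sqrt (hm : 0 < m) (hi : m ≤ i + 1) (hs : 0 ≤ s) (k : ℕ) :
    s * betaCV (i + 1) (k + 1) ≤ s / √m := by
  rw [div_eq_mul_one_div]
  refine mul_le_mul_of_nonneg_left ?_ hs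
  refine (betaCV_le_one_div_sqrt i.cast_add_one_pos k.cast_add_one_pos).trans ?_
  have : (0 : ℝ) < m := Nat.cast_pos.2 hm
  gcongr
  exact_mod_cast hi

lemma betaPoint_mem_Ioo (hm : 0 < m) (hi : m ≤ i + 1) (hs : 0 ≤ s) (hsm : s / √m < 1) (k : ℕ) :
    betaPoint (i + 1) (k + 1) s ∈ Ioo (0 : ℝ) 1 := by
  have hi0 := i.cast_add_one_pos (α := ℝ)
  have hk0 := k.cast_add_one_pos (α := ℝ)
  exact ⟨betaPoint_pos hi0 hk0 ((mul_betaCV_le_div_sqrt hm hi hs k).trans_lt hsm),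
    (betaPoint_le_betaMean hs _ _).trans_lt (betaMean_lt_one hi0 hk0)⟩

lemma exp_betaExponent (i k : ℕ) {x : ℝ} (hx : x ∈ Ioo (0 : ℝ) 1) :
    Real.exp (betaExponent (i + 1) (k + 1) x) = (x / betaMean (i + 1) (k + 1)) ^ (i + 1) *
      ((1 - x) / (1 - betaMean (i + 1) (k + 1))) ^ (k + 1) := by
  have hi0 := i.cast_add_one_pos (α := ℝ)
  have hk0 := k.cast_add_one_pos (α := ℝ)
  have hx' : 0 < x / betaMean (i + 1) (k + 1) := div_pos hx.1 (betaMean_pos hi0 hk0)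
  have hx'' : 0 < (1 - x) / (1 - betaMean (i + 1) (k + 1)) :=
    div_pos (sub_pos.2 hx.2) (sub_pos.2 (betaMean_lt_one hi0 hk0))
  rw [betaExponent, Real.exp_add, ← Nat.cast_succ, ← Nat.cast_succ, Real.exp_nat_mul,
    Real.exp_nat_mul, Nat.cast_succ, Nat.cast_succ, Real.exp_log hx', Real.exp_log hx'']

lemma eval_binomialTail_le_exp_betaExponent {x : ℝ} (hx : 0 < x)
    (hx1 : x ≤ betaMean (i + 1) (k + 1)) :
    (binomialTail (i + k + 1) (i + 1)).eval x ≤ Real.exp (betaExponent (i + 1) (k + 1) x) := by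
  have hμ1 := betaMean_lt_one (i.cast_add_one_pos (α := ℝ)) (k.cast_add_one_pos (α := ℝ))
  rw [exp_betaExponent i k ⟨hx, hx1.trans_lt hμ1⟩]
  set μ := betaMean (i + 1) (k + 1)
  have hμ : 0 < μ := hx.trans_le hx1
  have hone : 1 ≤ (1 - x) / (1 - μ) := (one_le_div (by linarith)).2 (by linarith)
  have hz : 1 ≤ (1 - x) / (1 - μ) / (x / μ) :=
    one_le_mul_of_one_le_of_one_le hone ((one_le_inv₀ (by positivity)).2 ((div_le_one hμ).2 hx1))
  have hbase : 1 - x + x * ((1 - x) / (1 - μ) / (x / μ)) = (1 - x) / (1 - μ) := by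
    have hμ' : 1 - μ ≠ 0 := by linarith
    field_simp
    ring
  have h := pow_mul_eval_binomialTail_le (i + k + 1) (i + 1) ⟨hx.le, by linarith⟩ hz
  rw [hbase, div_pow, div_mul_eq_mul_div, div_le_iff₀ (by positivity)] at h
  refine le_of_mul_le_mul_left (h.trans ?_) (pow_pos (zero_lt_one.trans_le hone) (i + 1))
  calc ((1 - x) / (1 - μ)) ^ (i + k + 1) * (x / μ) ^ (i + 1)
      ≤ ((1 - x) / (1 - μ)) ^ (i + 1 + (k + 1)) * (x / μ) ^ (i + 1) := by
        gcongr ?_ * _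
        exact pow_le_pow_right₀ hone (by lia)
    _ = _ := by ring

lemma eval_binomialTail_betaPoint_le (hm : 0 < m) (hi : m ≤ i + 1) (hk : m ≤ k + 1) (hs : 0 ≤ s)
    (hsm : s / √m ≤ 1 / 8) :
    (binomialTail (i + k + 1) (i + 1)).eval (betaPoint (i + 1) (k + 1) s) ≤
      Real.exp (-(s ^ 2 / 8)) := by
  have hi0 := i.cast_add_one_pos (α := ℝ)
  have hk0 := k.cast_add_one_pos (α := ℝ)
  refine (eval_binomialTail_le_exp_betaExponent
    (betaPoint_mem_Ioo hm hi hs (by linarith) k).1 (betaPoint_le_betaMean hs _ _)).trans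
    (Real.exp_le_exp.2 ?_)
  have h := le_of_abs_le (abs_betaExponent_betaPoint_add_le hi0 hk0 hs (by norm_num)
    ((mul_betaCV_le_div_sqrt hm hi hs k).trans hsm) ((mul_betaCV_le_div_sqrt hm hk hs i).trans hsm))
  have hhalf : 1 / 2 ≤ ((i : ℝ) + 1 + (k + 1)) / (i + 1 + (k + 1) + 1) := by
    rw [div_le_div_iff₀ two_pos (by positivity)]
    linarith
  nlinarith [mul_le_mul_of_nonneg_left hhalf (sq_nonneg s)]

end BetaPointNat

section BetaDensity

lemma factorial_eq_stirlingSeq_mul {n : ℕ} (hn : n ≠ 0) :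
    (n.factorial : ℝ) = Stirling.stirlingSeq n * (√(2 * n) * (n / Real.exp 1) ^ n) := by
  rw [Stirling.stirlingSeq, div_mul_cancel₀]
  positivity

lemma choose_mul_pow_mul_pow_eq_stirlingSeq {a b : ℕ} (ha : a ≠ 0) (hb : b ≠ 0) :
    (a + b).choose a * ((a / (a + b)) ^ a * (b / (a + b)) ^ b) =
      Stirling.stirlingSeq (a + b) / (Stirling.stirlingSeq a * Stirling.stirlingSeq b) *
        √((a + b) / (2 * a * b)) := by
  have hpos {n : ℕ} (hn : n ≠ 0) : 0 < Stirling.stirlingSeq n :=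
    (Real.sqrt_pos.2 Real.pi_pos).trans_le (Stirling.sqrt_pi_le_stirlingSeq hn)
  have ha' := hpos ha
  have hb' := hpos hb
  have hsqrt : √((a + b) / (2 * a * b)) = √(2 * (a + b : ℕ)) / (√(2 * a) * √(2 * b)) := by
    rw [← Real.sqrt_mul (by positivity), ← Real.sqrt_div (by positivity)]
    congr 1
    push_cast
    field_simp
  rw [Nat.cast_add_choose, factorial_eq_stirlingSeq_mul ha, factorial_eq_stirlingSeq_mul hb,
    factorial_eq_stirlingSeq_mul (Nat.add_pos_left ha.bot_lt b).ne', hsqrt]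
  simp only [div_pow, pow_add]
  push_cast
  field_simp

lemma mul_one_sub_mul_betaPDF_eq_choose (i k : ℕ) (x : ℝ) :
    x * (1 - x) * betaPDF (i + 1) (k + 1) x = (i + 1) * (k + 1) / (i + 1 + (k + 1)) *
      (((i + 1 + (k + 1)).choose (i + 1) : ℝ) * (x ^ (i + 1) * (1 - x) ^ (k + 1))) := by
  have hchoose : (i + k + 1) * ((i + k).choose i : ℝ) =
      (i + 1) * (k + 1) / (i + 1 + (k + 1)) * (i + 1 + (k + 1)).choose (i + 1) := by
    rw [Nat.cast_add_choose, Nat.cast_add_choose,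
      show i + 1 + (k + 1) = i + k + 1 + 1 by ring, Nat.factorial_succ (i + k + 1),
      Nat.factorial_succ (i + k), Nat.factorial_succ i, Nat.factorial_succ k]
    push_cast
    field_simp
    ring
  rw [betaPDF_natCast_succ, eval_bernsteinPolynomial, Nat.add_sub_cancel_left]
  linear_combination x ^ (i + 1) * (1 - x) ^ (k + 1) * hchoose

lemma mul_one_sub_mul_betaPDF_eq_stirlingSeq (i k : ℕ) {x : ℝ} (hx : x ∈ Ioo (0 : ℝ) 1) :
    x * (1 - x) * betaPDF (i + 1) (k + 1) x = (i + 1) * (k + 1) / (i + 1 + (k + 1)) *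
      (Stirling.stirlingSeq (i + 1 + (k + 1)) /
        (Stirling.stirlingSeq (i + 1) * Stirling.stirlingSeq (k + 1)) *
        √((i + 1 + (k + 1)) / (2 * (i + 1) * (k + 1)))) *
      Real.exp (betaExponent (i + 1) (k + 1) x) := by
  have hμ : betaMean (i + 1) (k + 1) ≠ 0 :=
    (betaMean_pos i.cast_add_one_pos k.cast_add_one_pos).ne'
  have hμ' : 1 - betaMean (i + 1) (k + 1) ≠ 0 :=
    (sub_pos.2 (betaMean_lt_one i.cast_add_one_pos k.cast_add_one_pos)).ne'
  have hchoose : (i + 1 + (k + 1)).choose (i + 1) *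
      (betaMean (i + 1) (k + 1) ^ (i + 1) * (1 - betaMean (i + 1) (k + 1)) ^ (k + 1)) =
      Stirling.stirlingSeq (i + 1 + (k + 1)) /
        (Stirling.stirlingSeq (i + 1) * Stirling.stirlingSeq (k + 1)) *
        √((i + 1 + (k + 1)) / (2 * (i + 1) * (k + 1))) := by
    rw [one_sub_betaMean i.cast_add_one_pos k.cast_add_one_pos, betaMean, betaMean,
      add_comm (k + 1 : ℝ)]
    exact_mod_cast choose_mul_pow_mul_pow_eq_stirlingSeq i.succ_ne_zero k.succ_ne_zero
  rw [mul_one_sub_mul_betaPDF_eq_choose, ← hchoose, exp_betaExponent i k hx, div_pow, div_pow]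
  field_simp

lemma betaSD_eq {a b : ℝ} (hab : 0 < a + b) :
    betaSD a b = √(a * b / (a + b + 1)) / (a + b) := by
  rw [betaSD, mul_comm (_ ^ 2), ← div_div, Real.sqrt_div' _ (sq_nonneg _), Real.sqrt_sq hab.le]

lemma betaSD_mul_betaPDF_betaPoint (i k : ℕ) {s : ℝ}
    (hx : betaPoint (i + 1) (k + 1) s ∈ Ioo (0 : ℝ) 1) :
    betaSD (i + 1) (k + 1) * betaPDF (i + 1) (k + 1) (betaPoint (i + 1) (k + 1) s) =
      √((i + 1 + (k + 1)) / (i + 1 + (k + 1) + 1)) / √2 *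
      (Stirling.stirlingSeq (i + 1 + (k + 1)) /
        (Stirling.stirlingSeq (i + 1) * Stirling.stirlingSeq (k + 1))) *
      (Real.exp (betaExponent (i + 1) (k + 1) (betaPoint (i + 1) (k + 1) s)) /
        ((1 - s * betaCV (i + 1) (k + 1)) * (1 + s * betaCV (k + 1) (i + 1)))) := by
  have ha := i.cast_add_one_pos (α := ℝ)
  have hb := k.cast_add_one_pos (α := ℝ)
  have hpdf := mul_one_sub_mul_betaPDF_eq_stirlingSeq i k hx
  rw [← betaPoint_div_betaMean ha hb, ← one_sub_betaPoint_div_one_sub_betaMean ha hb,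
    one_sub_betaMean ha hb]
  set x := betaPoint (i + 1) (k + 1) s
  generalize Stirling.stirlingSeq (i + 1 + (k + 1)) /
        (Stirling.stirlingSeq (i + 1) * Stirling.stirlingSeq (k + 1)) = S at *
  generalize Real.exp (betaExponent (i + 1) (k + 1) x) = E at *
  generalize (i : ℝ) + 1 = a at *
  generalize (k : ℝ) + 1 = b at *
  have hSD : betaSD a b * √((a + b) / (2 * a * b)) = √((a + b) / (a + b + 1)) / √2 / (a + b) := by
    rw [betaSD_eq (by positivity), div_mul_eq_mul_div, ← Real.sqrt_mul (by positivity),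
      ← Real.sqrt_div (by positivity)]
    congr 2
    field_simp
  have hx0 := hx.1.ne'
  have hx1 := (sub_pos.2 hx.2).ne'
  rw [eq_div_iff (by positivity)] at hSD
  rw [eq_div_of_mul_eq (mul_ne_zero hx0 hx1) ((mul_comm _ _).trans hpdf), ← hSD, betaMean,
    betaMean, add_comm b a]
  field_simp

end BetaDensity

section GaussianTail

/-- The leading term `φ(t) / t` of the upper tail of the standard normal distribution. -/
noncomputable def gaussianTailApprox (t : ℝ) : ℝ := ProbabilityTheory.gaussianPDFReal 0 1 t / t

/-- The relative error in comparing a tail with `gaussianTailApprox t`, when the densities are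
compared on the window `[t, t + 1]` only. -/
noncomputable def millsFactor (t : ℝ) : ℝ := (1 - Real.exp (-t)) / (1 + 1 / t ^ 2)

lemma gaussianPDFReal_zero_one (t : ℝ) :
    ProbabilityTheory.gaussianPDFReal 0 1 t = Real.exp (-t ^ 2 / 2) / √(2 * Real.pi) := by
  rw [ProbabilityTheory.gaussianPDFReal]
  simp only [NNReal.coe_one, mul_one, sub_zero]
  rw [inv_mul_eq_div]

lemma gaussianTailApprox_pos {t : ℝ} (ht : 0 < t) : 0 < gaussianTailApprox t :=
  div_pos (ProbabilityTheory.gaussianPDFReal_pos 0 1 t one_ne_zero) ht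

lemma hasDerivAt_gaussianTailApprox {t : ℝ} (ht : t ≠ 0) :
    HasDerivAt gaussianTailApprox
      (-((1 + 1 / t ^ 2) * ProbabilityTheory.gaussianPDFReal 0 1 t)) t := by
  have hfun : gaussianTailApprox = fun s => Real.exp (-s ^ 2 / 2) / √(2 * Real.pi) / s := by
    funext s
    rw [gaussianTailApprox, gaussianPDFReal_zero_one]
  have hexponent : HasDerivAt (fun s : ℝ => -s ^ 2 / 2) (-t) t :=
    ((hasDerivAt_pow 2 t).neg.div_const 2).congr_deriv (by push_cast; ring)
  rw [hfun, gaussianPDFReal_zero_one]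
  refine ((hexponent.exp.div_const √(2 * Real.pi)).div (hasDerivAt_id t) ht).congr_deriv ?_
  simp only [id]
  field_simp
  ring

lemma gaussianTailApprox_add_one_le {t : ℝ} (ht : 0 < t) :
    gaussianTailApprox (t + 1) ≤ Real.exp (-t) * gaussianTailApprox t := by
  have hexp : Real.exp (-(t + 1) ^ 2 / 2) ≤ Real.exp (-t) * Real.exp (-t ^ 2 / 2) := by
    rw [← Real.exp_add]
    exact Real.exp_le_exp.2 (by linarith)
  rw [gaussianTailApprox, gaussianTailApprox, gaussianPDFReal_zero_one, gaussianPDFReal_zero_one,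
    ← mul_div_assoc, ← mul_div_assoc]
  gcongr
  linarith

lemma millsFactor_mul_gaussianTailApprox_le {G G' : ℝ → ℝ} {D t : ℝ} (ht : 0 < t) (hD : 0 ≤ D)
    (hG : ∀ s ∈ Icc t (t + 1), HasDerivAt G (G' s) s)
    (hG' : ∀ s ∈ Icc t (t + 1), G' s ≤ -(D * ProbabilityTheory.gaussianPDFReal 0 1 s))
    (hG0 : 0 ≤ G (t + 1)) :
    D * millsFactor t * gaussianTailApprox t ≤ G t := by
  set c := D / (1 + 1 / t ^ 2) with hc_def
  have : 0 ≤ c := by positivity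
  have hderiv (s) (hs : s ∈ Icc t (t + 1)) :
      HasDerivAt (fun s => G s - c * gaussianTailApprox s)
        (G' s - c * -((1 + 1 / s ^ 2) * ProbabilityTheory.gaussianPDFReal 0 1 s)) s :=
    (hG s hs).sub ((hasDerivAt_gaussianTailApprox (ht.trans_le hs.1).ne').const_mul c)
  have hanti : AntitoneOn (fun s => G s - c * gaussianTailApprox s) (Icc t (t + 1)) := by
    refine antitoneOn_of_hasDerivWithinAt_nonpos (convex_Icc _ _)
      (fun s hs => (hderiv s hs).continuousAt.continuousWithinAt)
      (fun s hs => (hderiv s (interior_subset hs)).hasDerivWithinAt) fun s hs => ?_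
    have hs' := interior_subset hs
    have hcD : c * (1 + 1 / s ^ 2) ≤ D := by
      rw [hc_def, div_mul_eq_mul_div, div_le_iff₀ (by positivity)]
      gcongr
      exact hs'.1
    linarith [hG' s hs', mul_le_mul_of_nonneg_right hcD
      (ProbabilityTheory.gaussianPDFReal_nonneg 0 1 s)]
  have hends := hanti (left_mem_Icc.2 (by linarith)) (right_mem_Icc.2 (by linarith)) (by linarith)
  calc D * millsFactor t * gaussianTailApprox t
      = c * gaussianTailApprox t - c * (Real.exp (-t) * gaussianTailApprox t) := by
        rw [millsFactor, hc_def]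
        ring
    _ ≤ c * gaussianTailApprox t - c * gaussianTailApprox (t + 1) := by
        gcongr
        exact gaussianTailApprox_add_one_le ht
    _ ≤ G t := by linarith

lemma tendsto_millsFactor : Tendsto millsFactor atTop (nhds 1) := by
  have hnum : Tendsto (fun t : ℝ => 1 - Real.exp (-t)) atTop (nhds 1) := by
    simpa using tendsto_const_nhds.sub Real.tendsto_exp_neg_atTop_nhds_zero
  have hden : Tendsto (fun t : ℝ => 1 + 1 / t ^ 2) atTop (nhds (1 + 0)) :=
    tendsto_const_nhds.add (tendsto_const_nhds.div_atTop (tendsto_pow_atTop two_ne_zero))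
  rw [add_zero] at hden
  have h := hnum.div hden one_ne_zero
  rwa [div_one] at h

end GaussianTail

section BetaTail

/-- A lower bound for the ratio of the densities of a standardized Beta distribution with both
parameters at least `m` and of the standard normal distribution, on `[-t, 0]`. The factors other
than the last one come from Stirling's formula. -/
noncomputable def densityFactor (m : ℕ) (t : ℝ) : ℝ :=
  √(m / (m + 1)) * (Real.pi / Stirling.stirlingSeq m ^ 2) *
    (Real.exp (-(2 * (t / √m) * t ^ 2)) / (1 + t / √m))

variable {i k m : ℕ}

lemma sqrt_pi_div_stirlingSeq_sq_le {a b : ℕ} (hm : m ≠ 0) (ha : m ≤ a) (hb : m ≤ b) :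
    √Real.pi / Stirling.stirlingSeq m ^ 2 ≤
      Stirling.stirlingSeq (a + b) / (Stirling.stirlingSeq a * Stirling.stirlingSeq b) := by
  have hpos {n : ℕ} (hn : m ≤ n) : 0 < Stirling.stirlingSeq n :=
    (Real.sqrt_pos.2 Real.pi_pos).trans_le (Stirling.sqrt_pi_le_stirlingSeq (by lia))
  have hle {n : ℕ} (hn : m ≤ n) : Stirling.stirlingSeq n ≤ Stirling.stirlingSeq m := by
    obtain ⟨m, rfl⟩ := Nat.exists_eq_succ_of_ne_zero hm
    obtain ⟨n, rfl⟩ := Nat.exists_eq_succ_of_ne_zero (by lia : n ≠ 0)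
    exact Stirling.stirlingSeq'_antitone (Nat.succ_le_succ_iff.1 hn)
  rw [sq]
  have := hpos ha
  have := hpos hb
  exact div_le_div₀ (hpos (by lia)).le (Stirling.sqrt_pi_le_stirlingSeq (by lia)) (by positivity)
    (mul_le_mul (hle ha) (hle hb) (hpos hb).le (hpos le_rfl).le)

lemma exp_mul_le_exp_betaExponent_betaPoint (hm : 0 < m) (hi : m ≤ i + 1) (hk : m ≤ k + 1)
    {s t : ℝ} (hs : s ∈ Icc 0 t) (ht : t / √m ≤ 1 / 2) :
    Real.exp (-(2 * (t / √m) * t ^ 2)) * Real.exp (-s ^ 2 / 2) ≤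
      Real.exp (betaExponent (i + 1) (k + 1) (betaPoint (i + 1) (k + 1) s)) := by
  have hst : s / √m ≤ t / √m := div_le_div_of_nonneg_right hs.2 (Real.sqrt_nonneg _)
  have ht0 : 0 ≤ t / √m := div_nonneg (hs.1.trans hs.2) (Real.sqrt_nonneg _)
  have h := neg_le_of_abs_le (abs_betaExponent_betaPoint_add_le (i.cast_add_one_pos (α := ℝ))
    k.cast_add_one_pos hs.1 ht
    ((mul_betaCV_le_div_sqrt hm hi hs.1 k).trans hst)
    ((mul_betaCV_le_div_sqrt hm hk hs.1 i).trans hst))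
  set q := ((i : ℝ) + 1 + (k + 1)) / (i + 1 + (k + 1) + 1)
  have hq : q ≤ 1 := div_le_one_of_le₀ (by linarith) (by positivity)
  have hmain : s ^ 2 / 2 * q ≤ s ^ 2 / 2 := mul_le_of_le_one_right (by positivity) hq
  have hrem : 2 * (t / √m) * (s ^ 2 * q) ≤ 2 * (t / √m) * t ^ 2 := by
    have hsq : s ^ 2 ≤ t ^ 2 := pow_le_pow_left₀ hs.1 hs.2 2
    gcongr
    exact (mul_le_of_le_one_right (sq_nonneg s) hq).trans hsq
  rw [← Real.exp_add]
  exact Real.exp_le_exp.2 (by linarith)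

lemma densityFactor_mul_gaussianPDFReal_le (hm : 0 < m) (hi : m ≤ i + 1) (hk : m ≤ k + 1)
    {s t : ℝ} (hs : s ∈ Icc 0 t) (ht : t / √m ≤ 1 / 2) :
    densityFactor m t * ProbabilityTheory.gaussianPDFReal 0 1 s ≤
      betaSD (i + 1) (k + 1) * betaPDF (i + 1) (k + 1) (betaPoint (i + 1) (k + 1) s) := by
  have hst : s / √m ≤ t / √m := div_le_div_of_nonneg_right hs.2 (Real.sqrt_nonneg _)
  have hCV := (mul_betaCV_le_div_sqrt hm hi hs.1 k).trans hst
  have hCV' := (mul_betaCV_le_div_sqrt hm hk hs.1 i).trans hst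
  have hCV0 := mul_nonneg hs.1 (betaCV_pos (i.cast_add_one_pos (α := ℝ)) k.cast_add_one_pos).le
  have hCV0' := mul_nonneg hs.1 (betaCV_pos (k.cast_add_one_pos (α := ℝ)) i.cast_add_one_pos).le
  rw [betaSD_mul_betaPDF_betaPoint i k (betaPoint_mem_Ioo hm hi hs.1 (by linarith) k)]
  have hN : √((m : ℝ) / (m + 1)) ≤ √((i + 1 + (k + 1)) / (i + 1 + (k + 1) + 1)) := by
    refine Real.sqrt_le_sqrt ((div_le_div_iff₀ (by positivity) (by positivity)).2 ?_)
    have hi' : (m : ℝ) ≤ i + 1 := by exact_mod_cast hi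
    linarith [k.cast_nonneg (α := ℝ)]
  have hS := sqrt_pi_div_stirlingSeq_sq_le hm.ne' hi hk
  have hE := exp_mul_le_exp_betaExponent_betaPoint hm hi hk hs ht
  set y := s * betaCV (i + 1) (k + 1)
  set y' := s * betaCV (k + 1) (i + 1)
  have hden : (1 - y) * (1 + y') ≤ 1 + t / √m := by nlinarith
  have hden0 : 0 < (1 - y) * (1 + y') := mul_pos (by linarith) (by linarith)
  calc densityFactor m t * ProbabilityTheory.gaussianPDFReal 0 1 s
      = √(m / (m + 1)) / √2 * (√Real.pi / Stirling.stirlingSeq m ^ 2) *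
          (Real.exp (-(2 * (t / √m) * t ^ 2)) * Real.exp (-s ^ 2 / 2) / (1 + t / √m)) := by
        rw [densityFactor, gaussianPDFReal_zero_one, Real.sqrt_mul zero_le_two]
        nth_rw 1 [← Real.mul_self_sqrt Real.pi_pos.le]
        field_simp
    _ ≤ _ := by
        have ht0 : 0 ≤ t := hs.1.trans hs.2
        gcongr
        exact mul_nonneg (by positivity) (le_trans (by positivity) hS)

lemma densityFactor_mul_millsFactor_mul_gaussianTailApprox_le (hm : 0 < m) (hi : m ≤ i + 1)
    (hk : m ≤ k + 1) {t T : ℝ} (ht : 0 < t) (htT : t ≤ T) (hT : (T + 1) / √m ≤ 1 / 2) :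
    densityFactor m (T + 1) * millsFactor t * gaussianTailApprox t ≤
      (binomialTail (i + k + 1) (i + 1)).eval (betaPoint (i + 1) (k + 1) t) := by
  have hD : 0 ≤ densityFactor m (T + 1) := by
    have hT0 : 0 ≤ T + 1 := by linarith
    unfold densityFactor
    positivity
  refine millsFactor_mul_gaussianTailApprox_le ht hD
    (G := fun s => (binomialTail (i + k + 1) (i + 1)).eval (betaPoint (i + 1) (k + 1) s))
    (G' := fun s => betaPDF (i + 1) (k + 1) (betaPoint (i + 1) (k + 1) s) *
      -(1 * betaSD (i + 1) (k + 1)))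
    (fun s _ => ?_) (fun s hs => ?_) ?_
  · exact (hasDerivAt_eval_binomialTail i k _).comp s
      (((hasDerivAt_id s).mul_const (betaSD (i + 1) (k + 1))).const_sub _)
  · have := densityFactor_mul_gaussianPDFReal_le hm hi hk
      ⟨ht.le.trans hs.1, hs.2.trans (add_le_add_left htT 1)⟩ hT
    linarith
  · have htm : (t + 1) / √m < 1 :=
      (div_le_div_of_nonneg_right (add_le_add_left htT 1) (Real.sqrt_nonneg _)).trans_lt
        (hT.trans_lt one_half_lt_one)
    exact eval_binomialTail_nonneg _ _
      (Ioo_subset_Icc_self (betaPoint_mem_Ioo hm hi (by linarith) htm k))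

/-- The number of standard deviations below the mean beyond which an order statistic of depth `m`
is unlikely to fall; chosen so that `exp (-(tailCutoff m) ^ 2 / 8) = m ^ (-2)` is summable. -/
noncomputable def tailCutoff (m : ℕ) : ℝ := √(16 * Real.log m)

lemma exp_neg_tailCutoff_sq_div_eight (hm : 0 < m) :
    Real.exp (-(tailCutoff m ^ 2 / 8)) = ((m : ℝ) ^ 2)⁻¹ := by
  have : 0 ≤ Real.log m := Real.log_natCast_nonneg m
  rw [tailCutoff, Real.sq_sqrt (by positivity), Real.exp_neg, mul_div_right_comm,
    show (16 : ℝ) / 8 = (2 : ℕ) by norm_num, Real.exp_nat_mul, Real.exp_log (by positivity)]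

lemma tendsto_tailCutoff : Tendsto tailCutoff atTop atTop :=
  Real.tendsto_sqrt_atTop.comp (((Real.tendsto_log_atTop.comp
    tendsto_natCast_atTop_atTop)).const_mul_atTop (by norm_num))

lemma tendsto_tailCutoff_add_one_pow_three_div_sqrt :
    Tendsto (fun m : ℕ => (tailCutoff m + 1) ^ 3 / √m) atTop (nhds 0) := by
  have hlog : Tendsto (fun m : ℕ => 5 ^ 3 * (Real.log m ^ 3 / √m)) atTop (nhds 0) := by
    have h := (isLittleO_log_rpow_rpow_atTop (s := 1 / 2) 3 one_half_pos).tendsto_div_nhds_zero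
    have h' := (h.const_mul ((5 : ℝ) ^ 3)).comp tendsto_natCast_atTop_atTop
    rw [mul_zero] at h'
    refine h'.congr fun m => ?_
    rw [Function.comp_apply, Real.sqrt_eq_rpow]
    norm_cast
  refine squeeze_zero' (Eventually.of_forall fun m => ?_) ?_ hlog
  · have hT : 0 ≤ tailCutoff m := Real.sqrt_nonneg _
    positivity
  · have hlarge : ∀ᶠ m : ℕ in atTop, 1 ≤ Real.log m :=
      (Real.tendsto_log_atTop.comp tendsto_natCast_atTop_atTop).eventually_ge_atTop 1
    filter_upwards [hlarge] with m hm
    have hT0 : 0 ≤ tailCutoff m := Real.sqrt_nonneg _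
    have hT : tailCutoff m ≤ 4 * Real.log m := Real.sqrt_le_iff.2 ⟨by linarith, by nlinarith⟩
    rw [← mul_div_assoc, ← mul_pow]
    gcongr
    linarith

lemma tendsto_tailCutoff_add_one_div_sqrt :
    Tendsto (fun m : ℕ => (tailCutoff m + 1) / √m) atTop (nhds 0) := by
  refine squeeze_zero (fun m => ?_) (fun m => ?_) tendsto_tailCutoff_add_one_pow_three_div_sqrt
  all_goals have hT : 0 ≤ tailCutoff m := Real.sqrt_nonneg _
  · positivity
  · gcongr
    exact le_self_pow₀ (by linarith) three_ne_zero

lemma tendsto_densityFactor_tailCutoff :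
    Tendsto (fun m => densityFactor m (tailCutoff m + 1)) atTop (nhds 1) := by
  have hsqrt : Tendsto (fun m : ℕ => √((m : ℝ) / (m + 1))) atTop (nhds √1) :=
    (tendsto_natCast_div_add_atTop (1 : ℝ)).sqrt
  have hstirling : Tendsto (fun m => Real.pi / Stirling.stirlingSeq m ^ 2) atTop
      (nhds (Real.pi / √Real.pi ^ 2)) :=
    tendsto_const_nhds.div (Stirling.tendsto_stirlingSeq_sqrt_pi.pow 2) (by positivity)
  have hexp : Tendsto (fun m : ℕ =>
      Real.exp (-(2 * ((tailCutoff m + 1) / √m) * (tailCutoff m + 1) ^ 2))) atTop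
      (nhds (Real.exp (-(2 * 0)))) := by
    refine ((tendsto_tailCutoff_add_one_pow_three_div_sqrt.const_mul 2).neg.congr ?_).rexp
    intro m
    ring
  have hden := tendsto_tailCutoff_add_one_div_sqrt.const_add 1
  have h := (hsqrt.mul hstirling).mul (hexp.div hden (by norm_num))
  rwa [Real.sq_sqrt Real.pi_pos.le, div_self Real.pi_ne_zero, Real.sqrt_one, mul_zero, neg_zero,
    Real.exp_zero, add_zero, div_one, one_mul, one_mul] at h

lemma exists_forall_lt_eval_binomialTail_betaPoint {ε : ℝ} (hε : 0 < ε) :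
    ∃ t₀ ≥ 1, ∀ᶠ m in atTop, ∀ i k, m ≤ i + 1 → m ≤ k + 1 → ∀ t ∈ Icc t₀ (tailCutoff m),
      (1 - ε) * gaussianTailApprox t <
        (binomialTail (i + k + 1) (i + 1)).eval (betaPoint (i + 1) (k + 1) t) := by
  have hfactor : Tendsto (fun p : ℝ × ℕ =>
      densityFactor p.2 (tailCutoff p.2 + 1) * millsFactor p.1) (atTop ×ˢ atTop) (nhds (1 * 1)) :=
    (tendsto_densityFactor_tailCutoff.comp tendsto_snd).mul
      (tendsto_millsFactor.comp tendsto_fst)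
  have hlt : 1 - ε < 1 * 1 := by linarith
  obtain ⟨pt, hpt, pm, hpm, hp⟩ := eventually_prod_iff.1 (hfactor.eventually_const_lt hlt)
  obtain ⟨t₀, ht₀⟩ := eventually_atTop.1 hpt
  refine ⟨max t₀ 1, le_max_right _ _, ?_⟩
  filter_upwards [hpm, eventually_gt_atTop 0,
    tendsto_tailCutoff_add_one_div_sqrt.eventually_le_const one_half_pos]
    with m hm hm0 hsmall i k hi hk t ht
  have ht1 : 1 ≤ t := (le_max_right _ _).trans ht.1
  have ht0 : 0 < t := by linarith
  calc (1 - ε) * gaussianTailApprox t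
      < densityFactor m (tailCutoff m + 1) * millsFactor t * gaussianTailApprox t :=
        mul_lt_mul_of_pos_right (hp (ht₀ t ((le_max_left _ _).trans ht.1)) hm)
          (gaussianTailApprox_pos ht0)
    _ ≤ _ := densityFactor_mul_millsFactor_mul_gaussianTailApprox_le hm0 hi hk ht0 ht.2 hsmall

end BetaTail

section Depth

variable {n : ℕ}

/-- The rank of the `i`-th order statistic, counted from 1 from the nearer end of the sample. -/
def depth (i : Fin n) : ℕ := min (i + 1) (i.rev + 1)

/-- The number `τ` of standard deviations by which the `i`-th order statistic falls short of the
mean of its null Beta distribution. -/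
noncomputable def shortfall (u : Fin n → ℝ) (i : Fin n) : ℝ :=
  (betaMean ((i : ℕ) + 1 : ℝ) ((n : ℝ) - (i : ℕ)) - orderStat u i) /
    betaSD ((i : ℕ) + 1 : ℝ) ((n : ℝ) - (i : ℕ))

lemma depth_pos (i : Fin n) : 0 < depth i :=
  lt_min i.val.succ_pos i.rev.val.succ_pos

lemma betaPoint_shortfall (u : Fin n → ℝ) (i : Fin n) :
    betaPoint (i + 1) (i.rev + 1) (shortfall u i) = orderStat u i := by
  rw [betaPoint, shortfall, cast_sub_val_eq, div_mul_cancel₀, sub_sub_cancel]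
  exact (betaSD_pos i.val.cast_add_one_pos i.rev.val.cast_add_one_pos).ne'

lemma betaPoint_lt_betaPoint_iff {a b : ℝ} (ha : 0 < a) (hb : 0 < b) {s t : ℝ} :
    betaPoint a b s < betaPoint a b t ↔ t < s := by
  rw [betaPoint, betaPoint, sub_lt_sub_iff_left, mul_lt_mul_iff_left₀ (betaSD_pos ha hb)]

lemma mul_gaussianTailApprox_shortfall_lt_pOrd {c c' t₀ T : ℝ} (hcc' : c ≤ c') (ht₀ : 0 < t₀)
    {i : Fin n} (hmem : betaPoint (i + 1) (i.rev + 1) t₀ ∈ Icc (0 : ℝ) 1) (ht₀T : t₀ ≤ T)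
    (htail : ∀ t ∈ Icc t₀ T, c' * gaussianTailApprox t <
      (binomialTail n (i + 1)).eval (betaPoint (i + 1) (i.rev + 1) t))
    {u : Fin n → ℝ} (hu : ∀ j, u j ∈ Icc (0 : ℝ) 1)
    (hsmall : pOrd u i ≤ c' * gaussianTailApprox t₀)
    (hcutoff : betaPoint (i + 1) (i.rev + 1) T < orderStat u i) :
    c * gaussianTailApprox (shortfall u i) < pOrd u i := by
  have hlt {s t : ℝ} := betaPoint_lt_betaPoint_iff (i.val.cast_add_one_pos (α := ℝ))
    i.rev.val.cast_add_one_pos (s := s) (t := t)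
  obtain ⟨m, rfl⟩ : ∃ m, n = m + 1 := Nat.exists_eq_add_one.2 i.pos
  rw [pOrd_eq_eval_binomialTail fun j => (hu j).1] at hsmall ⊢
  have hupper : shortfall u i < T := by
    rwa [← betaPoint_shortfall, hlt] at hcutoff
  have hlower : t₀ < shortfall u i := by
    rw [← hlt, betaPoint_shortfall]
    refine ((strictMonoOn_eval_binomialTail_succ (Nat.lt_succ_iff.1 i.2)).lt_iff_lt
      (hu _) hmem).1 ?_
    exact hsmall.trans_lt (htail t₀ (left_mem_Icc.2 ht₀T))
  calc c * gaussianTailApprox (shortfall u i) ≤ c' * gaussianTailApprox (shortfall u i) :=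
        mul_le_mul_of_nonneg_right hcc' (gaussianTailApprox_pos (ht₀.trans hlower)).le
    _ < (binomialTail (m + 1) (i + 1)).eval (betaPoint (i + 1) (i.rev + 1) (shortfall u i)) :=
        htail _ ⟨hlower.le, hupper.le⟩
    _ = (binomialTail (m + 1) (i + 1)).eval (orderStat u i) := by rw [betaPoint_shortfall]

lemma exists_forall_mul_gaussianTailApprox_shortfall_lt_pOrd {ε : ℝ} (hε : 0 < ε) :
    ∃ κ > 0, ∀ᶠ m in atTop, ∀ (n : ℕ) (i : Fin n), depth i = m →
      ∀ u : Fin n → ℝ, (∀ j, u j ∈ Icc (0 : ℝ) 1) → pOrd u i ≤ κ →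
        betaPoint (i + 1) (i.rev + 1) (tailCutoff (depth i)) < orderStat u i →
          (1 - ε) * gaussianTailApprox (shortfall u i) < pOrd u i := by
  have hε' : 0 < min ε (1 / 2) := lt_min hε one_half_pos
  obtain ⟨t₀, ht₀, htail⟩ := exists_forall_lt_eval_binomialTail_betaPoint hε'
  have ht₀' : 0 < t₀ := one_pos.trans_le ht₀
  refine ⟨(1 - min ε (1 / 2)) * gaussianTailApprox t₀, mul_pos ?_ (gaussianTailApprox_pos ht₀'),
    ?_⟩
  · linarith [min_le_right ε (1 / 2)]
  filter_upwards [htail, tendsto_tailCutoff.eventually_ge_atTop t₀,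
    tendsto_tailCutoff_add_one_div_sqrt.eventually_lt_const one_pos]
  rintro _ hm ht₀T hsqrt n i rfl u hu hsmall hcutoff
  have hsm : t₀ / √(depth i) < 1 :=
    (div_le_div_of_nonneg_right (by linarith) (Real.sqrt_nonneg _)).trans_lt hsqrt
  refine mul_gaussianTailApprox_shortfall_lt_pOrd (sub_le_sub_left (min_le_left _ _) 1) ht₀'
    (Ioo_subset_Icc_self (betaPoint_mem_Ioo (depth_pos i) (min_le_left _ _) ht₀'.le hsm _))
    ht₀T (fun t ht => ?_) hu hsmall hcutoff
  have h := hm i i.rev (min_le_left _ _) (min_le_right _ _) t ht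
  rwa [val_add_val_rev_add_one] at h

lemma sum_depth_le {w : ℕ → ℝ} (hw : ∀ j, 0 ≤ w j) (n : ℕ) :
    ∑ i : Fin n, w (depth i) ≤ 2 * ∑ j ∈ Finset.range n, w (j + 1) := by
  have hmin (i : Fin n) : w (depth i) ≤ w (i + 1) + w (i.rev + 1) := by
    rcases min_choice ((i : ℕ) + 1) (i.rev + 1) with h | h <;> rw [depth, h]
    · exact le_add_of_nonneg_right (hw _)
    · exact le_add_of_nonneg_left (hw _)
  have hrev : ∑ i : Fin n, w (i.rev + 1) = ∑ i : Fin n, w (i + 1) :=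
    Equiv.sum_comp Fin.revPerm fun i : Fin n => w (i + 1)
  calc ∑ i : Fin n, w (depth i) ≤ ∑ i : Fin n, (w (i + 1) + w (i.rev + 1)) :=
        Finset.sum_le_sum fun i _ => hmin i
    _ = 2 * ∑ j ∈ Finset.range n, w (j + 1) := by
        rw [Finset.sum_add_distrib, hrev, ← two_mul,
          Fin.sum_univ_eq_sum_range fun j => w (j + 1)]

lemma nullMeasure_real_exists_le {p : Fin n → (Fin n → ℝ) → Prop} {w : ℕ → ℝ}
    (hw : ∀ j, 0 ≤ w j) (hp : ∀ i, (nullMeasure n).real {u | p i u} ≤ w (depth i)) :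
    (nullMeasure n).real {u | ∃ i, p i u} ≤ 2 * ∑ j ∈ Finset.range n, w (j + 1) := by
  rw [ofPred_exists]
  exact (measureReal_iUnion_fintype_le _).trans
    ((Finset.sum_le_sum fun i _ => hp i).trans (sum_depth_le hw n))

lemma nullMeasure_real_exists_depth_lt_le (n K : ℕ) {d : ℝ} (hd : d ∈ Icc (0 : ℝ) 1) :
    (nullMeasure n).real {u | ∃ i, depth i < K ∧ pOrd u i ≤ d} ≤ 2 * (K * d) := by
  refine (nullMeasure_real_exists_le (w := fun j => if j < K then d else 0) (fun j => ?_)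
    fun i => ?_).trans (mul_le_mul_of_nonneg_left ?_ zero_le_two)
  · split_ifs
    exacts [hd.1, le_rfl]
  · by_cases h : depth i < K
    · simpa only [h, true_and, if_true] using nullMeasure_real_pOrd_le i hd
    · simp [h]
  · rw [← Finset.sum_filter, Finset.sum_const, nsmul_eq_mul]
    refine mul_le_mul_of_nonneg_right (Nat.cast_le.2 ?_) hd.1
    refine (Finset.card_le_card fun j hj => ?_).trans (Finset.card_range K).le
    exact Finset.mem_range.2 ((Nat.lt_succ_self j).trans (Finset.mem_filter.1 hj).2)

lemma nullMeasure_real_orderStat_le_betaPoint_tailCutoff_le (i : Fin n)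
    (hsmall : tailCutoff (depth i) / √(depth i) ≤ 1 / 8) :
    (nullMeasure n).real
        {u | orderStat u i ≤ betaPoint (i + 1) (i.rev + 1) (tailCutoff (depth i))} ≤
      ((depth i : ℝ) ^ 2)⁻¹ := by
  have hT : 0 ≤ tailCutoff (depth i) := Real.sqrt_nonneg _
  have hmem := betaPoint_mem_Ioo (depth_pos i) (min_le_left _ _) hT
    (hsmall.trans_lt (by norm_num)) i.rev
  have htail := eval_binomialTail_betaPoint_le (depth_pos i) (min_le_left _ _) (min_le_right _ _)
    hT hsmall
  rwa [exp_neg_tailCutoff_sq_div_eight (depth_pos i), val_add_val_rev_add_one,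
    ← nullMeasure_real_orderStat_le i (Ioo_subset_Icc_self hmem)] at htail

lemma eventually_nullMeasure_real_exists_orderStat_le_betaPoint_le :
    ∀ᶠ K : ℕ in atTop, ∀ n, (nullMeasure n).real {u | ∃ i, K ≤ depth i ∧
      orderStat u i ≤ betaPoint (i + 1) (i.rev + 1) (tailCutoff (depth i))} ≤ 2 * (2 / K) := by
  have hev : ∀ᶠ m : ℕ in atTop, (tailCutoff m + 1) / √m ≤ 1 / 8 :=
    tendsto_tailCutoff_add_one_div_sqrt.eventually_le_const (by norm_num)
  filter_upwards [eventually_forall_ge_atTop.2 hev, eventually_gt_atTop 0] with K hK hK0 n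
  refine (nullMeasure_real_exists_le (w := fun j => if K ≤ j then ((j : ℝ) ^ 2)⁻¹ else 0)
    (fun j => ?_) fun i => ?_).trans (mul_le_mul_of_nonneg_left ?_ zero_le_two)
  · split_ifs <;> positivity
  · by_cases h : K ≤ depth i
    · simp only [h, true_and, if_true]
      refine nullMeasure_real_orderStat_le_betaPoint_tailCutoff_le i (le_trans ?_ (hK _ h))
      gcongr
      exact le_add_of_nonneg_right zero_le_one
    · simp [h]
  · rw [Finset.range_eq_Ico,
      Finset.sum_Ico_add' (fun j : ℕ => if K ≤ j then ((j : ℝ) ^ 2)⁻¹ else 0) 0 n 1,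
      ← Finset.sum_filter]
    calc ∑ j ∈ Finset.Ico (0 + 1) (n + 1) with K ≤ j, ((j : ℝ) ^ 2)⁻¹
        ≤ ∑ j ∈ Finset.Ioo (K - 1) (n + 1), ((j : ℝ) ^ 2)⁻¹ := by
          refine Finset.sum_le_sum_of_subset_of_nonneg (fun j hj => ?_) fun j _ _ => by positivity
          simp only [Finset.mem_filter, Finset.mem_Ico, Finset.mem_Ioo] at hj ⊢
          lia
      _ ≤ 2 / ((K - 1 : ℕ) + 1) := sum_Ioo_inv_sq_le _ _
      _ = 2 / K := by rw [← Nat.cast_add_one, Nat.sub_add_cancel hK0]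

end Depth

lemma tendsto_measureReal_one_of_compl_le {Ω : ℕ → Type*} [∀ n, MeasurableSpace (Ω n)]
    {P : ∀ n, Measure (Ω n)} [∀ n, IsProbabilityMeasure (P n)] {s : ∀ n, Set (Ω n)}
    (h : ∀ q > 0, ∀ᶠ n in atTop, (P n).real (s n)ᶜ ≤ q) :
    Tendsto (fun n => (P n).real (s n)) atTop (nhds 1) := by
  refine tendsto_order.2 ⟨fun a ha => ?_, fun a ha =>
    Eventually.of_forall fun n => measureReal_le_one.trans_lt ha⟩
  filter_upwards [h ((1 - a) / 2) (by linarith)] with n hn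
  have hcover : 1 ≤ (P n).real (s n) + (P n).real (s n)ᶜ := by
    rw [← probReal_univ (μ := P n), ← union_compl_self (s n)]
    exact measureReal_union_le _ _
  linarith

lemma nullMeasure_real_compl_le {ε d : ℝ} {K n : ℕ} (hd : d ∈ Icc (0 : ℝ) 1)
    (hdeep : ∀ i : Fin n, K ≤ depth i → ∀ u : Fin n → ℝ, (∀ j, u j ∈ Icc (0 : ℝ) 1) →
      pOrd u i ≤ d → betaPoint (i + 1) (i.rev + 1) (tailCutoff (depth i)) < orderStat u i →
        (1 - ε) * gaussianTailApprox (shortfall u i) < pOrd u i) :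
    (nullMeasure n).real {u | ∀ i, pOrd u i = MnPlus u →
      (1 - ε) * gaussianTailApprox (shortfall u i) < MnPlus u}ᶜ ≤
      (nullMeasure n).real {u | d < MnPlus u} + (2 * (K * d) + (nullMeasure n).real {u | ∃ i,
        K ≤ depth i ∧ orderStat u i ≤ betaPoint (i + 1) (i.rev + 1) (tailCutoff (depth i))}) := by
  set large := {u : Fin n → ℝ | d < MnPlus u}
  set shallow := {u : Fin n → ℝ | ∃ i, depth i < K ∧ pOrd u i ≤ d}
  set deep := {u : Fin n → ℝ | ∃ i, K ≤ depth i ∧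
    orderStat u i ≤ betaPoint (i + 1) (i.rev + 1) (tailCutoff (depth i))}
  calc (nullMeasure n).real _ ≤ (nullMeasure n).real (large ∪ (shallow ∪ deep)) := by
        refine measureReal_mono_of_ae_imp ?_
        filter_upwards [ae_nullMeasure_mem_Icc n] with u hu
        contrapose
        simp only [large, shallow, deep, mem_union, mem_ofPred_eq, not_or, not_exists, not_and,
          not_lt, not_le, mem_compl_iff, not_not]
        rintro ⟨hM, hshallow, hcutoff⟩ i hi
        have hp : pOrd u i ≤ d := hi.trans_le hM
        have hKi : K ≤ depth i := not_lt.1 fun h => (hshallow i h).not_ge hp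
        exact (hdeep i hKi u hu hp (hcutoff i hKi)).trans_eq hi
    _ ≤ (nullMeasure n).real large +
          ((nullMeasure n).real shallow + (nullMeasure n).real deep) :=
        (measureReal_union_le _ _).trans (add_le_add_right (measureReal_union_le _ _) _)
    _ ≤ (nullMeasure n).real large + (2 * (K * d) + (nullMeasure n).real deep) := by
        gcongr
        exact nullMeasure_real_exists_depth_lt_le n K hd

lemma eventually_nullMeasure_real_compl_le {ε q : ℝ} (hε : 0 < ε) (hq : 0 < q) :
    ∀ᶠ n in atTop, (nullMeasure n).real {u | ∀ i, pOrd u i = MnPlus u →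
      (1 - ε) * gaussianTailApprox (shortfall u i) < MnPlus u}ᶜ ≤ q := by
  obtain ⟨κ, hκ, hdeep⟩ := exists_forall_mul_gaussianTailApprox_shortfall_lt_pOrd hε
  have hlarge : ∀ᶠ K : ℕ in atTop, 2 * (2 / (K : ℝ)) < q / 3 := by
    have h := (tendsto_const_div_atTop_nhds_zero_nat (2 : ℝ)).const_mul 2
    exact h.eventually_lt_const (by simpa using hq)
  obtain ⟨K, hK, hKcutoff, hKq, hK0⟩ := ((eventually_forall_ge_atTop.2 hdeep).and
    (eventually_nullMeasure_real_exists_orderStat_le_betaPoint_le.and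
      (hlarge.and (eventually_gt_atTop 0)))).exists
  have : (0 : ℝ) < K := Nat.cast_pos.2 hK0
  set d := min 1 (min κ (q / (6 * K)))
  have hd0 : 0 < d := by positivity
  have hdκ : d ≤ κ := (min_le_right _ _).trans (min_le_left _ _)
  have hdq : 2 * (K * d) ≤ q / 3 := by
    have h : d ≤ q / (6 * K) := (min_le_right _ _).trans (min_le_right _ _)
    rw [le_div_iff₀ (by positivity)] at h
    linarith
  filter_upwards [(tendsto_nullMeasure_real_lt_MnPlus hd0).eventually_le_const
    (by positivity : 0 < q / 3)] with n hn
  have hbound := nullMeasure_real_compl_le (n := n) ⟨hd0.le, min_le_left _ _⟩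
    fun i hi u hu hp => hK _ hi n i rfl u hu (hp.trans hdκ)
  linarith [hKcutoff n]

lemma mul_gaussianTailApprox_eq (c t : ℝ) :
    c * gaussianTailApprox t = c / (√(2 * Real.pi) * t) * Real.exp (-t ^ 2 / 2) := by
  rw [gaussianTailApprox, gaussianPDFReal_zero_one]
  ring

theorem berk_jones_MnPlus_lower_bound_tau (ε : ℝ) (hε : 0 < ε) :
    Filter.Tendsto (fun n : ℕ =>
        ((nullMeasure n) {u | ∀ i : Fin n, pOrd u i = MnPlus u →
          (1 - ε) / (Real.sqrt (2 * Real.pi) *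
              ((betaMean ((i : ℕ) + 1 : ℝ) ((n : ℝ) - (i : ℕ)) - orderStat u i) /
                betaSD ((i : ℕ) + 1 : ℝ) ((n : ℝ) - (i : ℕ)))) *
            Real.exp (-((betaMean ((i : ℕ) + 1 : ℝ) ((n : ℝ) - (i : ℕ)) - orderStat u i) /
                betaSD ((i : ℕ) + 1 : ℝ) ((n : ℝ) - (i : ℕ)))^2 / 2) <
            MnPlus u}).toReal)
      Filter.atTop (nhds 1) := by
  have h := tendsto_measureReal_one_of_compl_le fun q hq =>
    eventually_nullMeasure_real_compl_le hε hq
  simp only [mul_gaussianTailApprox_eq] at h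
  exact h
end
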